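/- arXiv:2207.07485 — 2 statements merged into one kernel-verified Lean document; each statement's English description precedes it below -/
import Mathlib

section
/- Let 1 ≤ p < ∞, 1 ≤ q < ∞, r ∈ ℕ, and let 0 ≤ k₁ < α < k₂ ≤ r be integers k₁, k₂ with α real. Then the norms ‖f‖_{X^p} + (∫₀^∞ (t^{−α/r} K(t, f, X^p, W^r_p))^q dt/t)^{1/q} and ‖f‖_{W^{k₁}_p} + (∫₀^∞ (t^{−(α−k₁)/(k₂−k₁)} K(t, f, W^{k₁}_p, W^{k₂}_p))^q dt/t)^{1/q} are equivalent: there exist constants c, C > 0 (independent of f) such that each is bounded by a constant multiple of the other, and one is finite if and only if the other is; that is, (X^p, W^r_p)^K_{α/r,q} = (W^{k₁}_p, W^{k₂}_p)^K_{(α−k₁)/(k₂−k₁),q} with equivalent norms. -/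
/-!
Only one property of the Mellin translations matters for most of the proof: the `U_j` are commuting
strongly continuous groups of contractions. After the substitution `x = exp y` they become the
translations of `L^p(ℝⁿ)` (`isContractionGroup`). The operators needed all lie in the bicommutant of
the `U_j(t)`, a commutative ring acting on the space (`IsContractionGroup.isCalculus`).

Let `A_j(s) = ∫₀¹ U_j(sσ) dσ`. Then `U_j(s) - 1 = s A_j(s) Θ_j`. The mollifier
`P = ∏_j (1 - (1 - A_j(s)^r)^r)` is divisible by every product of at most `r` of the `A_j(s)`, with a
bounded cofactor, and `h - P h` is controlled by the `(1 - A_j(s))^r h`. Each derivative of `P h` can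
therefore be replaced by a difference at the cost of a factor `s⁻¹`, and `P h` is close to `h` when
`h` is smooth. Two inequalities follow. The first bounds an intermediate derivative by the extreme
ones: `‖Θ^L f‖ ≲ s^{-|L|} ‖f‖ + s^{r-|L|} ‖f‖_{W^r}` (`IsCalculus.norm_val_le`). The second is a
Jackson inequality, `K(s^r, g; X, W^r) ≲ s^k ‖g‖_{W^k}` (`IsCalculus.Kfun_le_WNorm`).

Write `K` for the functional of `(X, W^r)` and `K_W` for that of `(W^{k₁}, W^{k₂})`. The Jackson
inequality, applied to both parts of a decomposition `f = f₀ + f₁` in `W^{k₁} + W^{k₂}`, gives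
`K(s^r, f) ≲ s^{k₁} K_W(s^{k₂-k₁}, f)` (`IsCalculus.Kfun_le_KfunW`), hence one half of the
equivalence.

For the other half choose nearly optimal `b(x) ∈ W^r` for `K(e^{xr}, f)`. The intermediate derivative
inequality bounds the derivatives of order `k` of `b(x-1) - b(x)` by `e^{-xk} K(e^{xr}, f)`. Summing
towards `-∞` estimates `f - b(x)` in `W^{k₁}`, and summing towards `+∞` estimates `b(x)` in `W^{k₂}`,
so that `K_W` is bounded by sums of shifts of `K` (`IsCalculus.exists_KfunW_le`). With `t = e^{mx}`
both interpolation norms become `L^q` norms over the line. Since `k₁ < α < k₂`, the shifts carry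
geometrically decreasing weights, and Minkowski's inequality bounds the sums
(`IsCalculus.lq_wKW_le`).
-/


open MeasureTheory Filter Topology ENNReal

noncomputable section

/-- `g` is the value at `f` of the infinitesimal generator of the
strongly continuous one-parameter group `T`. -/
def GenDeriv {E : Type*} [NormedAddCommGroup E] [NormedSpace ℂ E]
    (T : ℝ → E →L[ℂ] E) (f g : E) : Prop :=
  Filter.Tendsto (fun t : ℝ => t⁻¹ • (T t f - f)) (𝓝[≠] (0 : ℝ)) (𝓝 g)

/-- The measure `dμ = dx₁⋯dxₙ/(x₁⋯xₙ)` on `(0,∞)ⁿ ⊂ ℝⁿ`. -/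
def mellinMeasure (n : ℕ) : Measure (Fin n → ℝ) :=
  ((volume : Measure (Fin n → ℝ)).restrict {x | ∀ i, 0 < x i}).withDensity
    fun x => ∏ i, ENNReal.ofReal (x i)⁻¹

/-- Dilation of the `j`-th coordinate by `e^t`. -/
def mellinDilate {n : ℕ} (j : Fin n) (t : ℝ) (x : Fin n → ℝ) : Fin n → ℝ :=
  Function.update x j (Real.exp t * x j)

/-- `U` is the family of Mellin translation groups `(U_j(t)f)(x) = f(x₁,…,e^t x_j,…,xₙ)`. -/
def IsMellinTranslation {n : ℕ} (p : ℝ≥0∞) [Fact (1 ≤ p)]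
    (U : Fin n → ℝ → (Lp ℂ p (mellinMeasure n) →L[ℂ] Lp ℂ p (mellinMeasure n))) : Prop :=
  ∀ (j : Fin n) (t : ℝ) (f : Lp ℂ p (mellinMeasure n)),
    (U j t f : (Fin n → ℝ) → ℂ) =ᵐ[mellinMeasure n] fun x => f (mellinDilate j t x)

/-- Iterated generator: `IsIterDeriv U [j₁,…,j_k] f g` means `g = Θ_{j₁}⋯Θ_{j_k} f`. -/
def IsIterDeriv {E : Type*} [NormedAddCommGroup E] [NormedSpace ℂ E] {n : ℕ}
    (U : Fin n → ℝ → E →L[ℂ] E) : List (Fin n) → E → E → Prop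
  | [], f, g => g = f
  | j :: L, f, g => ∃ h, IsIterDeriv U L f h ∧ GenDeriv (U j) h g

/-- Modulus of continuity `ω^m(s,f) = sup_{0≤τ≤s} ‖(T(τ)-I)^m f‖`. -/
def omegaMod {E : Type*} [NormedAddCommGroup E] [NormedSpace ℂ E]
    (T : ℝ → E →L[ℂ] E) (m : ℕ) (s : ℝ) (f : E) : ℝ :=
  sSup ((fun τ => ‖((T τ - 1) ^ m) f‖) '' Set.Icc 0 s)

/-- Mixed modulus of continuity
`Ω^r(s,f) = Σ_{j₁,…,j_r} sup_{0≤τᵢ≤s} ‖(U_{j₁}(τ₁)-I)⋯(U_{j_r}(τ_r)-I) f‖`. -/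
def mixedMod {E : Type*} [NormedAddCommGroup E] [NormedSpace ℂ E] {n : ℕ}
    (U : Fin n → ℝ → E →L[ℂ] E) (r : ℕ) (s : ℝ) (f : E) : ℝ :=
  ∑ J : Fin r → Fin n,
    sSup ((fun τ : Fin r → ℝ => ‖((List.ofFn fun i => U (J i) (τ i) - 1).prod) f‖) ''
      Set.univ.pi fun _ => Set.Icc 0 s)

/-- The list `[1,…,1,2,…,2,…]` encoding the operator `Θ₁^{a₁}⋯Θₙ^{aₙ}`. -/
def multiIndexList {n : ℕ} (a : Fin n → ℕ) : List (Fin n) :=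
  (List.ofFn fun i => List.replicate (a i) i).flatten

/-- `f` belongs to the Sobolev–Mellin space `W^r`: all derivatives `Θ₁^{a₁}⋯Θₙ^{aₙ} f`
with `|a| = r` exist. -/
def memW {E : Type*} [NormedAddCommGroup E] [NormedSpace ℂ E] {n : ℕ}
    (U : Fin n → ℝ → E →L[ℂ] E) (r : ℕ) (f : E) : Prop :=
  ∀ a : Fin n → ℕ, (∑ i, a i) = r → ∃ g, IsIterDeriv U (multiIndexList a) f g

/-- The value `Θ_{j₁}⋯Θ_{j_k} f` (or `0` if it does not exist). -/
def iterDerivVal {E : Type*} [NormedAddCommGroup E] [NormedSpace ℂ E] {n : ℕ}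
    (U : Fin n → ℝ → E →L[ℂ] E) (L : List (Fin n)) (f : E) : E :=
  haveI := Classical.propDecidable (∃ g, IsIterDeriv U L f g)
  if h : ∃ g, IsIterDeriv U L f g then h.choose else 0

/-- The Sobolev–Mellin norm `‖f‖ + Σ_{|a|=r} ‖Θ₁^{a₁}⋯Θₙ^{aₙ} f‖` (for `r = 0` it is `‖f‖`). -/
def WNorm {E : Type*} [NormedAddCommGroup E] [NormedSpace ℂ E] {n : ℕ}
    (U : Fin n → ℝ → E →L[ℂ] E) (r : ℕ) (f : E) : ℝ :=
  ‖f‖ + ∑ a ∈ (Fintype.piFinset fun _ : Fin n => Finset.range (r + 1)).filter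
      (fun a => (∑ i, a i) = r ∧ r ≠ 0),
    ‖iterDerivVal U (multiIndexList a) f‖

/-- Peetre's K-functional for the pair `(X^p, W^r_p)`. -/
def Kfun {E : Type*} [NormedAddCommGroup E] [NormedSpace ℂ E] {n : ℕ}
    (U : Fin n → ℝ → E →L[ℂ] E) (r : ℕ) (t : ℝ) (f : E) : ℝ :=
  sInf {v | ∃ f₀ f₁ : E, f = f₀ + f₁ ∧ memW U r f₁ ∧ v = ‖f₀‖ + t * WNorm U r f₁}

/-- The extended Sobolev–Mellin norm (equal to `∞` if some derivative does not exist). -/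
def WNormE {E : Type*} [NormedAddCommGroup E] [NormedSpace ℂ E] {n : ℕ}
    (U : Fin n → ℝ → E →L[ℂ] E) (r : ℕ) (f : E) : ℝ≥0∞ :=
  ENNReal.ofReal ‖f‖ +
    ∑ a ∈ (Fintype.piFinset fun _ : Fin n => Finset.range (r + 1)).filter
        (fun a => (∑ i, a i) = r ∧ r ≠ 0),
      (haveI := Classical.propDecidable (∃ g, IsIterDeriv U (multiIndexList a) f g)
       if h : ∃ g, IsIterDeriv U (multiIndexList a) f g then ENNReal.ofReal ‖h.choose‖
       else ⊤)

/-- Peetre's K-functional for the pair of Sobolev–Mellin spaces `(W^{k₁}_p, W^{k₂}_p)`. -/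
def KfunW {E : Type*} [NormedAddCommGroup E] [NormedSpace ℂ E] {n : ℕ}
    (U : Fin n → ℝ → E →L[ℂ] E) (k₁ k₂ : ℕ) (t : ℝ) (f : E) : ℝ :=
  sInf {v | ∃ f₀ f₁ : E, f = f₀ + f₁ ∧ memW U k₁ f₀ ∧ memW U k₂ f₁ ∧
    v = WNorm U k₁ f₀ + t * WNorm U k₂ f₁}

namespace SobolevMellin

/-! ### Differences, averages and iterated generators -/

section Calculus

variable {E : Type*} [NormedAddCommGroup E] [NormedSpace ℂ E] {n : ℕ}
  {R : Type*} [CommRing R] [Module R E]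

/-- The commutative ring `R` acts on `E` through operators, in such a way that `u j t` acts as a
contraction `U_j(t)` and `a j t` as the average `∫₀¹ U_j(tσ) dσ`. The action is determined only
through the identities used below: `gen_iff` is the integrated form
`(U_j(t) - 1) f = t ∫₀¹ U_j(tσ) g dσ` of `g = Θ_j f`, `swap` says that both
`s (U_j(t) - 1) ∫₀¹ U_j(sσ) dσ` and its mirror image under `s ↔ t` are the same second difference of
a primitive of the orbit, and `approx` is the mean value inequality. -/
structure IsCalculus (U : Fin n → ℝ → E →L[ℂ] E) (u a : Fin n → ℝ → R) : Prop where
  cont : ∀ T : R, Continuous fun f : E => T • f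
  smul_real : ∀ (T : R) (c : ℝ) (f : E), T • (c • f) = c • (T • f)
  norm_u : ∀ j t (f : E), ‖u j t • f‖ ≤ ‖f‖
  norm_a : ∀ j t (f : E), ‖a j t • f‖ ≤ ‖f‖
  tendsto_a : ∀ j (f : E), Tendsto (fun t => a j t • f) (𝓝 0) (𝓝 f)
  gen_iff : ∀ j (f g : E), GenDeriv (U j) f g ↔ ∀ t, (u j t - 1) • f = t • (a j t • g)
  swap : ∀ j s t (f : E), s • ((u j t - 1) • (a j s • f)) = t • (a j t • ((u j s - 1) • f))
  approx : ∀ j t (f g : E), GenDeriv (U j) f g → ‖(1 - a j t) • f‖ ≤ |t| * ‖g‖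

theorem GenDeriv.unique {T : ℝ → E →L[ℂ] E} {f g g' : E} (h : GenDeriv T f g)
    (h' : GenDeriv T f g') : g = g' :=
  tendsto_nhds_unique h h'

theorem IsIterDeriv.unique {U : Fin n → ℝ → E →L[ℂ] E} {L : List (Fin n)} {f g g' : E}
    (h : IsIterDeriv U L f g) (h' : IsIterDeriv U L f g') : g = g' := by
  induction L generalizing g g' with
  | nil => exact Eq.trans h h'.symm
  | cons j L ih =>
    obtain ⟨x, hx, hx'⟩ := h
    obtain ⟨y, hy, hy'⟩ := h'
    obtain rfl := ih hx hy
    exact GenDeriv.unique hx' hy'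

theorem iterDerivVal_eq {U : Fin n → ℝ → E →L[ℂ] E} {L : List (Fin n)} {f g : E}
    (h : IsIterDeriv U L f g) : iterDerivVal U L f = g := by
  have hex : ∃ g, IsIterDeriv U L f g := ⟨g, h⟩
  rw [iterDerivVal, dif_pos hex]
  exact IsIterDeriv.unique hex.choose_spec h

theorem isIterDeriv_iterDerivVal {U : Fin n → ℝ → E →L[ℂ] E} {L : List (Fin n)} {f : E}
    (h : ∃ g, IsIterDeriv U L f g) : IsIterDeriv U L f (iterDerivVal U L f) := by
  obtain ⟨g, hg⟩ := h
  rwa [iterDerivVal_eq hg]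

theorem isIterDeriv_append {U : Fin n → ℝ → E →L[ℂ] E} {L L' : List (Fin n)} {f g : E} :
    IsIterDeriv U (L ++ L') f g ↔ ∃ h, IsIterDeriv U L' f h ∧ IsIterDeriv U L h g := by
  induction L generalizing g with
  | nil => simp [IsIterDeriv]
  | cons j L ih =>
    simp only [List.cons_append, IsIterDeriv, ih]
    constructor
    · rintro ⟨x, ⟨h, h1, h2⟩, h3⟩
      exact ⟨h, h1, x, h2, h3⟩
    · rintro ⟨h, h1, x, h2, h3⟩
      exact ⟨x, ⟨h, h1, h2⟩, h3⟩

theorem GenDeriv.sub {T : ℝ → E →L[ℂ] E} {f g f' g' : E} (h : GenDeriv T f g)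
    (h' : GenDeriv T f' g') : GenDeriv T (f - f') (g - g') := by
  refine (Tendsto.sub h h').congr fun t => ?_
  rw [← smul_sub, map_sub]
  congr 1
  abel

theorem IsIterDeriv.sub {U : Fin n → ℝ → E →L[ℂ] E} {L : List (Fin n)} {f g f' g' : E}
    (h : IsIterDeriv U L f g) (h' : IsIterDeriv U L f' g') :
    IsIterDeriv U L (f - f') (g - g') := by
  induction L generalizing g g' with
  | nil => rw [IsIterDeriv] at *; rw [h, h']
  | cons j L ih =>
    obtain ⟨x, hx, hx'⟩ := h
    obtain ⟨y, hy, hy'⟩ := h'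
    exact ⟨x - y, ih hx hy, SobolevMellin.GenDeriv.sub hx' hy'⟩

theorem isIterDeriv_zero (U : Fin n → ℝ → E →L[ℂ] E) (L : List (Fin n)) :
    IsIterDeriv U L 0 0 := by
  induction L with
  | nil => rfl
  | cons j L ih => exact ⟨0, ih, by simp [GenDeriv]⟩

/-- A permutation of the image of a list lifts to a permutation of the list. -/
theorem exists_perm_map_eq {α β : Type*} (φ : α → β) {l l' : List β} (h : l.Perm l') :
    ∀ P : List α, P.map φ = l → ∃ P' : List α, P'.Perm P ∧ P'.map φ = l' := by
  induction h with
  | nil => intro P hP; exact ⟨P, .refl _, hP⟩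
  | cons x _ ih =>
    intro P hP
    obtain ⟨p, P, rfl, rfl, hP'⟩ := List.map_eq_cons_iff.1 hP
    obtain ⟨P', h1, h2⟩ := ih P hP'
    exact ⟨p :: P', h1.cons _, by simp [h2]⟩
  | swap x y l =>
    intro P hP
    obtain ⟨p, P₁, rfl, rfl, hP₁⟩ := List.map_eq_cons_iff.1 hP
    obtain ⟨p', P₂, rfl, rfl, hP₂⟩ := List.map_eq_cons_iff.1 hP₁
    exact ⟨p' :: p :: P₂, List.Perm.swap _ _ _, by simp [hP₂]⟩
  | trans _ _ ih1 ih2 =>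
    intro P hP
    obtain ⟨P', h1, h2⟩ := ih1 P hP
    obtain ⟨P'', h3, h4⟩ := ih2 P' h2
    exact ⟨P'', h3.trans h1, h4⟩

namespace IsCalculus

variable {U : Fin n → ℝ → E →L[ℂ] E} {u a : Fin n → ℝ → R}

theorem genDeriv_smul (H : IsCalculus U u a) (T : R) {j : Fin n} {f g : E}
    (h : GenDeriv (U j) f g) : GenDeriv (U j) (T • f) (T • g) := by
  rw [H.gen_iff] at h ⊢
  intro t
  rw [smul_comm, h t, H.smul_real, smul_comm T]

theorem isIterDeriv_smul (H : IsCalculus U u a) (T : R) {L : List (Fin n)} {f g : E}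
    (h : IsIterDeriv U L f g) : IsIterDeriv U L (T • f) (T • g) := by
  induction L generalizing g with
  | nil => rw [IsIterDeriv] at *; rw [h]
  | cons j L ih =>
    obtain ⟨x, hx, hx'⟩ := h
    exact ⟨T • x, ih hx, H.genDeriv_smul T hx'⟩

/-- The generators are closed operators. -/
theorem genDeriv_closed (H : IsCalculus U u a) {j : Fin n} {f g : ℕ → E} {f' g' : E}
    (h : ∀ N, GenDeriv (U j) (f N) (g N)) (hf : Tendsto f atTop (𝓝 f'))
    (hg : Tendsto g atTop (𝓝 g')) : GenDeriv (U j) f' g' := by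
  rw [H.gen_iff]
  intro t
  have h1 := ((H.cont (u j t - 1)).tendsto f').comp hf
  have h2 := (((H.cont (a j t)).tendsto g').comp hg).const_smul t
  refine tendsto_nhds_unique h1 (h2.congr fun N => ?_)
  exact ((H.gen_iff _ _ _).1 (h N) t).symm

/-- Averaging regularizes: `Θ_j A_j(s) = s⁻¹ (U_j(s) - 1)`. -/
theorem genDeriv_a (H : IsCalculus U u a) (j : Fin n) {s : ℝ} (hs : s ≠ 0) (f : E) :
    GenDeriv (U j) (a j s • f) (s⁻¹ • ((u j s - 1) • f)) := by
  rw [H.gen_iff]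
  intro t
  rw [H.smul_real, smul_comm t, ← H.swap, inv_smul_smul₀ hs]

/-- A product of differences, with individual steps, is the product of the steps times the product of
the averages applied to the iterated derivative. -/
theorem prod_diff (H : IsCalculus U u a) (P : List (Fin n × ℝ)) {f g : E}
    (h : IsIterDeriv U (P.map Prod.fst) f g) :
    (P.map fun x => u x.1 x.2 - 1).prod • f =
      (P.map Prod.snd).prod • ((P.map fun x => a x.1 x.2).prod • g) := by
  induction P generalizing g with
  | nil => simpa [IsIterDeriv] using h.symm
  | cons x P ih =>
    obtain ⟨y, hy, hy'⟩ := h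
    simp only [List.map_cons, List.prod_cons]
    rw [mul_smul, ih hy, H.smul_real, smul_comm (u x.1 x.2 - 1), (H.gen_iff _ _ _).1 hy' x.2,
      H.smul_real, mul_comm x.2, mul_comm (a x.1 x.2), mul_smul, mul_smul]

theorem norm_diff (H : IsCalculus U u a) (j : Fin n) (t : ℝ) (f : E) :
    ‖(u j t - 1) • f‖ ≤ 2 * ‖f‖ := by
  rw [sub_smul, one_smul]
  have := norm_sub_le (u j t • f) f
  have := H.norm_u j t f
  linarith

theorem tendsto_prod_a (H : IsCalculus U u a) (L : List (Fin n)) (f : E) :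
    Tendsto (fun t => (L.map fun j => a j t).prod • f) (𝓝 0) (𝓝 f) := by
  induction L with
  | nil => simp
  | cons j L ih =>
    simp only [List.map_cons, List.prod_cons]
    have h1 : Tendsto (fun t => a j t • ((L.map fun j => a j t).prod • f - f)) (𝓝 0) (𝓝 0) := by
      refine squeeze_zero_norm (fun t => H.norm_a j t _) ?_
      simpa using (ih.sub_const f).norm
    have h2 := h1.add (H.tendsto_a j f)
    rw [zero_add] at h2
    refine h2.congr fun t => ?_
    rw [smul_sub, mul_smul, sub_add_cancel]

/-- Symmetry of mixed derivatives: if `h` and `g` are the derivatives of `f` along `L` and `j :: L` in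
any orders, then `Θ_j h = g`. The two derivatives give two expressions for the same product of
differences, with step `t` along `L` and `s` along `j`. After dividing by the powers of `t`, letting
`t → 0` removes the averages along `L`. -/
theorem genDeriv_of_perm (H : IsCalculus U u a) {j : Fin n} {L L₁ L₂ : List (Fin n)} {f h g : E}
    (h1 : IsIterDeriv U L₁ f h) (hL₁ : L₁.Perm L)
    (h2 : IsIterDeriv U L₂ f g) (hL₂ : L₂.Perm (j :: L)) : GenDeriv (U j) h g := by
  rw [H.gen_iff]
  intro s
  have key : ∀ t : ℝ, t ≠ 0 → (L.map fun i => a i t).prod • ((u j s - 1) • h) =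
      (L.map fun i => a i t).prod • (s • (a j s • g)) := by
    intro t ht
    obtain ⟨P₁, hP₁, hP₁'⟩ := exists_perm_map_eq Prod.fst hL₁.symm (L.map fun i => (i, t))
      (by simp [Function.comp_def])
    obtain ⟨P₂, hP₂, hP₂'⟩ := exists_perm_map_eq Prod.fst hL₂.symm ((j, s) :: L.map fun i => (i, t))
      (by simp [Function.comp_def])
    have e1 := H.prod_diff P₁ (by rwa [hP₁'])
    have e2 := H.prod_diff P₂ (by rwa [hP₂'])
    rw [(hP₁.map _).prod_eq, (hP₁.map _).prod_eq, (hP₁.map _).prod_eq] at e1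
    rw [(hP₂.map _).prod_eq, (hP₂.map _).prod_eq, (hP₂.map _).prod_eq] at e2
    simp only [List.map_map, List.map_cons, List.prod_cons, Function.comp_def] at e1 e2
    rw [mul_smul, e1, H.smul_real, mul_comm s, mul_smul, mul_comm (a j s), mul_smul] at e2
    have hne : (L.map fun _ => t).prod ≠ 0 := by simp [ht]
    have e3 := smul_right_injective E hne e2
    rw [H.smul_real, ← e3, smul_comm]
  have t1 := (H.tendsto_prod_a L ((u j s - 1) • h)).mono_left (nhdsWithin_le_nhds (s := {0}ᶜ))
  have t2 := (H.tendsto_prod_a L (s • (a j s • g))).mono_left (nhdsWithin_le_nhds (s := {0}ᶜ))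
  refine tendsto_nhds_unique t1 (t2.congr' ?_)
  filter_upwards [self_mem_nhdsWithin] with t ht
  exact (key t ht).symm

end IsCalculus
end Calculus

/-! ### Multi-indices and lists -/

section Lists

variable {n : ℕ}

theorem count_multiIndexList (c : Fin n → ℕ) (j : Fin n) : (multiIndexList c).count j = c j := by
  rw [multiIndexList, List.count_flatten, List.map_ofFn, List.sum_ofFn]
  simp [List.count_replicate]

theorem length_multiIndexList (c : Fin n → ℕ) : (multiIndexList c).length = ∑ i, c i := by
  rw [multiIndexList, List.length_flatten, List.map_ofFn, List.sum_ofFn]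
  simp

theorem perm_multiIndexList (L : List (Fin n)) :
    L.Perm (multiIndexList fun j => L.count j) := by
  rw [List.perm_iff_count]
  intro j
  rw [count_multiIndexList]

theorem sum_count_eq_length (L : List (Fin n)) : ∑ j, L.count j = L.length := by
  rw [(perm_multiIndexList L).length_eq, length_multiIndexList]

theorem multiIndexList_add_zero {m : ℕ} (c : Fin (m + 1) → ℕ) (k : ℕ) :
    multiIndexList (Function.update c 0 (c 0 + k)) = List.replicate k 0 ++ multiIndexList c := by
  rw [multiIndexList, multiIndexList, List.ofFn_succ, List.ofFn_succ]
  simp [add_comm (c 0) k, ← List.replicate_append_replicate]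

theorem prod_list_eq {R : Type*} [CommRing R] (L : List (Fin n)) (x : Fin n → R) :
    (L.map x).prod = ∏ j, x j ^ L.count j := by
  rw [Finset.prod_list_map_count]
  refine Finset.prod_subset (Finset.subset_univ _) fun j _ hj => ?_
  rw [List.count_eq_zero_of_not_mem (by simpa using hj), pow_zero]

end Lists

/-! ### Bounds for the action of a ring -/

section Bounds

variable {E : Type*} [NormedAddCommGroup E] {R : Type*} [CommRing R] [Module R E]

/-- The action of `T` on `E` has operator norm at most `M`. -/
def Bd (E : Type*) [NormedAddCommGroup E] {R : Type*} [CommRing R] [Module R E]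
    (T : R) (M : ℝ) : Prop :=
  0 ≤ M ∧ ∀ f : E, ‖T • f‖ ≤ M * ‖f‖

theorem Bd.one : Bd E (1 : R) 1 := ⟨zero_le_one, fun f => by simp⟩

theorem Bd.mul {S T : R} {M N : ℝ} (hS : Bd E S M) (hT : Bd E T N) : Bd E (S * T) (M * N) := by
  refine ⟨mul_nonneg hS.1 hT.1, fun f => ?_⟩
  rw [mul_smul, mul_assoc]
  exact (hS.2 _).trans (mul_le_mul_of_nonneg_left (hT.2 f) hS.1)

theorem Bd.add {S T : R} {M N : ℝ} (hS : Bd E S M) (hT : Bd E T N) : Bd E (S + T) (M + N) := by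
  refine ⟨add_nonneg hS.1 hT.1, fun f => ?_⟩
  rw [add_smul, add_mul]
  exact (norm_add_le _ _).trans (add_le_add (hS.2 f) (hT.2 f))

theorem Bd.sub {S T : R} {M N : ℝ} (hS : Bd E S M) (hT : Bd E T N) : Bd E (S - T) (M + N) := by
  refine ⟨add_nonneg hS.1 hT.1, fun f => ?_⟩
  rw [sub_smul, add_mul]
  exact (norm_sub_le _ _).trans (add_le_add (hS.2 f) (hT.2 f))

theorem Bd.pow {S : R} {M : ℝ} (hS : Bd E S M) (k : ℕ) : Bd E (S ^ k) (M ^ k) := by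
  induction k with
  | zero => simpa using Bd.one
  | succ k ih => rw [pow_succ, pow_succ]; exact ih.mul hS

theorem Bd.sum {ι : Type*} {s : Finset ι} {S : ι → R} {M : ι → ℝ} (h : ∀ i ∈ s, Bd E (S i) (M i)) :
    Bd E (∑ i ∈ s, S i) (∑ i ∈ s, M i) := by
  classical
  induction s using Finset.induction_on with
  | empty => exact ⟨by simp, fun f => by simp⟩
  | insert i s hi ih =>
    rw [Finset.sum_insert hi, Finset.sum_insert hi]
    exact (h i (by simp)).add (ih fun k hk => h k (by simp [hk]))

theorem Bd.prod {ι : Type*} {s : Finset ι} {S : ι → R} {M : ι → ℝ} (h : ∀ i ∈ s, Bd E (S i) (M i)) :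
    Bd E (∏ i ∈ s, S i) (∏ i ∈ s, M i) := by
  classical
  induction s using Finset.induction_on with
  | empty => simpa using Bd.one
  | insert i s hi ih =>
    rw [Finset.prod_insert hi, Finset.prod_insert hi]
    exact (h i (by simp)).mul (ih fun k hk => h k (by simp [hk]))

theorem Bd.mono {S : R} {M N : ℝ} (hS : Bd E S M) (h : M ≤ N) : Bd E S N :=
  ⟨hS.1.trans h, fun f => (hS.2 f).trans (mul_le_mul_of_nonneg_right h (norm_nonneg f))⟩

theorem Bd.list_prod {ι : Type*} {L : List ι} {S : ι → R} {M : ℝ} (h : ∀ i, Bd E (S i) M) :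
    Bd E (L.map S).prod (M ^ L.length) := by
  induction L with
  | nil => simpa using Bd.one
  | cons i L ih =>
    simp only [List.map_cons, List.prod_cons, List.length_cons, pow_succ']
    exact (h i).mul ih

/-- `1 - (1 - x ^ r) ^ r` is divisible by `x ^ r`, and differs from `1` by a multiple of
`(1 - x) ^ r`, with cofactors bounded independently of the contraction `x`. -/
theorem exists_cofactors (r : ℕ) : ∃ M : ℝ, 1 ≤ M ∧ ∀ {E : Type*} [NormedAddCommGroup E]
    {R : Type*} [CommRing R] [Module R E] (x : R), Bd E x 1 →
    ∃ c e : R, x ^ r * c = 1 - (1 - x) ^ r * e ∧ Bd E c M ∧ Bd E e M := by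
  refine ⟨∑ i ∈ Finset.range r, (2 : ℝ) ^ i + (r : ℝ) ^ r + 1, ?_, ?_⟩
  · have : (0 : ℝ) ≤ ∑ i ∈ Finset.range r, (2 : ℝ) ^ i := by positivity
    have : (0 : ℝ) ≤ (r : ℝ) ^ r := by positivity
    linarith
  intro E _ R _ _ x hx
  have h0 : (0 : ℝ) ≤ ∑ i ∈ Finset.range r, (2 : ℝ) ^ i := by positivity
  have h0' : (0 : ℝ) ≤ (r : ℝ) ^ r := by positivity
  refine ⟨∑ i ∈ Finset.range r, (1 - x ^ r) ^ i, (∑ i ∈ Finset.range r, x ^ i) ^ r, ?_, ?_, ?_⟩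
  · rw [← mul_pow, mul_neg_geom_sum]
    have := mul_neg_geom_sum (1 - x ^ r) r
    rwa [_root_.sub_sub_cancel] at this
  · have h1 : Bd E (1 - x ^ r) 2 := (Bd.one.sub (hx.pow r)).mono (by norm_num)
    exact (Bd.sum fun i _ => h1.pow i).mono (by linarith)
  · have h1 : Bd E (∑ i ∈ Finset.range r, x ^ i) r :=
      (Bd.sum fun i _ => hx.pow i).mono (by simp)
    exact (h1.pow r).mono (by linarith)

end Bounds

/-! ### The mollifier and the existence of lower derivatives -/

section Mollifier

variable {E : Type*} [NormedAddCommGroup E] [NormedSpace ℂ E] {n : ℕ}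
  {R : Type*} [CommRing R] [Module R E]

namespace IsCalculus

variable {U : Fin n → ℝ → E →L[ℂ] E} {u a : Fin n → ℝ → R}

theorem bd_a (H : IsCalculus U u a) (j : Fin n) (t : ℝ) : Bd E (a j t) 1 :=
  ⟨zero_le_one, fun f => by simpa using H.norm_a j t f⟩

theorem bd_diff (H : IsCalculus U u a) (j : Fin n) (t : ℝ) : Bd E (u j t - 1) 2 :=
  ⟨zero_le_two, fun f => H.norm_diff j t f⟩

/-- At each scale `s` there is a mollifier `P = ∏_j (1 - (1 - A_j(s)^r)^r)`. Its error is controlled by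
the `r`-th powers of `1 - A_j(s)`, and it is divisible, with a bounded cofactor, by any product of at
most `r` of the averages. -/
theorem exists_mollifier (H : IsCalculus U u a) (r : ℕ) : ∃ M : ℝ, 1 ≤ M ∧ ∀ s : ℝ, ∃ P : R,
    (∀ h : E, ‖h - P • h‖ ≤ M * ∑ j, ‖(1 - a j s) ^ r • h‖) ∧
    ∀ L : List (Fin n), L.length ≤ r →
      ∃ w : R, P = w * (L.map fun j => a j s).prod ∧ Bd E w M := by
  obtain ⟨M, hM, hcof⟩ := exists_cofactors r
  refine ⟨M ^ (n + 1), one_le_pow₀ hM, fun s => ?_⟩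
  have hM0 : 0 ≤ M := by linarith
  choose c e hce hc he using fun j => hcof (E := E) (a j s) (H.bd_a j s)
  have hB : ∀ j, Bd E (a j s ^ r * c j) M := fun j => by
    simpa using ((H.bd_a j s).pow r).mul (hc j)
  have hM1 : M ^ n ≤ M ^ (n + 1) := pow_le_pow_right₀ hM (Nat.le_succ n)
  refine ⟨∏ j, a j s ^ r * c j, fun h => ?_, fun L hL => ?_⟩
  · have key : ∀ S : Finset (Fin n), ‖h - (∏ j ∈ S, a j s ^ r * c j) • h‖ ≤
        ∑ j ∈ S, M ^ S.card * ‖h - (a j s ^ r * c j) • h‖ := by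
      intro S
      induction S using Finset.induction_on with
      | empty => simp
      | insert i S hi ih =>
        rw [Finset.prod_insert hi, Finset.sum_insert hi, Finset.card_insert_of_notMem hi, mul_smul]
        set y := (∏ j ∈ S, a j s ^ r * c j) • h
        set b := a i s ^ r * c i
        have e1 : h - b • y = (h - b • h) + b • (h - y) := by rw [smul_sub]; abel
        rw [e1]
        refine (norm_add_le _ _).trans (add_le_add ?_ ?_)
        · exact le_mul_of_one_le_left (norm_nonneg _) (one_le_pow₀ hM)
        · refine ((hB i).2 _).trans ((mul_le_mul_of_nonneg_left ih hM0).trans_eq ?_)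
          rw [Finset.mul_sum]
          exact Finset.sum_congr rfl fun j _ => by ring
    refine (key Finset.univ).trans ?_
    rw [Finset.mul_sum]
    refine Finset.sum_le_sum fun j _ => ?_
    have e2 : h - (a j s ^ r * c j) • h = e j • ((1 - a j s) ^ r • h) := by
      rw [hce, sub_smul, one_smul, _root_.sub_sub_cancel, mul_comm, mul_smul]
    rw [e2, Finset.card_univ, Fintype.card_fin, pow_succ, mul_assoc]
    exact mul_le_mul_of_nonneg_left ((he j).2 _) (by positivity)
  · refine ⟨∏ j, a j s ^ (r - L.count j) * c j, ?_, ?_⟩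
    · rw [prod_list_eq, ← Finset.prod_mul_distrib]
      refine Finset.prod_congr rfl fun j _ => ?_
      have : L.count j ≤ r := List.count_le_length.trans hL
      rw [mul_right_comm, ← pow_add, Nat.sub_add_cancel this]
    · refine Bd.mono (M := ∏ j : Fin n, M) (Bd.prod fun j _ => ?_) (by simpa using hM1)
      simpa using ((H.bd_a j s).pow (r - L.count j)).mul (hc j)

theorem norm_one_sub_pow (H : IsCalculus U u a) (j : Fin n) {s : ℝ} (hs : 0 ≤ s) (m : ℕ) {h g : E}
    (hg : IsIterDeriv U (List.replicate m j) h g) :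
    ‖(1 - a j s) ^ m • h‖ ≤ s ^ m * ‖g‖ := by
  induction m generalizing h g with
  | zero => rw [List.replicate_zero, IsIterDeriv] at hg; simp [hg]
  | succ m ih =>
    obtain ⟨y, hy, hy'⟩ := hg
    have h1 := H.isIterDeriv_smul (1 - a j s) hy
    have h2 : ‖(1 - a j s) ^ m • ((1 - a j s) • h)‖ ≤ s ^ m * ‖(1 - a j s) • y‖ := ih h1
    have h3 := H.approx j s y g hy'
    rw [abs_of_nonneg hs] at h3
    rw [pow_succ, mul_smul, pow_succ, mul_assoc]
    exact h2.trans (mul_le_mul_of_nonneg_left h3 (by positivity))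

/-- Derivatives along permuted lists agree, provided all derivatives of lower order exist. -/
theorem isIterDeriv_of_perm (H : IsCalculus U u a) {L L' : List (Fin n)} {f g : E}
    (hex : ∀ K : List (Fin n), K.length < L.length → ∃ g, IsIterDeriv U K f g)
    (hg : IsIterDeriv U L f g) (hL : L.Perm L') : IsIterDeriv U L' f g := by
  cases L' with
  | nil => rwa [List.perm_nil.1 hL] at hg
  | cons j K =>
    obtain ⟨h, hh⟩ := hex K (by rw [hL.length_eq]; simp)
    exact ⟨h, hh, H.genDeriv_of_perm hh (.refl _) hg hL⟩

/-- Derivatives of order below `r` exist in `W^r`: the first coordinate is the outermost one in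
`multiIndexList`, so raising its exponent until the order is `r` only adds derivatives on the
outside. -/
theorem exists_multiIndex {r : ℕ} {f : E} (hf : memW U r f) (c : Fin n → ℕ) (hc : ∑ i, c i ≤ r) :
    ∃ g, IsIterDeriv U (multiIndexList c) f g := by
  cases n with
  | zero => exact ⟨f, by simp [multiIndexList, IsIterDeriv]⟩
  | succ m =>
    obtain ⟨g, hg⟩ := hf (Function.update c 0 (c 0 + (r - ∑ i, c i))) (by
      rw [Finset.sum_update_of_mem (Finset.mem_univ _), add_assoc, add_comm (r - _), ← add_assoc,
        Finset.sdiff_singleton_eq_erase, Finset.add_sum_erase _ _ (Finset.mem_univ _)]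
      omega)
    rw [multiIndexList_add_zero, isIterDeriv_append] at hg
    exact ⟨_, hg.choose_spec.1⟩

/-- Derivatives in `W^r` exist along lists in any order, not only in the order of `multiIndexList`. -/
theorem exists_iterDeriv (H : IsCalculus U u a) {r : ℕ} {f : E} (hf : memW U r f)
    (L : List (Fin n)) (hL : L.length ≤ r) : ∃ g, IsIterDeriv U L f g := by
  induction L with
  | nil => exact ⟨f, rfl⟩
  | cons j L ih =>
    obtain ⟨h, hh⟩ := ih (by simp at hL; omega)
    obtain ⟨g, hg⟩ := exists_multiIndex hf (fun i => (j :: L).count i)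
      (by rwa [sum_count_eq_length])
    exact ⟨g, h, hh, H.genDeriv_of_perm hh (.refl _) hg (perm_multiIndexList _).symm⟩

theorem isIterDeriv_val (H : IsCalculus U u a) {r : ℕ} {f : E} (hf : memW U r f)
    {L : List (Fin n)} (hL : L.length ≤ r) : IsIterDeriv U L f (iterDerivVal U L f) :=
  isIterDeriv_iterDerivVal (H.exists_iterDeriv hf L hL)

theorem memW_of_le (H : IsCalculus U u a) {r k : ℕ} {f : E} (hf : memW U r f) (hk : k ≤ r) :
    memW U k f := fun c hc => H.exists_iterDeriv hf _ (by rwa [length_multiIndexList, hc])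

theorem memW_sub {r : ℕ} {f g : E} (hf : memW U r f) (hg : memW U r g) :
    memW U r (f - g) := fun c hc =>
  ⟨_, IsIterDeriv.sub (hf c hc).choose_spec (hg c hc).choose_spec⟩

theorem norm_val_le_WNorm (H : IsCalculus U u a) {r : ℕ} {f : E} (hf : memW U r f)
    {L : List (Fin n)} (hL : L.length = r) : ‖iterDerivVal U L f‖ ≤ WNorm U r f := by
  rw [WNorm]
  rcases Nat.eq_zero_or_pos r with rfl | hr
  · rw [List.length_eq_zero_iff.1 hL, iterDerivVal_eq (g := f) (by rfl)]
    simp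
  · have h1 : iterDerivVal U L f = iterDerivVal U (multiIndexList fun j => L.count j) f := by
      symm
      apply iterDerivVal_eq
      exact H.isIterDeriv_of_perm (fun K hK => H.exists_iterDeriv hf K (by omega))
        (H.isIterDeriv_val hf hL.le) (perm_multiIndexList L)
    rw [h1]
    refine le_add_of_nonneg_of_le (norm_nonneg _) ?_
    refine Finset.single_le_sum (f := fun c => ‖iterDerivVal U (multiIndexList c) f‖)
      (fun _ _ => norm_nonneg _) ?_
    simp only [Finset.mem_filter, Fintype.mem_piFinset, Finset.mem_range, sum_count_eq_length]
    refine ⟨fun j => ?_, hL, by omega⟩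
    have : L.count j ≤ L.length := List.count_le_length
    omega

end IsCalculus
end Mollifier

/-! ### Intermediate derivatives and approximation by smooth elements -/

section Estimates

variable {E : Type*} [NormedAddCommGroup E] [NormedSpace ℂ E] {n : ℕ}
  {R : Type*} [CommRing R] [Module R E]

theorem norm_le_WNorm (U : Fin n → ℝ → E →L[ℂ] E) (r : ℕ) (f : E) : ‖f‖ ≤ WNorm U r f :=
  le_add_of_nonneg_right (Finset.sum_nonneg fun _ _ => norm_nonneg _)

theorem WNorm_nonneg (U : Fin n → ℝ → E →L[ℂ] E) (r : ℕ) (f : E) : 0 ≤ WNorm U r f :=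
  (norm_nonneg f).trans (norm_le_WNorm U r f)

/-- The multi-indices over which the Sobolev norm of order `r` sums. -/
def indexSet (n r : ℕ) : Finset (Fin n → ℕ) :=
  (Fintype.piFinset fun _ : Fin n => Finset.range (r + 1)).filter fun c => (∑ i, c i) = r ∧ r ≠ 0

theorem WNorm_le (U : Fin n → ℝ → E →L[ℂ] E) (r : ℕ) (f : E) (B : ℝ)
    (hB : ∀ L : List (Fin n), L.length = r → ‖iterDerivVal U L f‖ ≤ B) :
    WNorm U r f ≤ ‖f‖ + (indexSet n r).card * B := by
  rw [WNorm, ← nsmul_eq_mul]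
  refine add_le_add_right (Finset.sum_le_card_nsmul _ _ _ fun c hc => hB _ ?_) _
  rw [length_multiIndexList]
  exact (Finset.mem_filter.1 hc).2.1

namespace IsCalculus

variable {U : Fin n → ℝ → E →L[ℂ] E} {u a : Fin n → ℝ → R}

/-- The case of `prod_diff` in which all steps are equal. -/
theorem list_diff (H : IsCalculus U u a) (s : ℝ) {L : List (Fin n)} {f g : E}
    (h : IsIterDeriv U L f g) :
    (L.map fun j => u j s - 1).prod • f = s ^ L.length • ((L.map fun j => a j s).prod • g) := by
  have := H.prod_diff (L.map fun j => (j, s)) (f := f) (g := g) (by simpa [Function.comp_def] using h)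
  simpa [Function.comp_def] using this

/-- The iterated form of `genDeriv_a`: the derivative along `L` of a product of averages along `L`. -/
theorem isIterDeriv_prod_a (H : IsCalculus U u a) {s : ℝ} (hs : s ≠ 0) (L : List (Fin n)) (y : E) :
    IsIterDeriv U L ((L.map fun j => a j s).prod • y)
      (s⁻¹ ^ L.length • ((L.map fun j => u j s - 1).prod • y)) := by
  induction L with
  | nil => simp [IsIterDeriv]
  | cons j L ih =>
    refine ⟨a j s • (s⁻¹ ^ L.length • ((L.map fun j => u j s - 1).prod • y)), ?_, ?_⟩
    · have := H.isIterDeriv_smul (a j s) ih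
      rwa [List.map_cons, List.prod_cons, mul_smul]
    · have := H.genDeriv_a j hs (s⁻¹ ^ L.length • ((L.map fun j => u j s - 1).prod • y))
      convert this using 1
      rw [H.smul_real (u j s - 1), smul_smul s⁻¹, ← pow_succ', List.map_cons, List.prod_cons,
        mul_smul, List.length_cons]

/-- Landau type inequality: an intermediate derivative is bounded by the function and its derivatives
of order `r`, at every scale `s`. With `h = Θ^L f`, the part `P h` is a bounded operator applied to
the differences of `f`, and `h - P h` involves only `r - |L|` further derivatives of `h`. -/
theorem norm_val_le (H : IsCalculus U u a) (r : ℕ) : ∃ C : ℝ, 0 < C ∧ ∀ f : E, memW U r f →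
    ∀ L : List (Fin n), L.length ≤ r → ∀ s : ℝ, 0 < s →
      ‖iterDerivVal U L f‖ ≤ C * (s⁻¹ ^ L.length * ‖f‖ + s ^ (r - L.length) * WNorm U r f) := by
  obtain ⟨M, hM, hmol⟩ := H.exists_mollifier r
  have hM0 : 0 ≤ M := by linarith
  refine ⟨M * (n + 1) * 2 ^ r, by positivity, fun f hf L hL s hs => ?_⟩
  obtain ⟨P, hP1, hP2⟩ := hmol s
  obtain ⟨w, rfl, hw⟩ := hP2 L hL
  set h := iterDerivVal U L f with hh
  have hD : IsIterDeriv U L f h := H.isIterDeriv_val hf hL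
  have h2 : (2 : ℝ) ^ L.length ≤ 2 ^ r := pow_le_pow_right₀ one_le_two hL
  have e1 : ‖(w * (L.map fun j => a j s).prod) • h‖ ≤ M * 2 ^ r * (s⁻¹ ^ L.length * ‖f‖) := by
    have e := H.list_diff s hD
    have e' : (L.map fun j => a j s).prod • h =
        s⁻¹ ^ L.length • ((L.map fun j => u j s - 1).prod • f) := by
      rw [e, smul_smul, ← mul_pow, inv_mul_cancel₀ hs.ne', one_pow, one_smul]
    rw [mul_smul, e']
    refine (hw.2 _).trans ?_
    rw [norm_smul, Real.norm_of_nonneg (by positivity), mul_assoc]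
    refine mul_le_mul_of_nonneg_left ?_ hM0
    rw [mul_left_comm]
    refine mul_le_mul_of_nonneg_left ?_ (by positivity)
    refine ((Bd.list_prod fun j => H.bd_diff j s).2 f).trans ?_
    exact mul_le_mul_of_nonneg_right h2 (norm_nonneg f)
  have e2 : ∀ j, ‖(1 - a j s) ^ r • h‖ ≤ 2 ^ r * (s ^ (r - L.length) * WNorm U r f) := by
    intro j
    have hlen : (List.replicate (r - L.length) j ++ L).length = r := by
      rw [List.length_append, List.length_replicate, Nat.sub_add_cancel hL]
    obtain ⟨h', hh', hg⟩ := isIterDeriv_append.1 (H.isIterDeriv_val hf hlen.le)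
    obtain rfl := IsIterDeriv.unique hh' hD
    have b1 := H.norm_one_sub_pow j hs.le _ hg
    have b2 := H.norm_val_le_WNorm hf hlen
    have b3 : Bd E (1 - a j s) 2 := (Bd.one.sub (H.bd_a j s)).mono (by norm_num)
    have e : (1 - a j s) ^ r = (1 - a j s) ^ L.length * (1 - a j s) ^ (r - L.length) := by
      rw [← pow_add, Nat.add_sub_cancel' hL]
    rw [e, mul_smul]
    refine ((b3.pow _).2 _).trans (mul_le_mul h2 ?_ (norm_nonneg _) (by positivity))
    exact b1.trans (mul_le_mul_of_nonneg_left b2 (by positivity))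
  have e3 := hP1 h
  have e4 : ∑ j, ‖(1 - a j s) ^ r • h‖ ≤ n * (2 ^ r * (s ^ (r - L.length) * WNorm U r f)) :=
    (Finset.sum_le_sum fun j _ => e2 j).trans_eq (by simp)
  have e5 := norm_le_norm_sub_add h ((w * (L.map fun j => a j s).prod) • h)
  have e6 := mul_le_mul_of_nonneg_left e4 hM0
  have p1 : 0 ≤ M * 2 ^ r * n * (s⁻¹ ^ L.length * ‖f‖) := by positivity
  have p2 : 0 ≤ M * 2 ^ r * (s ^ (r - L.length) * WNorm U r f) := by
    have := WNorm_nonneg U r f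
    positivity
  nlinarith

/-- Approximation of `g ∈ W^k` by `P g ∈ W^r`, where `P` is the mollifier at scale `s`. -/
theorem exists_approx (H : IsCalculus U u a) {k r : ℕ} (hk : k ≤ r) : ∃ C : ℝ, 0 < C ∧
    ∀ g : E, memW U k g → ∀ s : ℝ, 0 < s → s ≤ 1 → ∃ g₁ : E, memW U r g₁ ∧
      ‖g - g₁‖ ≤ C * (s ^ k * WNorm U k g) ∧ s ^ r * WNorm U r g₁ ≤ C * (s ^ k * WNorm U k g) := by
  obtain ⟨M, hM, hmol⟩ := H.exists_mollifier r
  have hM0 : 0 ≤ M := by linarith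
  refine ⟨M * n * 2 ^ r + M + (indexSet n r).card * (M * 2 ^ r), by positivity,
    fun g hg s hs hs1 => ?_⟩
  obtain ⟨P, hP1, hP2⟩ := hmol s
  have hW := WNorm_nonneg U k g
  have hpos : 0 ≤ s ^ k * WNorm U k g := by positivity
  have hval : ∀ L : List (Fin n), L.length = r →
      IsIterDeriv U L (P • g) (iterDerivVal U L (P • g)) ∧
      s ^ r * ‖iterDerivVal U L (P • g)‖ ≤ M * 2 ^ r * (s ^ k * WNorm U k g) := by
    intro L hL
    obtain ⟨w, rfl, hw⟩ := hP2 L hL.le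
    have h1 := H.isIterDeriv_prod_a hs.ne' L (w • g)
    rw [← mul_smul, mul_comm _ w] at h1
    rw [iterDerivVal_eq h1]
    refine ⟨h1, ?_⟩
    rw [norm_smul, Real.norm_of_nonneg (by positivity), hL, ← mul_assoc, ← mul_pow,
      mul_inv_cancel₀ hs.ne', one_pow, one_mul]
    -- only the `k` innermost differences are traded for derivatives of `g`
    have hL2 : (L.drop (r - k)).length = k := by rw [List.length_drop]; omega
    have hL1 : (L.take (r - k)).length ≤ r := by rw [List.length_take]; omega
    have h2 := H.list_diff s (H.isIterDeriv_val hg hL2.le)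
    have e : (L.map fun j => u j s - 1).prod • (w • g) =
        w • (((L.take (r - k)).map fun j => u j s - 1).prod •
          (((L.drop (r - k)).map fun j => u j s - 1).prod • g)) := by
      conv_lhs => rw [← List.take_append_drop (r - k) L]
      rw [List.map_append, List.prod_append, smul_comm, mul_smul]
    rw [e, h2, mul_assoc]
    refine (hw.2 _).trans (mul_le_mul_of_nonneg_left ?_ hM0)
    refine ((Bd.list_prod fun j => H.bd_diff j s).2 _).trans ?_
    refine mul_le_mul (pow_le_pow_right₀ one_le_two hL1) ?_ (norm_nonneg _) (by positivity)
    rw [norm_smul, Real.norm_of_nonneg (by positivity), hL2]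
    refine mul_le_mul_of_nonneg_left ?_ (by positivity)
    refine ((Bd.list_prod fun j => H.bd_a j s).2 _).trans ?_
    rw [one_pow, one_mul]
    exact H.norm_val_le_WNorm hg hL2
  refine ⟨P • g, fun c hc => ⟨_, (hval _ (by rw [length_multiIndexList, hc])).1⟩, ?_, ?_⟩
  · have e2 : ∀ j, ‖(1 - a j s) ^ r • g‖ ≤ 2 ^ r * (s ^ k * WNorm U k g) := by
      intro j
      have b1 := H.norm_one_sub_pow j hs.le _ (H.isIterDeriv_val hg (L := List.replicate k j)
        (by simp))
      have b2 := H.norm_val_le_WNorm hg (L := List.replicate k j) (by simp)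
      have b3 : Bd E (1 - a j s) 2 := (Bd.one.sub (H.bd_a j s)).mono (by norm_num)
      have e : (1 - a j s) ^ r = (1 - a j s) ^ (r - k) * (1 - a j s) ^ k := by
        rw [← pow_add, Nat.sub_add_cancel hk]
      rw [e, mul_smul]
      refine ((b3.pow _).2 _).trans (mul_le_mul (pow_le_pow_right₀ one_le_two (Nat.sub_le r k)) ?_
        (norm_nonneg _) (by positivity))
      exact b1.trans (mul_le_mul_of_nonneg_left b2 (by positivity))
    have e4 : ∑ j, ‖(1 - a j s) ^ r • g‖ ≤ n * (2 ^ r * (s ^ k * WNorm U k g)) :=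
      (Finset.sum_le_sum fun j _ => e2 j).trans_eq (by simp)
    refine (hP1 g).trans ((mul_le_mul_of_nonneg_left e4 hM0).trans ?_)
    have : 0 ≤ (M + (indexSet n r).card * (M * 2 ^ r)) * (s ^ k * WNorm U k g) := by positivity
    linarith
  · have h1 := WNorm_le U r (P • g) ((s ^ r)⁻¹ * (M * 2 ^ r * (s ^ k * WNorm U k g)))
      fun L hL => by
        rw [le_inv_mul_iff₀ (by positivity)]
        exact (hval L hL).2
    have h2 := mul_le_mul_of_nonneg_left h1 (by positivity : 0 ≤ s ^ r)
    rw [mul_add, mul_left_comm (s ^ r) (Nat.cast _), mul_inv_cancel_left₀ (by positivity)] at h2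
    refine h2.trans ?_
    obtain ⟨w, hw, hw'⟩ := hP2 [] (by simp)
    have h3 : ‖P • g‖ ≤ M * ‖g‖ := by
      rw [hw]; simpa using hw'.2 g
    have h4 : s ^ r * ‖P • g‖ ≤ M * (s ^ k * WNorm U k g) := by
      rw [mul_left_comm]
      refine mul_le_mul (pow_le_pow_of_le_one hs.le hs1 hk)
        (h3.trans (mul_le_mul_of_nonneg_left (norm_le_WNorm U k g) hM0)) (norm_nonneg _)
        (by positivity)
    have : 0 ≤ M * n * 2 ^ r * (s ^ k * WNorm U k g) := by positivity
    linarith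

end IsCalculus
end Estimates

/-! ### Elementary properties and comparison of the K-functionals -/

section KFunctional

variable {E : Type*} [NormedAddCommGroup E] [NormedSpace ℂ E] {n : ℕ}
  {U : Fin n → ℝ → E →L[ℂ] E}

theorem memW_zero (r : ℕ) : memW U r (0 : E) := fun _ _ => ⟨0, isIterDeriv_zero U _⟩

theorem iterDerivVal_zero (L : List (Fin n)) : iterDerivVal U L (0 : E) = 0 :=
  iterDerivVal_eq (isIterDeriv_zero U L)

theorem WNorm_zero (r : ℕ) : WNorm U r (0 : E) = 0 := by
  simp [WNorm, iterDerivVal_zero]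

theorem WNorm_sub_le {r : ℕ} {f g : E} (hf : memW U r f) (hg : memW U r g) :
    WNorm U r (f - g) ≤ WNorm U r f + WNorm U r g := by
  simp only [WNorm]
  rw [add_add_add_comm, ← Finset.sum_add_distrib]
  refine add_le_add (norm_sub_le f g) (Finset.sum_le_sum fun c hc => ?_)
  have hc' := (Finset.mem_filter.1 hc).2.1
  rw [iterDerivVal_eq (IsIterDeriv.sub (isIterDeriv_iterDerivVal (hf c hc'))
    (isIterDeriv_iterDerivVal (hg c hc')))]
  exact norm_sub_le _ _

theorem memW_add {r : ℕ} {f g : E} (hf : memW U r f) (hg : memW U r g) : memW U r (f + g) := by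
  have := IsCalculus.memW_sub hf (IsCalculus.memW_sub (memW_zero r) hg)
  simpa using this

theorem WNorm_add_le {r : ℕ} {f g : E} (hf : memW U r f) (hg : memW U r g) :
    WNorm U r (f + g) ≤ WNorm U r f + WNorm U r g := by
  have h0 := memW_zero (U := U) (E := E) r
  have h1 := WNorm_sub_le hf (IsCalculus.memW_sub h0 hg)
  have h2 := WNorm_sub_le h0 hg
  rw [WNorm_zero, zero_add] at h2
  simp only [zero_sub, sub_neg_eq_add] at h1 h2
  linarith

theorem Kfun_le {r : ℕ} {t : ℝ} (ht : 0 ≤ t) {f f₀ f₁ : E} (hf : f = f₀ + f₁) (hf₁ : memW U r f₁) :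
    Kfun U r t f ≤ ‖f₀‖ + t * WNorm U r f₁ := by
  refine csInf_le ⟨0, ?_⟩ ⟨f₀, f₁, hf, hf₁, rfl⟩
  rintro v ⟨g₀, g₁, -, -, rfl⟩
  have := WNorm_nonneg U r g₁
  positivity

theorem le_Kfun {r : ℕ} {t B : ℝ} {f : E}
    (h : ∀ f₀ f₁ : E, f = f₀ + f₁ → memW U r f₁ → B ≤ ‖f₀‖ + t * WNorm U r f₁) :
    B ≤ Kfun U r t f := by
  refine le_csInf ⟨_, f, 0, (add_zero f).symm, memW_zero r, rfl⟩ ?_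
  rintro v ⟨g₀, g₁, hg, hg₁, rfl⟩
  exact h g₀ g₁ hg hg₁

theorem Kfun_nonneg {r : ℕ} {t : ℝ} (ht : 0 ≤ t) (f : E) : 0 ≤ Kfun U r t f :=
  le_Kfun fun f₀ f₁ _ _ => by
    have := WNorm_nonneg U r f₁
    positivity

theorem Kfun_le_norm {r : ℕ} {t : ℝ} (ht : 0 ≤ t) (f : E) : Kfun U r t f ≤ ‖f‖ := by
  have := Kfun_le ht (add_zero f).symm (memW_zero (U := U) r)
  simpa [WNorm_zero] using this

theorem Kfun_mono {r : ℕ} {s t : ℝ} (hs : 0 ≤ s) (hst : s ≤ t) (f : E) :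
    Kfun U r s f ≤ Kfun U r t f :=
  le_Kfun fun f₀ f₁ hf hf₁ => (Kfun_le hs hf hf₁).trans (by
    have := mul_le_mul_of_nonneg_right hst (WNorm_nonneg U r f₁)
    linarith)

/-- The space `W^r` embeds in `E` with norm at most one, so the functional dominates the norm. -/
theorem min_mul_norm_le_Kfun {r : ℕ} {t : ℝ} (ht : 0 ≤ t) (f : E) :
    min 1 t * ‖f‖ ≤ Kfun U r t f :=
  le_Kfun fun f₀ f₁ hf _ => by
    have h0 : 0 ≤ min 1 t := le_min zero_le_one ht
    calc min 1 t * ‖f‖ ≤ min 1 t * (‖f₀‖ + ‖f₁‖) := by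
          rw [hf]; exact mul_le_mul_of_nonneg_left (norm_add_le _ _) h0
      _ ≤ 1 * ‖f₀‖ + t * ‖f₁‖ := by
          rw [mul_add]
          exact add_le_add (mul_le_mul_of_nonneg_right (min_le_left _ _) (norm_nonneg _))
            (mul_le_mul_of_nonneg_right (min_le_right _ _) (norm_nonneg _))
      _ ≤ ‖f₀‖ + t * WNorm U r f₁ := by
          rw [one_mul]
          exact add_le_add_right (mul_le_mul_of_nonneg_left (norm_le_WNorm U r f₁) ht) _

/-- Near-minimizers with factor `2`. When the functional vanishes the infimum need not be beaten by any
decomposition, but then `f = 0`. -/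
theorem exists_near {r : ℕ} {t : ℝ} (ht : 0 < t) (f : E) :
    ∃ b : E, memW U r b ∧ ‖f - b‖ + t * WNorm U r b ≤ 2 * Kfun U r t f := by
  rcases (Kfun_nonneg (U := U) (r := r) ht.le f).eq_or_lt with h | h
  · have h1 := min_mul_norm_le_Kfun (U := U) (r := r) ht.le f
    rw [← h] at h1
    have h2 : 0 < min 1 t := lt_min one_pos ht
    have h3 : ‖f‖ = 0 := le_antisymm (by
      by_contra! hc
      nlinarith [mul_pos h2 hc]) (norm_nonneg f)
    exact ⟨0, memW_zero r, by simp [WNorm_zero, h3, ← h]⟩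
  · obtain ⟨v, ⟨f₀, f₁, hf, hf₁, rfl⟩, hv⟩ := exists_lt_of_csInf_lt
      (⟨_, f, 0, (add_zero f).symm, memW_zero r, rfl⟩ : Set.Nonempty {v | ∃ f₀ f₁ : E,
        f = f₀ + f₁ ∧ memW U r f₁ ∧ v = ‖f₀‖ + t * WNorm U r f₁})
      (show Kfun U r t f < 2 * Kfun U r t f by linarith)
    refine ⟨f₁, hf₁, ?_⟩
    rw [show f - f₁ = f₀ by rw [hf, add_sub_cancel_right]]
    exact hv.le

theorem Kfun_add_le {r : ℕ} {t : ℝ} (ht : 0 ≤ t) (f g : E) :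
    Kfun U r t (f + g) ≤ Kfun U r t f + Kfun U r t g := by
  rw [← sub_le_iff_le_add]
  refine le_Kfun fun f₀ f₁ hf hf₁ => ?_
  rw [sub_le_iff_le_add, ← sub_le_iff_le_add']
  refine le_Kfun fun g₀ g₁ hg hg₁ => ?_
  rw [sub_le_iff_le_add']
  have h1 := Kfun_le (U := U) ht (f := f + g) (f₀ := f₀ + g₀) (f₁ := f₁ + g₁)
    (by rw [hf, hg]; abel) (memW_add hf₁ hg₁)
  have h2 := mul_le_mul_of_nonneg_left (WNorm_add_le hf₁ hg₁) ht
  have h3 := norm_add_le f₀ g₀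
  linarith

theorem KfunW_nonneg {k₁ k₂ : ℕ} {t : ℝ} (ht : 0 ≤ t) (f : E) : 0 ≤ KfunW U k₁ k₂ t f := by
  refine Real.sInf_nonneg ?_
  rintro v ⟨g₀, g₁, -, -, -, rfl⟩
  have := WNorm_nonneg U k₁ g₀
  have := WNorm_nonneg U k₂ g₁
  positivity

theorem KfunW_le {k₁ k₂ : ℕ} {t : ℝ} (ht : 0 ≤ t) {f f₀ f₁ : E} (hf : f = f₀ + f₁)
    (hf₀ : memW U k₁ f₀) (hf₁ : memW U k₂ f₁) :
    KfunW U k₁ k₂ t f ≤ WNorm U k₁ f₀ + t * WNorm U k₂ f₁ := by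
  refine csInf_le ⟨0, ?_⟩ ⟨f₀, f₁, hf, hf₀, hf₁, rfl⟩
  rintro v ⟨g₀, g₁, -, -, -, rfl⟩
  have := WNorm_nonneg U k₁ g₀
  have := WNorm_nonneg U k₂ g₁
  positivity

theorem le_KfunW {k₁ k₂ : ℕ} {t B : ℝ} {f : E} (hf : memW U k₁ f)
    (h : ∀ f₀ f₁ : E, f = f₀ + f₁ → memW U k₁ f₀ → memW U k₂ f₁ →
      B ≤ WNorm U k₁ f₀ + t * WNorm U k₂ f₁) : B ≤ KfunW U k₁ k₂ t f := by
  refine le_csInf ⟨_, f, 0, (add_zero f).symm, hf, memW_zero k₂, rfl⟩ ?_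
  rintro v ⟨g₀, g₁, hg, hg₀, hg₁, rfl⟩
  exact h g₀ g₁ hg hg₀ hg₁

/-- On `W^k` the extended norm is the real one. -/
theorem WNormE_of_memW {k : ℕ} {f : E} (hf : memW U k f) :
    WNormE U k f = ENNReal.ofReal (WNorm U k f) := by
  rw [WNormE, WNorm, ENNReal.ofReal_add (norm_nonneg _)
    (Finset.sum_nonneg fun _ _ => norm_nonneg _), ENNReal.ofReal_sum_of_nonneg
    fun _ _ => norm_nonneg _]
  congr 1
  refine Finset.sum_congr rfl fun c hc => ?_
  have h := hf c (Finset.mem_filter.1 hc).2.1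
  rw [dif_pos h, iterDerivVal, dif_pos h]

theorem WNormE_of_not_memW {k : ℕ} {f : E} (hf : ¬ memW U k f) : WNormE U k f = ⊤ := by
  simp only [memW, not_forall] at hf
  obtain ⟨c, hc, h⟩ := hf
  have hk : k ≠ 0 := by
    rintro rfl
    have : multiIndexList c = [] :=
      List.length_eq_zero_iff.1 ((length_multiIndexList c).trans hc)
    exact h ⟨f, by rw [this]; rfl⟩
  rw [WNormE, ENNReal.add_eq_top]
  right
  rw [ENNReal.sum_eq_top]
  refine ⟨c, ?_, dif_neg h⟩
  simp only [Finset.mem_filter, Fintype.mem_piFinset, Finset.mem_range]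
  refine ⟨fun j => ?_, hc, hk⟩
  have := Finset.single_le_sum (f := c) (fun _ _ => Nat.zero_le _) (Finset.mem_univ j)
  omega

variable {R : Type*} [CommRing R] [Module R E] {u a : Fin n → ℝ → R}

namespace IsCalculus

/-- Jackson inequality. The approximation is used for `s ≤ 1`, and the trivial decomposition
`g = g + 0` suffices for `s ≥ 1`. -/
theorem Kfun_le_WNorm (H : IsCalculus U u a) {k r : ℕ} (hk : k ≤ r) : ∃ C : ℝ, 0 < C ∧
    ∀ g : E, memW U k g → ∀ s : ℝ, 0 < s → Kfun U r (s ^ r) g ≤ C * (s ^ k * WNorm U k g) := by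
  obtain ⟨C, hC, h⟩ := H.exists_approx hk
  refine ⟨2 * C + 1, by positivity, fun g hg s hs => ?_⟩
  have hW := WNorm_nonneg U k g
  have hp : 0 ≤ s ^ k * WNorm U k g := by positivity
  rcases le_total s 1 with hs1 | hs1
  · obtain ⟨g₁, hg₁, e1, e2⟩ := h g hg s hs hs1
    have := Kfun_le (U := U) (t := s ^ r) (by positivity) (sub_add_cancel g g₁).symm hg₁
    linarith
  · have e1 := Kfun_le_norm (U := U) (r := r) (t := s ^ r) (by positivity) g
    have e2 := norm_le_WNorm U k g
    have e3 := mul_le_mul_of_nonneg_right (one_le_pow₀ (n := k) hs1) hW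
    have : 0 ≤ C * (s ^ k * WNorm U k g) := by positivity
    linarith

/-- The functional of `(E, W^r)` is dominated by that of `(W^{k₁}, W^{k₂})`: the Jackson inequality
applies to both parts of any decomposition of `f`. -/
theorem Kfun_le_KfunW (H : IsCalculus U u a) {k₁ k₂ r : ℕ} (h₁ : k₁ ≤ k₂) (h₂ : k₂ ≤ r) :
    ∃ C : ℝ, 0 < C ∧ ∀ f : E, memW U k₁ f → ∀ s : ℝ, 0 < s →
      Kfun U r (s ^ r) f ≤ C * (s ^ k₁ * KfunW U k₁ k₂ (s ^ (k₂ - k₁)) f) := by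
  obtain ⟨C₁, hC₁, e₁⟩ := H.Kfun_le_WNorm (h₁.trans h₂)
  obtain ⟨C₂, hC₂, e₂⟩ := H.Kfun_le_WNorm h₂
  refine ⟨C₁ + C₂, by positivity, fun f hf s hs => ?_⟩
  rw [← mul_assoc, ← div_le_iff₀' (by positivity)]
  refine le_KfunW hf fun f₀ f₁ h hf₀ hf₁ => ?_
  rw [div_le_iff₀' (by positivity), h]
  have i1 := Kfun_add_le (U := U) (r := r) (t := s ^ r) (by positivity) f₀ f₁
  have i2 := e₁ f₀ hf₀ s hs
  have i3 := e₂ f₁ hf₁ s hs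
  have i4 : s ^ k₂ = s ^ k₁ * s ^ (k₂ - k₁) := by rw [← pow_add, Nat.add_sub_cancel' h₁]
  rw [i4] at i3
  have p1 := WNorm_nonneg U k₁ f₀
  have p2 := WNorm_nonneg U k₂ f₁
  have p3 : 0 ≤ C₂ * (s ^ k₁ * WNorm U k₁ f₀) := by positivity
  have p4 : 0 ≤ C₁ * (s ^ k₁ * s ^ (k₂ - k₁) * WNorm U k₂ f₁) := by positivity
  linarith

/-- The limit of a sequence whose derivatives up to order `k` have summable increments belongs to `W^k`,
since the generators are closed. -/
theorem memW_of_summable (H : IsCalculus U u a) [CompleteSpace E] {k r : ℕ} (hk : k ≤ r)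
    {y : ℕ → E} {f : E} (hy : ∀ N, memW U r (y N)) (hlim : Tendsto y atTop (𝓝 f))
    {β : ℕ → ℝ} (hβ : Summable β) (hb : ∀ L : List (Fin n), L.length ≤ k → ∀ N,
      ‖iterDerivVal U L (y (N + 1)) - iterDerivVal U L (y N)‖ ≤ β N) :
    memW U k f ∧ ∀ L : List (Fin n), L.length ≤ k →
      ‖iterDerivVal U L f - iterDerivVal U L (y 0)‖ ≤ ∑' N, β N := by
  have hb' : ∀ L : List (Fin n), L.length ≤ k → ∀ N,
      dist (iterDerivVal U L (y N)) (iterDerivVal U L (y N.succ)) ≤ β N := by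
    intro L hL N
    rw [dist_comm, dist_eq_norm]
    exact hb L hL N
  have hlimL : ∀ L : List (Fin n), L.length ≤ k → ∃ g, IsIterDeriv U L f g ∧
      Tendsto (fun N => iterDerivVal U L (y N)) atTop (𝓝 g) := by
    intro L hL
    induction L with
    | nil =>
      refine ⟨f, rfl, hlim.congr fun N => ?_⟩
      exact (iterDerivVal_eq (g := y N) (by rfl)).symm
    | cons j L ih =>
      have hL' : L.length ≤ k := by simp at hL; omega
      obtain ⟨h, hh, hh'⟩ := ih hL'
      obtain ⟨g, hg⟩ := cauchySeq_tendsto_of_complete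
        (cauchySeq_of_dist_le_of_summable β (hb' _ hL) hβ)
      refine ⟨g, ⟨h, hh, H.genDeriv_closed (fun N => ?_) hh' hg⟩, hg⟩
      obtain ⟨x, hx, hx'⟩ := H.isIterDeriv_val (hy N) (hL.trans hk)
      rwa [← iterDerivVal_eq hx] at hx'
  refine ⟨fun c hc => ?_, fun L hL => ?_⟩
  · obtain ⟨g, hg, -⟩ := hlimL (multiIndexList c) (by rw [length_multiIndexList, hc])
    exact ⟨g, hg⟩
  · obtain ⟨g, hg, hg'⟩ := hlimL L hL
    rw [iterDerivVal_eq hg, ← dist_eq_norm, dist_comm]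
    exact dist_le_tsum_of_dist_le_of_tendsto₀ β (hb' L hL) hβ hg'

/-- A family of near-minimizers `b(x)` for `K(e^{xr}, f)`, zero for `x ≥ 0`, whose increments have
derivatives controlled by the functional through `norm_val_le`. -/
theorem exists_near_family (H : IsCalculus U u a) (r : ℕ) : ∃ C : ℝ, 0 < C ∧ ∀ f : E,
    ∃ b : ℝ → E, (∀ x, memW U r (b x)) ∧ (∀ x, 0 ≤ x → b x = 0) ∧
      (∀ x, ‖f - b x‖ ≤ C * Kfun U r (Real.exp x ^ r) f) ∧
      ∀ x (L : List (Fin n)), L.length ≤ r →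
        ‖iterDerivVal U L (b (x - 1)) - iterDerivVal U L (b x)‖ ≤
          C * ((Real.exp x)⁻¹ ^ L.length * Kfun U r (Real.exp x ^ r) f) := by
  obtain ⟨C, hC, hJ⟩ := H.norm_val_le r
  have he : 0 < Real.exp 1 ^ r := by positivity
  refine ⟨C * (6 + 2 * Real.exp 1 ^ r) + 2, by positivity, fun f => ?_⟩
  have hex : ∀ x : ℝ, ∃ b : E, memW U r b ∧ (0 ≤ x → b = 0) ∧
      ‖f - b‖ + Real.exp x ^ r * WNorm U r b ≤ 2 * Kfun U r (Real.exp x ^ r) f := by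
    intro x
    -- for `x ≥ 0` the functional dominates `‖f‖`, so that `0` is a near-minimizer
    rcases le_or_gt 0 x with hx | hx
    · refine ⟨0, memW_zero r, fun _ => rfl, ?_⟩
      have h1 : (1 : ℝ) ≤ Real.exp x ^ r := one_le_pow₀ (Real.one_le_exp hx)
      have h2 := min_mul_norm_le_Kfun (U := U) (r := r) (t := Real.exp x ^ r) (by positivity) f
      rw [min_eq_left h1, one_mul] at h2
      rw [WNorm_zero, sub_zero, mul_zero, add_zero]
      linarith [norm_nonneg f]
    · obtain ⟨b, hb, hb'⟩ := exists_near (U := U) (r := r) (t := Real.exp x ^ r) (by positivity) f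
      exact ⟨b, hb, fun h => absurd h (not_le.2 hx), hb'⟩
  choose b hb hb0 hbK using hex
  have hK : ∀ x, 0 ≤ Kfun U r (Real.exp x ^ r) f := fun x => Kfun_nonneg (by positivity) f
  have hnear : ∀ x, ‖f - b x‖ ≤ 2 * Kfun U r (Real.exp x ^ r) f := fun x => by
    have := hbK x
    have : 0 ≤ Real.exp x ^ r * WNorm U r (b x) := by
      have := WNorm_nonneg U r (b x)
      positivity
    linarith
  refine ⟨b, hb, hb0, fun x => ?_, fun x L hL => ?_⟩
  · refine (hnear x).trans (mul_le_mul_of_nonneg_right ?_ (hK x))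
    have : 0 ≤ C * (6 + 2 * Real.exp 1 ^ r) := by positivity
    linarith
  · have hu := IsCalculus.memW_sub (hb (x - 1)) (hb x)
    have hD := IsIterDeriv.sub (H.isIterDeriv_val (hb (x - 1)) hL) (H.isIterDeriv_val (hb x) hL)
    have h0 := hJ _ hu L hL (Real.exp x) (Real.exp_pos x)
    rw [iterDerivVal_eq hD] at h0
    have hmono : Kfun U r (Real.exp (x - 1) ^ r) f ≤ Kfun U r (Real.exp x ^ r) f :=
      Kfun_mono (by positivity) (pow_le_pow_left₀ (Real.exp_pos _).le
        (Real.exp_le_exp.2 (by linarith)) r) f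
    have h1 : ‖b (x - 1) - b x‖ ≤ 4 * Kfun U r (Real.exp x ^ r) f := by
      have e1 := norm_sub_le (f - b x) (f - b (x - 1))
      rw [_root_.sub_sub_sub_cancel_left] at e1
      linarith [hnear x, hnear (x - 1)]
    have h2 : Real.exp x ^ r * WNorm U r (b (x - 1) - b x) ≤
        (2 + 2 * Real.exp 1 ^ r) * Kfun U r (Real.exp x ^ r) f := by
      have e1 := mul_le_mul_of_nonneg_left (WNorm_sub_le (hb (x - 1)) (hb x))
        (by positivity : 0 ≤ Real.exp x ^ r)
      have e2 : Real.exp x ^ r = Real.exp 1 ^ r * Real.exp (x - 1) ^ r := by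
        rw [← mul_pow, ← Real.exp_add]; congr 2; ring
      have e3 : Real.exp (x - 1) ^ r * WNorm U r (b (x - 1)) ≤ 2 * Kfun U r (Real.exp x ^ r) f := by
        linarith [hbK (x - 1), norm_nonneg (f - b (x - 1))]
      have e4 : Real.exp x ^ r * WNorm U r (b x) ≤ 2 * Kfun U r (Real.exp x ^ r) f := by
        linarith [hbK x, norm_nonneg (f - b x)]
      have e5 := mul_le_mul_of_nonneg_left e3 he.le
      rw [← mul_assoc, ← e2] at e5
      linarith
    refine h0.trans ?_
    have e6 : Real.exp x ^ (r - L.length) = (Real.exp x)⁻¹ ^ L.length * Real.exp x ^ r := by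
      rw [inv_pow, eq_inv_mul_iff_mul_eq₀ (by positivity), ← pow_add, Nat.add_sub_cancel' hL]
    rw [e6, mul_assoc, ← mul_add]
    have hi : 0 < (Real.exp x)⁻¹ ^ L.length := by positivity
    have hq := mul_nonneg hi.le (hK x)
    calc C * ((Real.exp x)⁻¹ ^ L.length *
          (‖b (x - 1) - b x‖ + Real.exp x ^ r * WNorm U r (b (x - 1) - b x)))
        ≤ C * ((Real.exp x)⁻¹ ^ L.length *
          ((6 + 2 * Real.exp 1 ^ r) * Kfun U r (Real.exp x ^ r) f)) := by
          refine mul_le_mul_of_nonneg_left (mul_le_mul_of_nonneg_left ?_ hi.le) hC.le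
          linarith
      _ ≤ _ := by linarith

end IsCalculus
end KFunctional

/-! ### Telescoping sums of near-minimizers -/

section Telescoping

variable {E : Type*} [NormedAddCommGroup E] [NormedSpace ℂ E] {n : ℕ}

/-- The sum `∑_{i ≥ 0} e^{-(x-i)k} K(e^{(x-i)r}, f)` over the scales below `e^x`, inclusive. -/
def lowSum (U : Fin n → ℝ → E →L[ℂ] E) (r k : ℕ) (f : E) (x : ℝ) : ℝ≥0∞ :=
  ∑' i : ℕ, ENNReal.ofReal ((Real.exp (x - i))⁻¹ ^ k * Kfun U r (Real.exp (x - i) ^ r) f)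

/-- The sum `∑_{i ≥ 1} e^{-(x+i)k} K(e^{(x+i)r}, f)` over the scales above `e^x`. -/
def highSum (U : Fin n → ℝ → E →L[ℂ] E) (r k : ℕ) (f : E) (x : ℝ) : ℝ≥0∞ :=
  ∑' i : ℕ, ENNReal.ofReal ((Real.exp (x + (i + 1)))⁻¹ ^ k *
    Kfun U r (Real.exp (x + (i + 1)) ^ r) f)

/-- At scales bounded above, the weight of a lower order derivative is dominated by that of order
`k`. -/
theorem inv_exp_pow_le {l k : ℕ} (h : l ≤ k) {y : ℝ} (hy : y ≤ 1) :
    (Real.exp y)⁻¹ ^ l ≤ Real.exp 1 ^ k * (Real.exp y)⁻¹ ^ k := by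
  rw [← Real.exp_neg, ← mul_pow, ← Real.exp_add]
  calc Real.exp (-y) ^ l ≤ Real.exp (1 + -y) ^ l :=
        pow_le_pow_left₀ (Real.exp_pos _).le (Real.exp_le_exp.2 (by linarith)) _
    _ ≤ Real.exp (1 + -y) ^ k := pow_le_pow_right₀ (Real.one_le_exp (by linarith)) h

namespace IsCalculus

variable {R : Type*} [CommRing R] [Module R E] {u a : Fin n → ℝ → R}
  {U : Fin n → ℝ → E →L[ℂ] E}

/-- Telescoping towards small scales: if the sum is finite, `b(x - N) → f` with summable increments of
the derivatives up to order `k`. Hence `f ∈ W^k`, with an estimate for the derivatives of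
`f - b(x)`. -/
theorem norm_sub_le_lowSum (H : IsCalculus U u a) [CompleteSpace E] {k r : ℕ} (hk : k ≤ r)
    {C : ℝ} (hC : 0 ≤ C) {f : E} {b : ℝ → E} (hb : ∀ x, memW U r (b x))
    (hnear : ∀ x, ‖f - b x‖ ≤ C * Kfun U r (Real.exp x ^ r) f)
    (hstep : ∀ x (L : List (Fin n)), L.length ≤ r →
      ‖iterDerivVal U L (b (x - 1)) - iterDerivVal U L (b x)‖ ≤
        C * ((Real.exp x)⁻¹ ^ L.length * Kfun U r (Real.exp x ^ r) f))
    {x : ℝ} (hx : x ≤ 1) (hG : lowSum U r k f x ≠ ⊤) :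
    memW U k f ∧ ∀ L : List (Fin n), L.length ≤ k →
      ‖iterDerivVal U L f - iterDerivVal U L (b x)‖ ≤
        C * Real.exp 1 ^ k * (lowSum U r k f x).toReal := by
  set γ : ℕ → ℝ := fun i => (Real.exp (x - i))⁻¹ ^ k * Kfun U r (Real.exp (x - i) ^ r) f with hγ
  have hK : ∀ y, 0 ≤ Kfun U r (Real.exp y ^ r) f := fun y => Kfun_nonneg (by positivity) f
  have hγ0 : ∀ i, 0 ≤ γ i := fun i => mul_nonneg (by positivity) (hK _)
  have hsum : Summable γ := by
    refine (ENNReal.summable_toReal hG).congr fun i => ?_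
    rw [ENNReal.toReal_ofReal (hγ0 i)]
  have htsum : (lowSum U r k f x).toReal = ∑' i, γ i := by
    rw [lowSum, ← ENNReal.ofReal_tsum_of_nonneg hγ0 hsum, ENNReal.toReal_ofReal (tsum_nonneg hγ0)]
  have hsmall : ∀ (i l : ℕ), l ≤ k → C * ((Real.exp (x - i))⁻¹ ^ l *
      Kfun U r (Real.exp (x - i) ^ r) f) ≤ C * Real.exp 1 ^ k * γ i := by
    intro i l hl
    rw [mul_assoc C, hγ, ← mul_assoc (_ ^ k)]
    refine mul_le_mul_of_nonneg_left (mul_le_mul_of_nonneg_right ?_ (hK _)) hC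
    refine inv_exp_pow_le hl ?_
    have : (0 : ℝ) ≤ i := Nat.cast_nonneg i
    linarith
  have hβ : Summable fun i => C * Real.exp 1 ^ k * γ i := hsum.mul_left _
  have hlim : Tendsto (fun N : ℕ => b (x - N)) atTop (𝓝 f) := by
    rw [tendsto_iff_norm_sub_tendsto_zero]
    refine squeeze_zero (fun _ => norm_nonneg _) (fun N => ?_) hβ.tendsto_atTop_zero
    rw [norm_sub_rev]
    have := hsmall N 0 (Nat.zero_le k)
    rw [pow_zero, one_mul] at this
    exact (hnear _).trans this
  obtain ⟨h1, h2⟩ := H.memW_of_summable hk (fun N => hb _) hlim hβ (fun L hL N => by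
    have := hstep (x - N) L (hL.trans hk)
    rw [sub_sub, ← Nat.cast_succ] at this
    exact this.trans (hsmall N _ hL))
  refine ⟨h1, fun L hL => ?_⟩
  have := h2 L hL
  rwa [Nat.cast_zero, sub_zero, tsum_mul_left, ← htsum] at this

/-- Telescoping towards large scales: the sum from `b(x)` is finite because `b` vanishes on
`[0, ∞)`. -/
theorem norm_val_le_highSum {k r : ℕ} (hk : k ≤ r)
    {C : ℝ} (hC : 0 ≤ C) {f : E} {b : ℝ → E} (hb0 : ∀ x, 0 ≤ x → b x = 0)
    (hstep : ∀ x (L : List (Fin n)), L.length ≤ r →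
      ‖iterDerivVal U L (b (x - 1)) - iterDerivVal U L (b x)‖ ≤
        C * ((Real.exp x)⁻¹ ^ L.length * Kfun U r (Real.exp x ^ r) f))
    (x : ℝ) (L : List (Fin n)) (hL : L.length = k) :
    ENNReal.ofReal ‖iterDerivVal U L (b x)‖ ≤ ENNReal.ofReal C * highSum U r k f x := by
  have hK : ∀ y, 0 ≤ Kfun U r (Real.exp y ^ r) f := fun y => Kfun_nonneg (by positivity) f
  have htel : ∀ m : ℕ, ENNReal.ofReal ‖iterDerivVal U L (b x)‖ ≤
      ENNReal.ofReal ‖iterDerivVal U L (b (x + m))‖ + ENNReal.ofReal C *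
        ∑ i ∈ Finset.range m, ENNReal.ofReal ((Real.exp (x + (i + 1)))⁻¹ ^ k *
          Kfun U r (Real.exp (x + (i + 1)) ^ r) f) := by
    intro m
    induction m with
    | zero => simp
    | succ m ih =>
      refine ih.trans ?_
      rw [Finset.sum_range_succ, mul_add, ← ENNReal.ofReal_mul hC, add_comm (ENNReal.ofReal C * _),
        ← add_assoc]
      gcongr
      rw [← ENNReal.ofReal_add (norm_nonneg _)
        (mul_nonneg hC (mul_nonneg (by positivity) (hK _)))]
      refine ENNReal.ofReal_le_ofReal ?_
      have h1 := hstep (x + (m + 1)) L (hL.le.trans hk)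
      rw [show x + ((m : ℝ) + 1) - 1 = x + m by ring, hL] at h1
      have h2 := norm_le_norm_add_norm_sub' (iterDerivVal U L (b (x + m)))
        (iterDerivVal U L (b (x + ((m : ℝ) + 1))))
      push_cast
      linarith
  obtain ⟨m, hm⟩ := exists_nat_ge (-x)
  refine (htel m).trans ?_
  rw [hb0 _ (by linarith), iterDerivVal_zero, norm_zero, ENNReal.ofReal_zero, zero_add]
  gcongr
  exact ENNReal.sum_le_tsum _

/-- For `0 ≤ x ≤ 1` the element `b(x)` is zero, so the estimate for `f - b(x)` bounds the norm of `f` in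
`W^{k₁}`. For `x ≤ 0` the decomposition `f = (f - b(x)) + b(x)` bounds the functional of
`(W^{k₁}, W^{k₂})`. -/
theorem exists_KfunW_le (H : IsCalculus U u a) [CompleteSpace E] {k₁ k₂ r : ℕ}
    (h₁ : k₁ ≤ k₂) (h₂ : k₂ ≤ r) : ∃ C : ℝ, 0 < C ∧ ∀ f : E,
      (∀ x : ℝ, 0 ≤ x → x ≤ 1 →
        WNormE U k₁ f ≤ ENNReal.ofReal C * (ENNReal.ofReal ‖f‖ + lowSum U r k₁ f x)) ∧
      ∀ x : ℝ, x ≤ 0 → ENNReal.ofReal (KfunW U k₁ k₂ (Real.exp x ^ (k₂ - k₁)) f) ≤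
        ENNReal.ofReal C * (lowSum U r k₁ f x + ENNReal.ofReal (Real.exp x ^ (k₂ - k₁)) *
          (ENNReal.ofReal ‖f‖ + highSum U r k₂ f x)) := by
  obtain ⟨C, hC, h⟩ := H.exists_near_family r
  set A : ℝ := C * Real.exp 1 ^ k₁ with hA
  have hA0 : 0 < A := by positivity
  obtain ⟨c₁, hc₁⟩ : ∃ c : ℝ, c = (indexSet n k₁).card := ⟨_, rfl⟩
  obtain ⟨c₂, hc₂⟩ : ∃ c : ℝ, c = (indexSet n k₂).card := ⟨_, rfl⟩
  have hc₁0 : 0 ≤ c₁ := hc₁ ▸ Nat.cast_nonneg _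
  have hc₂0 : 0 ≤ c₂ := hc₂ ▸ Nat.cast_nonneg _
  set D : ℝ := 1 + c₁ * A + A + C + c₂ * C with hD
  have hcA : 0 ≤ c₁ * A := by positivity
  have hcC : 0 ≤ c₂ * C := by positivity
  have hD0 : 0 < D := by positivity
  refine ⟨D, hD0, fun f => ?_⟩
  obtain ⟨b, hb, hb0, hnear, hstep⟩ := h f
  have hDtop : ENNReal.ofReal D ≠ 0 := by simpa using hD0
  have hlow : ∀ x : ℝ, x ≤ 1 → lowSum U r k₁ f x ≠ ⊤ → memW U k₁ f ∧ ∀ L : List (Fin n),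
      L.length ≤ k₁ → ‖iterDerivVal U L f - iterDerivVal U L (b x)‖ ≤
        A * (lowSum U r k₁ f x).toReal := fun x hx hG =>
    H.norm_sub_le_lowSum (h₁.trans h₂) hC.le hb hnear hstep hx hG
  refine ⟨fun x hx0 hx1 => ?_, fun x hx => ?_⟩
  · by_cases hG : lowSum U r k₁ f x = ⊤
    · rw [hG, add_top, ENNReal.mul_top hDtop]
      exact le_top
    · obtain ⟨hf, hval⟩ := hlow x hx1 hG
      set g := (lowSum U r k₁ f x).toReal with hg
      have hg0 : 0 ≤ g := ENNReal.toReal_nonneg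
      rw [WNormE_of_memW hf, ← ENNReal.ofReal_toReal hG, ← hg,
        ← ENNReal.ofReal_add (norm_nonneg f) hg0, ← ENNReal.ofReal_mul hD0.le]
      refine ENNReal.ofReal_le_ofReal ?_
      have h3 := WNorm_le U k₁ f (A * g) fun L hL => by
        have := hval L hL.le
        rwa [hb0 x hx0, iterDerivVal_zero, sub_zero] at this
      have p1 : 0 ≤ (c₁ * A) * ‖f‖ := mul_nonneg hcA (norm_nonneg f)
      have p2 : 0 ≤ (A + C + c₂ * C) * ‖f‖ := mul_nonneg (by positivity) (norm_nonneg f)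
      have p3 : 0 ≤ (1 + A + C + c₂ * C) * g := mul_nonneg (by positivity) hg0
      rw [← hc₁] at h3
      linarith
  · by_cases hG : lowSum U r k₁ f x = ⊤
    · rw [hG, top_add, ENNReal.mul_top hDtop]
      exact le_top
    · obtain ⟨hf, hval⟩ := hlow x (hx.trans zero_le_one) hG
      by_cases hS : highSum U r k₂ f x = ⊤
      · have : ENNReal.ofReal (Real.exp x ^ (k₂ - k₁)) ≠ 0 := by
          simpa using pow_pos (Real.exp_pos x) _
        rw [hS, add_top, ENNReal.mul_top this, add_top, ENNReal.mul_top hDtop]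
        exact le_top
      set g := (lowSum U r k₁ f x).toReal with hg
      set σ := (highSum U r k₂ f x).toReal with hσ
      set t : ℝ := Real.exp x ^ (k₂ - k₁) with ht
      have hg0 : 0 ≤ g := ENNReal.toReal_nonneg
      have hσ0 : 0 ≤ σ := ENNReal.toReal_nonneg
      have ht0 : 0 < t := by positivity
      rw [← ENNReal.ofReal_toReal hG, ← ENNReal.ofReal_toReal hS, ← hg, ← hσ,
        ← ENNReal.ofReal_add (norm_nonneg f) hσ0, ← ENNReal.ofReal_mul ht0.le,
        ← ENNReal.ofReal_add hg0 (mul_nonneg ht0.le (add_nonneg (norm_nonneg f) hσ0)),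
        ← ENNReal.ofReal_mul hD0.le]
      refine ENNReal.ofReal_le_ofReal ?_
      have hbk₁ := H.memW_of_le (hb x) (h₁.trans h₂)
      have hbk₂ := H.memW_of_le (hb x) h₂
      have e1 := KfunW_le (U := U) ht0.le (sub_add_cancel f (b x)).symm
        (IsCalculus.memW_sub hf hbk₁) hbk₂
      have e2 := WNorm_le U k₁ (f - b x) (A * g) fun L hL => by
        rw [iterDerivVal_eq (IsIterDeriv.sub (H.isIterDeriv_val hf hL.le)
          (H.isIterDeriv_val hbk₁ hL.le))]
        exact hval L hL.le
      have e3 : ‖f - b x‖ ≤ A * g := by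
        have := hval [] (Nat.zero_le _)
        rwa [iterDerivVal_eq (f := f) (g := f) (by rfl),
          iterDerivVal_eq (f := b x) (g := b x) (by rfl)] at this
      have e4 := WNorm_le U k₂ (b x) (C * σ) fun L hL => by
        have := norm_val_le_highSum h₂ hC.le hb0 hstep x L hL
        rw [← ENNReal.ofReal_toReal hS, ← hσ, ← ENNReal.ofReal_mul hC.le] at this
        exact (ENNReal.ofReal_le_ofReal_iff (by positivity)).1 this
      have e5 : ‖b x‖ ≤ (1 + C) * ‖f‖ := by
        have i1 := hnear x
        have i2 := Kfun_le_norm (U := U) (r := r) (t := Real.exp x ^ r) (by positivity) f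
        have i3 := norm_le_norm_add_norm_sub' (b x) f
        rw [norm_sub_rev] at i3
        have := mul_le_mul_of_nonneg_left i2 hC.le
        linarith
      rw [← hc₁] at e2
      rw [← hc₂] at e4
      have e6 : t * WNorm U k₂ (b x) ≤ t * ((1 + C) * ‖f‖ + c₂ * (C * σ)) :=
        mul_le_mul_of_nonneg_left (by linarith) ht0.le
      have p1 : 0 ≤ (1 + C + c₂ * C) * g := mul_nonneg (by positivity) hg0
      have p2 : 0 ≤ (c₁ * A + A + c₂ * C) * (t * ‖f‖) := by positivity
      have p3 : 0 ≤ (1 + c₁ * A + A + C) * (t * σ) := by positivity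
      rw [hD]
      linarith

theorem KfunW_le_WNormE {k₁ k₂ : ℕ} {t : ℝ} (ht : 0 ≤ t) (f : E) :
    ENNReal.ofReal (KfunW U k₁ k₂ t f) ≤ WNormE U k₁ f := by
  by_cases hf : memW U k₁ f
  · rw [WNormE_of_memW hf]
    refine ENNReal.ofReal_le_ofReal ?_
    have := KfunW_le (U := U) ht (add_zero f).symm hf (memW_zero k₂)
    simpa [WNorm_zero] using this
  · rw [WNormE_of_not_memW hf]
    exact le_top

end IsCalculus
end Telescoping

/-! ### Integral inequalities on the line -/

section Minkowski

/-- The `L^q` norm on the line of a nonnegative extended real function. -/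
def lq (q : ℝ) (g : ℝ → ℝ≥0∞) : ℝ≥0∞ := (∫⁻ x, g x ^ q) ^ (1 / q)

variable {q : ℝ}

theorem lq_mono (hq : 1 ≤ q) {g h : ℝ → ℝ≥0∞} (H : ∀ x, g x ≤ h x) : lq q g ≤ lq q h := by
  unfold lq
  gcongr with x
  exact H x

theorem lq_add_le (hq : 1 ≤ q) {g h : ℝ → ℝ≥0∞} (hg : Measurable g) (hh : Measurable h) :
    lq q (fun x => g x + h x) ≤ lq q g + lq q h :=
  ENNReal.lintegral_Lp_add_le hg.aemeasurable hh.aemeasurable hq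

theorem lq_const_mul (hq : 1 ≤ q) {g : ℝ → ℝ≥0∞} (hg : Measurable g) (c : ℝ≥0∞) :
    lq q (fun x => c * g x) = c * lq q g := by
  have hq0 : 0 < q := by linarith
  unfold lq
  simp_rw [ENNReal.mul_rpow_of_nonneg _ _ hq0.le]
  rw [lintegral_const_mul _ (hg.pow_const q), ENNReal.mul_rpow_of_nonneg _ _ (by positivity),
    ← ENNReal.rpow_mul, mul_one_div_cancel hq0.ne', ENNReal.rpow_one]

theorem lq_shift (g : ℝ → ℝ≥0∞) (c : ℝ) : lq q (fun x => g (x + c)) = lq q g := by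
  unfold lq
  rw [lintegral_add_right_eq_self (fun x => g x ^ q) c]

theorem lq_tsum_le (hq : 1 ≤ q) {g : ℕ → ℝ → ℝ≥0∞} (hg : ∀ i, Measurable (g i)) :
    lq q (fun x => ∑' i, g i x) ≤ ∑' i, lq q (g i) := by
  have hq0 : 0 < q := by linarith
  have hfin : ∀ m : ℕ, lq q (fun x => ∑ i ∈ Finset.range m, g i x) ≤
      ∑ i ∈ Finset.range m, lq q (g i) := by
    intro m
    induction m with
    | zero => simp [lq, hq0]
    | succ m ih =>
      simp_rw [Finset.sum_range_succ]
      refine (lq_add_le hq (Finset.measurable_fun_sum _ fun i _ => hg i) (hg m)).trans ?_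
      gcongr
  have hmono : Monotone fun (m : ℕ) (x : ℝ) => (∑ i ∈ Finset.range m, g i x) ^ q := by
    intro m m' h x
    exact ENNReal.rpow_le_rpow (Finset.sum_le_sum_of_subset (Finset.range_mono h)) hq0.le
  have hsup : ∀ x, (∑' i, g i x) ^ q = ⨆ m : ℕ, (∑ i ∈ Finset.range m, g i x) ^ q := by
    intro x
    rw [ENNReal.tsum_eq_iSup_nat]
    exact (ENNReal.orderIsoRpow q hq0).map_iSup _
  have hint : ∫⁻ x, (∑' i, g i x) ^ q = ⨆ m : ℕ, ∫⁻ x, (∑ i ∈ Finset.range m, g i x) ^ q := by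
    simp_rw [hsup]
    exact lintegral_iSup
      (fun m => (Finset.measurable_fun_sum _ fun i _ => hg i).pow_const q) hmono
  rw [lq, hint]
  refine ((ENNReal.orderIsoRpow (1 / q) (by positivity)).map_iSup _).trans_le ?_
  exact iSup_le fun m => (hfin m).trans (ENNReal.sum_le_tsum _)

/-- Minkowski's inequality for a weighted sum of shifts: a discrete Hardy inequality. -/
theorem lq_tsum_shift_le (hq : 1 ≤ q) {g : ℝ → ℝ≥0∞} (hg : Measurable g) (w : ℕ → ℝ≥0∞)
    (c : ℕ → ℝ) : lq q (fun x => ∑' i, w i * g (x + c i)) ≤ (∑' i, w i) * lq q g := by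
  refine (lq_tsum_le hq fun i => (hg.comp (measurable_id.add_const (c i))).const_mul (w i)).trans ?_
  rw [← ENNReal.tsum_mul_right]
  refine ENNReal.tsum_le_tsum fun i => ?_
  exact ((lq_const_mul hq (hg.comp (measurable_id.add_const (c i))) (w i)).trans
    (congrArg _ (lq_shift g (c i)))).le

theorem tsum_exp_ne_top {β : ℝ} (hβ : 0 < β) :
    ∑' i : ℕ, ENNReal.ofReal (Real.exp (-(β * i))) ≠ ⊤ := by
  have h : Summable fun i : ℕ => Real.exp (-(β * i)) := by
    refine (summable_geometric_of_lt_one (Real.exp_pos (-β)).le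
      (Real.exp_lt_one_iff.2 (neg_lt_zero.2 hβ))).congr fun i => ?_
    rw [← Real.exp_nat_mul]
    congr 1
    ring
  rw [← ENNReal.ofReal_tsum_of_nonneg (fun _ => (Real.exp_pos _).le) h]
  exact ENNReal.ofReal_ne_top

theorem lq_exp_ne_top (hq : 1 ≤ q) {β : ℝ} (hβ : 0 < β) :
    lq q ((Set.Ici (0 : ℝ)).indicator fun x => ENNReal.ofReal (Real.exp (-(β * x)))) ≠ ⊤ := by
  have hq0 : 0 < q := by linarith
  refine ENNReal.rpow_ne_top_of_nonneg (by positivity) ?_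
  have h : ∀ x : ℝ, (Set.Ici (0 : ℝ)).indicator
      (fun x => ENNReal.ofReal (Real.exp (-(β * x)))) x ^ q =
      (Set.Ici (0 : ℝ)).indicator (fun x => ENNReal.ofReal (Real.exp (-(q * β) * x))) x := by
    intro x
    by_cases hx : x ∈ Set.Ici (0 : ℝ)
    · rw [Set.indicator_of_mem hx, Set.indicator_of_mem hx,
        ENNReal.ofReal_rpow_of_pos (Real.exp_pos _), ← Real.exp_mul]
      congr 2
      ring
    · rw [Set.indicator_of_notMem hx, Set.indicator_of_notMem hx, ENNReal.zero_rpow_of_pos hq0]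
  simp_rw [h]
  rw [lintegral_indicator measurableSet_Ici, setLIntegral_congr Ioi_ae_eq_Ici.symm]
  have hi := exp_neg_integrableOn_Ioi 0 (mul_pos hq0 hβ)
  refine ne_of_lt (lt_of_le_of_lt (lintegral_mono fun x => ?_) hi.2)
  rw [Real.enorm_eq_ofReal (Real.exp_pos _).le]

theorem lq_exp_neg_ne_top (hq : 1 ≤ q) {β : ℝ} (hβ : 0 < β) :
    lq q ((Set.Iic (0 : ℝ)).indicator fun x => ENNReal.ofReal (Real.exp (β * x))) ≠ ⊤ := by
  have h := lq_exp_ne_top hq hβ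
  rw [lq, ← lintegral_neg_eq_self] at h
  simpa only [lq, Set.indicator, Set.mem_Iic, Set.mem_Ici, Left.nonneg_neg_iff, mul_neg, neg_neg]
    using h

/-- A constant lower bound on the unit interval passes to the `L^q` norm there. -/
theorem le_lq_of_unit (hq : 1 ≤ q) {W : ℝ≥0∞} {g : ℝ → ℝ≥0∞} (h : ∀ x, 0 ≤ x → x ≤ 1 → W ≤ g x) :
    W ≤ lq q ((Set.Icc (0 : ℝ) 1).indicator g) := by
  have hq0 : 0 < q := by linarith
  have h1 : W ^ q ≤ ∫⁻ x, (Set.Icc (0 : ℝ) 1).indicator g x ^ q := by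
    calc W ^ q = ∫⁻ x in Set.Icc (0 : ℝ) 1, W ^ q := by simp
      _ = ∫⁻ x, (Set.Icc (0 : ℝ) 1).indicator (fun _ => W ^ q) x :=
          (lintegral_indicator measurableSet_Icc _).symm
      _ ≤ _ := by
          refine lintegral_mono fun x => ?_
          by_cases hx : x ∈ Set.Icc (0 : ℝ) 1
          · simp only [Set.indicator_of_mem hx]
            exact ENNReal.rpow_le_rpow (h x hx.1 hx.2) hq0.le
          · simp only [Set.indicator_of_notMem hx, zero_le]
  calc W = (W ^ q) ^ (1 / q) := by
        rw [← ENNReal.rpow_mul, mul_one_div_cancel hq0.ne', ENNReal.rpow_one]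
    _ ≤ _ := ENNReal.rpow_le_rpow h1 (by positivity)

theorem lq_unit (hq : 1 ≤ q) : lq q ((Set.Icc (0 : ℝ) 1).indicator fun _ => 1) = 1 := by
  have hq0 : 0 < q := by linarith
  have h : ∀ x : ℝ, (Set.Icc (0 : ℝ) 1).indicator (fun _ => (1 : ℝ≥0∞)) x ^ q =
      (Set.Icc (0 : ℝ) 1).indicator (fun _ => 1) x := by
    intro x
    by_cases hx : x ∈ Set.Icc (0 : ℝ) 1
    · simp [Set.indicator_of_mem hx]
    · simp [Set.indicator_of_notMem hx, hq0]
  simp_rw [lq, h]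
  rw [lintegral_indicator measurableSet_Icc]
  simp

/-- The substitution `t = e^{mx}`, under which `dt/t` becomes `m dx`. -/
theorem lintegral_Ioi_eq_lq (hq : 1 ≤ q) {m : ℕ} (hm : 0 < m) (γ : ℝ) {F : ℝ → ℝ}
    (hF : ∀ t, 0 < t → 0 ≤ F t) :
    (∫⁻ t in Set.Ioi (0 : ℝ), ENNReal.ofReal ((t ^ (-(γ / (m : ℝ))) * F t) ^ q / t)) ^ (1 / q) =
      ENNReal.ofReal m ^ (1 / q) *
        lq q fun x => ENNReal.ofReal (Real.exp (-(γ * x)) * F (Real.exp x ^ m)) := by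
  have hq0 : 0 < q := by linarith
  have hm' : (0 : ℝ) < m := Nat.cast_pos.2 hm
  have himg : (fun x : ℝ => Real.exp (m * x)) '' Set.univ = Set.Ioi 0 := by
    ext t
    simp only [Set.image_univ, Set.mem_range, Set.mem_Ioi]
    constructor
    · rintro ⟨x, rfl⟩
      exact Real.exp_pos _
    · intro ht
      exact ⟨Real.log t / m, by rw [mul_div_cancel₀ _ hm'.ne', Real.exp_log ht]⟩
  have hder : ∀ x ∈ (Set.univ : Set ℝ), HasDerivWithinAt (fun x : ℝ => Real.exp (m * x))
      (Real.exp (m * x) * m) Set.univ x := by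
    intro x _
    have := ((hasDerivAt_id x).const_mul (m : ℝ)).exp
    simpa using this
  have hinj : Set.InjOn (fun x : ℝ => Real.exp (m * x)) Set.univ := by
    intro x _ y _ h
    exact mul_left_cancel₀ hm'.ne' (Real.exp_injective h)
  rw [← himg, lintegral_image_eq_lintegral_abs_deriv_mul MeasurableSet.univ hder hinj,
    Measure.restrict_univ, lq, ← ENNReal.mul_rpow_of_nonneg _ _ (by positivity : 0 ≤ 1 / q),
    ← lintegral_const_mul' _ _ ENNReal.ofReal_ne_top]
  congr 1
  refine lintegral_congr fun x => ?_
  have hA : 0 ≤ Real.exp (-(γ * x)) * F (Real.exp x ^ m) :=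
    mul_nonneg (Real.exp_pos _).le (hF _ (by positivity))
  have e1 : Real.exp (m * x) ^ (-(γ / (m : ℝ))) = Real.exp (-(γ * x)) := by
    rw [← Real.exp_mul]
    congr 1
    field_simp
  rw [e1, Real.exp_nat_mul, abs_of_pos (by positivity), ENNReal.ofReal_rpow_of_nonneg hA hq0.le,
    ← ENNReal.ofReal_mul (by positivity), ← ENNReal.ofReal_mul hm'.le]
  congr 1
  field_simp

end Minkowski

/-! ### Equivalence of the interpolation norms -/

section Equivalence

variable {E : Type*} [NormedAddCommGroup E] [NormedSpace ℂ E] {n : ℕ}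

/-- The function `e^{-αx} K(e^{rx}, f)`, whose `L^q` norm is, up to a factor, the K-method seminorm for
`(E, W^r)`. -/
def wK (U : Fin n → ℝ → E →L[ℂ] E) (r : ℕ) (α : ℝ) (f : E) (x : ℝ) : ℝ≥0∞ :=
  ENNReal.ofReal (Real.exp (-(α * x)) * Kfun U r (Real.exp x ^ r) f)

/-- The function `e^{-(α-k₁)x} K(e^{(k₂-k₁)x}, f; W^{k₁}, W^{k₂})`, whose `L^q` norm is, up to a
factor, the K-method seminorm for `(W^{k₁}, W^{k₂})`. -/
def wKW (U : Fin n → ℝ → E →L[ℂ] E) (k₁ k₂ : ℕ) (α : ℝ) (f : E) (x : ℝ) : ℝ≥0∞ :=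
  ENNReal.ofReal (Real.exp (-((α - k₁) * x)) * KfunW U k₁ k₂ (Real.exp x ^ (k₂ - k₁)) f)

variable {U : Fin n → ℝ → E →L[ℂ] E}

theorem measurable_wK (r : ℕ) (α : ℝ) (f : E) : Measurable (wK U r α f) := by
  have h : Monotone fun x => Kfun U r (Real.exp x ^ r) f := fun x y hxy =>
    Kfun_mono (by positivity) (pow_le_pow_left₀ (Real.exp_pos _).le (Real.exp_le_exp.2 hxy) r) f
  have h2 : Measurable fun x : ℝ => Real.exp (-(α * x)) := by fun_prop
  exact (h2.mul h.measurable).ennreal_ofReal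

/-- The weighted lower sum is a sum of left shifts of `wK` with weights `e^{-(α-k)i}`, which are summable
for `k < α`. -/
theorem lowSum_eq (r k : ℕ) (α : ℝ) (f : E) (x : ℝ) :
    ENNReal.ofReal (Real.exp (-((α - k) * x))) * lowSum U r k f x =
      ∑' i : ℕ, ENNReal.ofReal (Real.exp (-((α - k) * i))) * wK U r α f (x + -(i : ℝ)) := by
  rw [lowSum, ← ENNReal.tsum_mul_left]
  refine tsum_congr fun i => ?_
  rw [wK, ← ENNReal.ofReal_mul (Real.exp_pos _).le, ← ENNReal.ofReal_mul (Real.exp_pos _).le,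
    ← mul_assoc, ← mul_assoc, ← Real.exp_neg, ← Real.exp_nat_mul, ← Real.exp_add, ← Real.exp_add,
    ← sub_eq_add_neg]
  congr 3
  ring

/-- The weighted upper sum is a sum of right shifts of `wK` with weights `e^{-(k₂-α)(i+1)}`, which are
summable for `α < k₂`. -/
theorem highSum_eq {r k₁ k₂ : ℕ} (hk : k₁ ≤ k₂) (α : ℝ) (f : E) (x : ℝ) :
    ENNReal.ofReal (Real.exp (-((α - k₁) * x))) *
        (ENNReal.ofReal (Real.exp x ^ (k₂ - k₁)) * highSum U r k₂ f x) =
      ∑' i : ℕ, (ENNReal.ofReal (Real.exp (-(k₂ - α))) *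
        ENNReal.ofReal (Real.exp (-((k₂ - α) * i)))) * wK U r α f (x + (i + 1)) := by
  rw [highSum, ← ENNReal.tsum_mul_left, ← ENNReal.tsum_mul_left]
  refine tsum_congr fun i => ?_
  rw [wK, ← ENNReal.ofReal_mul (by positivity), ← ENNReal.ofReal_mul (Real.exp_pos _).le,
    ← ENNReal.ofReal_mul (Real.exp_pos _).le, ← ENNReal.ofReal_mul (by positivity),
    ← mul_assoc, ← mul_assoc, ← mul_assoc, ← Real.exp_neg, ← Real.exp_nat_mul, ← Real.exp_nat_mul,
    ← Real.exp_add, ← Real.exp_add, ← Real.exp_add, ← Real.exp_add, Nat.cast_sub hk]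
  congr 3
  ring

namespace IsCalculus

variable {R : Type*} [CommRing R] [Module R E] {u a : Fin n → ℝ → R}

/-- The hypothesis `f ∈ W^{k₁}` is needed: otherwise the infimum defining `KfunW` is over the empty set,
and its value is the junk value `0`. The `L^q` norm of `wKW` is handled without measurability,
because constants of `ℝ≥0∞` other than `⊤` can always be taken out of the integral. -/
theorem lq_wK_le (H : IsCalculus U u a) {q α : ℝ} (hq : 1 ≤ q) {k₁ k₂ r : ℕ}
    (h₁ : k₁ ≤ k₂) (h₂ : k₂ ≤ r) : ∃ C : ℝ≥0∞, C ≠ ⊤ ∧ ∀ f : E, memW U k₁ f →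
      lq q (wK U r α f) ≤ C * lq q (wKW U k₁ k₂ α f) := by
  have hq0 : 0 < q := by linarith
  obtain ⟨C, hC, h⟩ := H.Kfun_le_KfunW h₁ h₂
  refine ⟨ENNReal.ofReal C, ENNReal.ofReal_ne_top, fun f hf => ?_⟩
  have h3 : lq q (fun x => ENNReal.ofReal C * wKW U k₁ k₂ α f x) =
      ENNReal.ofReal C * lq q (wKW U k₁ k₂ α f) := by
    unfold lq
    simp_rw [ENNReal.mul_rpow_of_nonneg _ _ hq0.le]
    rw [lintegral_const_mul' _ _ (ENNReal.rpow_ne_top_of_nonneg hq0.le ENNReal.ofReal_ne_top),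
      ENNReal.mul_rpow_of_nonneg _ _ (by positivity), ← ENNReal.rpow_mul,
      mul_one_div_cancel hq0.ne', ENNReal.rpow_one]
  rw [← h3]
  refine lq_mono hq fun x => ?_
  rw [wK, wKW, ← ENNReal.ofReal_mul hC.le]
  refine ENNReal.ofReal_le_ofReal ?_
  have h4 := mul_le_mul_of_nonneg_left (h f hf (Real.exp x) (Real.exp_pos x))
    (Real.exp_pos (-(α * x))).le
  refine h4.trans_eq ?_
  have e : Real.exp (-((α - k₁) * x)) = Real.exp (-(α * x)) * Real.exp x ^ k₁ := by
    rw [← Real.exp_nat_mul, ← Real.exp_add]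
    congr 1
    ring
  rw [e]
  ring

/-- The norm of `(W^{k₁}, W^{k₂})` is controlled by that of `(E, W^r)`. For `x ≤ 0` the function `wKW`
is bounded by weighted sums of shifts of `wK`; for `x ≥ 0` it is bounded by
`e^{-(α-k₁)x} ‖f‖_{W^{k₁}}`. -/
theorem lq_wKW_le (H : IsCalculus U u a) [CompleteSpace E] {q α : ℝ} (hq : 1 ≤ q) {k₁ k₂ r : ℕ}
    (hα₁ : (k₁ : ℝ) < α) (hα₂ : α < (k₂ : ℝ)) (h₂ : k₂ ≤ r) : ∃ C : ℝ≥0∞, C ≠ ⊤ ∧ ∀ f : E,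
      WNormE U k₁ f + lq q (wKW U k₁ k₂ α f) ≤
        C * (ENNReal.ofReal ‖f‖ + lq q (wK U r α f)) := by
  have h₁ : k₁ ≤ k₂ := by exact_mod_cast (hα₁.trans hα₂).le
  have hβ₁ : 0 < α - k₁ := by linarith
  have hβ₂ : 0 < (k₂ : ℝ) - α := by linarith
  obtain ⟨D, hD, hmain⟩ := H.exists_KfunW_le h₁ h₂
  set d : ℝ≥0∞ := ENNReal.ofReal D with hd
  have hdtop : d ≠ ⊤ := ENNReal.ofReal_ne_top
  set w₁ : ℕ → ℝ≥0∞ := fun i => ENNReal.ofReal (Real.exp (-((α - k₁) * i))) with hw₁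
  set w₂ : ℕ → ℝ≥0∞ := fun i => ENNReal.ofReal (Real.exp (-(k₂ - α))) *
        ENNReal.ofReal (Real.exp (-((k₂ - α) * i))) with hw₂
  have hW₁ : ∑' i, w₁ i ≠ ⊤ := tsum_exp_ne_top hβ₁
  have hW₂ : ∑' i, w₂ i ≠ ⊤ := by
    rw [hw₂, ENNReal.tsum_mul_left]
    exact ENNReal.mul_ne_top ENNReal.ofReal_ne_top (tsum_exp_ne_top hβ₂)
  set e₁ : ℝ → ℝ≥0∞ := (Set.Ici (0 : ℝ)).indicator fun x =>
    ENNReal.ofReal (Real.exp (-((α - k₁) * x))) with he₁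
  set e₂ : ℝ → ℝ≥0∞ := (Set.Iic (0 : ℝ)).indicator fun x =>
    ENNReal.ofReal (Real.exp ((k₂ - α) * x)) with he₂
  have hE₁ : lq q e₁ ≠ ⊤ := lq_exp_ne_top hq hβ₁
  have hE₂ : lq q e₂ ≠ ⊤ := lq_exp_neg_ne_top hq hβ₂
  have me₁ : Measurable e₁ := Measurable.indicator (by fun_prop) measurableSet_Ici
  have me₂ : Measurable e₂ := Measurable.indicator (by fun_prop) measurableSet_Iic
  set ε : ℝ≥0∞ := ENNReal.ofReal (Real.exp (α - k₁)) with hε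
  set c : ℝ≥0∞ := d * (1 + ε * ∑' i, w₁ i) with hc
  have hctop : c ≠ ⊤ := ENNReal.mul_ne_top hdtop (ENNReal.add_ne_top.2
    ⟨ENNReal.one_ne_top, ENNReal.mul_ne_top ENNReal.ofReal_ne_top hW₁⟩)
  refine ⟨c + d * (∑' i, w₁ i + ∑' i, w₂ i + lq q e₂) + c * lq q e₁,
    by finiteness, fun f => ?_⟩
  set Φ := wK U r α f with hΦ
  set X := ENNReal.ofReal ‖f‖ + lq q Φ with hX
  have mΦ : Measurable Φ := measurable_wK r α f
  set h : ℝ → ℝ≥0∞ := fun x => ∑' i : ℕ, w₁ i * Φ (x + -(i : ℝ)) with hh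
  set g : ℝ → ℝ≥0∞ := fun x => ∑' i : ℕ, w₂ i * Φ (x + (i + 1)) with hg
  have mh : Measurable h := Measurable.tsum fun i =>
    (mΦ.comp (measurable_id.add_const _)).const_mul _
  have mg : Measurable g := Measurable.tsum fun i =>
    (mΦ.comp (measurable_id.add_const _)).const_mul _
  have nh : lq q h ≤ (∑' i, w₁ i) * lq q Φ := lq_tsum_shift_le hq mΦ w₁ _
  have ng : lq q g ≤ (∑' i, w₂ i) * lq q Φ := lq_tsum_shift_le hq mΦ w₂ _
  have hlow : ∀ x, ENNReal.ofReal (Real.exp (-((α - k₁) * x))) * lowSum U r k₁ f x = h x :=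
    fun x => lowSum_eq r k₁ α f x
  have hhigh : ∀ x, ENNReal.ofReal (Real.exp (-((α - k₁) * x))) *
      (ENNReal.ofReal (Real.exp x ^ (k₂ - k₁)) * highSum U r k₂ f x) = g x :=
    fun x => highSum_eq h₁ α f x
  -- the `W^{k₁}` norm, from averaging the pointwise bound over the unit interval
  have hWn : WNormE U k₁ f ≤ c * X := by
    set i : ℝ → ℝ≥0∞ := (Set.Icc (0 : ℝ) 1).indicator fun _ => 1 with hi
    have mi : Measurable i := Measurable.indicator measurable_const measurableSet_Icc
    have s1 : WNormE U k₁ f ≤ lq q fun x => d * (ENNReal.ofReal ‖f‖ * i x + ε * h x) := by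
      refine (le_lq_of_unit hq (hmain f).1).trans (lq_mono hq fun x => ?_)
      by_cases hx : x ∈ Set.Icc (0 : ℝ) 1
      · rw [Set.indicator_of_mem hx, hi, Set.indicator_of_mem hx, mul_one, ← hlow, ← mul_assoc]
        gcongr
        refine le_mul_of_one_le_left (zero_le) ?_
        rw [← ENNReal.ofReal_mul (Real.exp_pos _).le, ← Real.exp_add, ENNReal.one_le_ofReal,
          Real.one_le_exp_iff]
        nlinarith [hx.2]
      · rw [Set.indicator_of_notMem hx]
        exact zero_le
    refine s1.trans ?_
    rw [lq_const_mul hq (by fun_prop), hc, mul_assoc]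
    gcongr
    refine (lq_add_le hq (by fun_prop) (by fun_prop)).trans ?_
    rw [lq_const_mul hq mi, lq_const_mul hq mh, hi, lq_unit hq, mul_one, add_mul, one_mul,
      mul_assoc ε, hX]
    gcongr
    · exact le_self_add
    · exact nh.trans (mul_le_mul_right le_add_self _)
  have hΨ : ∀ x, wKW U k₁ k₂ α f x ≤
      d * ((h x + g x) + ENNReal.ofReal ‖f‖ * e₂ x) + WNormE U k₁ f * e₁ x := by
    intro x
    rw [wKW, ENNReal.ofReal_mul (Real.exp_pos _).le]
    rcases le_total x 0 with hx | hx
    · refine le_add_right ?_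
      refine (mul_le_mul_right ((hmain f).2 x hx) _).trans_eq ?_
      have e : ENNReal.ofReal (Real.exp (-((α - k₁) * x))) *
          ENNReal.ofReal (Real.exp x ^ (k₂ - k₁)) = e₂ x := by
        rw [he₂, Set.indicator_of_mem (show x ∈ Set.Iic (0 : ℝ) from hx),
          ← ENNReal.ofReal_mul (Real.exp_pos _).le, ← Real.exp_nat_mul, ← Real.exp_add,
          Nat.cast_sub h₁]
        congr 2
        ring
      rw [← hlow, ← hhigh, ← e]
      ring
    · refine le_add_left ?_
      rw [he₁, Set.indicator_of_mem (show x ∈ Set.Ici (0 : ℝ) from hx), mul_comm]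
      gcongr
      exact KfunW_le_WNormE (by positivity) f
  have hΨn : lq q (wKW U k₁ k₂ α f) ≤
      d * (∑' i, w₁ i + ∑' i, w₂ i + lq q e₂) * X + c * lq q e₁ * X := by
    refine (lq_mono hq hΨ).trans ((lq_add_le hq (by fun_prop) (by fun_prop)).trans ?_)
    rw [lq_const_mul hq (by fun_prop), lq_const_mul hq me₁, mul_assoc d, mul_right_comm c]
    gcongr
    · refine (lq_add_le hq (by fun_prop) (by fun_prop)).trans ?_
      rw [lq_const_mul hq me₂, add_mul, mul_comm _ (lq q e₂)]
      gcongr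
      · refine (lq_add_le hq mh mg).trans ?_
        rw [add_mul]
        exact add_le_add (nh.trans (mul_le_mul_right le_add_self _))
          (ng.trans (mul_le_mul_right le_add_self _))
      · exact le_self_add
  calc _ ≤ c * X + (d * (∑' i, w₁ i + ∑' i, w₂ i + lq q e₂) * X + c * lq q e₁ * X) :=
        add_le_add hWn hΨn
    _ = _ := by ring

/-- The equivalence of norms for any commuting groups of operators with the calculus of
differences and averages. -/
theorem norm_equiv (H : IsCalculus U u a) [CompleteSpace E] {q α : ℝ} (hq : 1 ≤ q) {k₁ k₂ r : ℕ}
    (hα₁ : (k₁ : ℝ) < α) (hα₂ : α < (k₂ : ℝ)) (h₂ : k₂ ≤ r) :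
    ∃ c C : ℝ, 0 < c ∧ 0 < C ∧ ∀ f : E,
      ENNReal.ofReal c *
          (WNormE U k₁ f + (∫⁻ t in Set.Ioi (0 : ℝ),
            ENNReal.ofReal ((t ^ (-((α - (k₁ : ℝ)) / ((k₂ : ℝ) - (k₁ : ℝ)))) *
              KfunW U k₁ k₂ t f) ^ q / t)) ^ (1 / q)) ≤
        ENNReal.ofReal ‖f‖ + (∫⁻ t in Set.Ioi (0 : ℝ),
          ENNReal.ofReal ((t ^ (-(α / (r : ℝ))) * Kfun U r t f) ^ q / t)) ^ (1 / q) ∧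
      ENNReal.ofReal ‖f‖ + (∫⁻ t in Set.Ioi (0 : ℝ),
          ENNReal.ofReal ((t ^ (-(α / (r : ℝ))) * Kfun U r t f) ^ q / t)) ^ (1 / q) ≤
        ENNReal.ofReal C *
          (WNormE U k₁ f + (∫⁻ t in Set.Ioi (0 : ℝ),
            ENNReal.ofReal ((t ^ (-((α - (k₁ : ℝ)) / ((k₂ : ℝ) - (k₁ : ℝ)))) *
              KfunW U k₁ k₂ t f) ^ q / t)) ^ (1 / q)) := by
  have hq0 : 0 < q := by linarith
  have hlt : k₁ < k₂ := by exact_mod_cast hα₁.trans hα₂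
  have hk : 0 < k₂ - k₁ := Nat.sub_pos_of_lt hlt
  have hr : 0 < r := by omega
  have e₁ : ∀ f : E, (∫⁻ t in Set.Ioi (0 : ℝ),
      ENNReal.ofReal ((t ^ (-(α / (r : ℝ))) * Kfun U r t f) ^ q / t)) ^ (1 / q) =
      ENNReal.ofReal r ^ (1 / q) * lq q (wK U r α f) := fun f =>
    lintegral_Ioi_eq_lq hq hr α fun t ht => Kfun_nonneg ht.le f
  have e₂ : ∀ f : E, (∫⁻ t in Set.Ioi (0 : ℝ),
      ENNReal.ofReal ((t ^ (-((α - (k₁ : ℝ)) / ((k₂ : ℝ) - (k₁ : ℝ)))) *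
        KfunW U k₁ k₂ t f) ^ q / t)) ^ (1 / q) =
      ENNReal.ofReal (k₂ - k₁ : ℕ) ^ (1 / q) * lq q (wKW U k₁ k₂ α f) := fun f => by
    rw [← Nat.cast_sub hlt.le]
    exact lintegral_Ioi_eq_lq hq hk (α - k₁) fun t ht => KfunW_nonneg ht.le f
  simp_rw [e₁, e₂]
  have hone : ∀ m : ℕ, 0 < m → 1 ≤ ENNReal.ofReal m ^ (1 / q) := fun m hm =>
    ENNReal.one_le_rpow (ENNReal.one_le_ofReal.2 (Nat.one_le_cast.2 hm)) (by positivity)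
  have htop : ∀ m : ℕ, ENNReal.ofReal m ^ (1 / q) ≠ ⊤ := fun m =>
    ENNReal.rpow_ne_top_of_nonneg (by positivity) ENNReal.ofReal_ne_top
  have hρ := hone r hr
  have hκ := hone (k₂ - k₁) hk
  have hρt := htop r
  have hκt := htop (k₂ - k₁)
  generalize ENNReal.ofReal (r : ℝ) ^ (1 / q) = ρ at *
  generalize ENNReal.ofReal ((k₂ - k₁ : ℕ) : ℝ) ^ (1 / q) = κ at *
  obtain ⟨A, hA, hA'⟩ := H.lq_wK_le (α := α) hq hlt.le h₂
  obtain ⟨B, hB, hB'⟩ := H.lq_wKW_le hq hα₁ hα₂ h₂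
  have hBt : κ * B + 1 ≠ ⊤ := by finiteness
  have hAt : 1 + ρ * A ≠ ⊤ := by finiteness
  refine ⟨(κ * B + 1).toReal⁻¹, (1 + ρ * A).toReal,
    inv_pos.2 (ENNReal.toReal_pos (by simp) hBt), ENNReal.toReal_pos (by simp) hAt, fun f => ?_⟩
  rw [ENNReal.ofReal_inv_of_pos (ENNReal.toReal_pos (by simp) hBt), ENNReal.ofReal_toReal hBt,
    ENNReal.ofReal_toReal hAt]
  constructor
  · rw [mul_comm, ← div_eq_mul_inv]
    refine ENNReal.div_le_of_le_mul' ?_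
    calc WNormE U k₁ f + κ * lq q (wKW U k₁ k₂ α f)
        ≤ κ * (WNormE U k₁ f + lq q (wKW U k₁ k₂ α f)) := by
          rw [mul_add]
          gcongr
          exact le_mul_of_one_le_left (zero_le) hκ
      _ ≤ κ * (B * (ENNReal.ofReal ‖f‖ + lq q (wK U r α f))) := by
          gcongr
          exact hB' f
      _ ≤ (κ * B + 1) * (ENNReal.ofReal ‖f‖ + ρ * lq q (wK U r α f)) := by
          rw [← mul_assoc]
          gcongr
          · exact le_self_add
          · exact le_mul_of_one_le_left (zero_le) hρ
  · by_cases hf : memW U k₁ f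
    · have h1 : ENNReal.ofReal ‖f‖ ≤ WNormE U k₁ f := by
        rw [WNormE]
        exact le_self_add
      calc ENNReal.ofReal ‖f‖ + ρ * lq q (wK U r α f)
          ≤ WNormE U k₁ f + ρ * (A * (κ * lq q (wKW U k₁ k₂ α f))) := by
            gcongr
            refine (hA' f hf).trans ?_
            gcongr
            exact le_mul_of_one_le_left (zero_le) hκ
        _ ≤ (1 + ρ * A) * (WNormE U k₁ f + κ * lq q (wKW U k₁ k₂ α f)) := by
            rw [add_mul, one_mul, ← mul_assoc]
            gcongr
            · exact le_self_add
            · exact le_add_self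
    · rw [WNormE_of_not_memW hf, top_add, ENNReal.mul_top (by simp)]
      exact le_top

end IsCalculus
end Equivalence

/-! ### Commuting contraction groups -/

section Groups

variable {E : Type*} [NormedAddCommGroup E] [NormedSpace ℂ E] {n : ℕ}

/-- Commuting strongly continuous one-parameter groups of contractions. -/
structure IsContractionGroup (U : Fin n → ℝ → E →L[ℂ] E) : Prop where
  zero : ∀ j, U j 0 = 1
  add : ∀ j s t, U j (s + t) = U j s * U j t
  comm : ∀ i j s t, U i s * U j t = U j t * U i s
  norm_le : ∀ j t f, ‖U j t f‖ ≤ ‖f‖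
  cont : ∀ j f, Continuous fun t => U j t f

namespace IsContractionGroup

variable {U : Fin n → ℝ → E →L[ℂ] E}

theorem intervalIntegrable (H : IsContractionGroup U) (j : Fin n) (f : E) (a b : ℝ) :
    IntervalIntegrable (fun σ => U j σ f) volume a b :=
  (H.cont j f).intervalIntegrable (μ := volume) a b

theorem cont_mul (H : IsContractionGroup U) (j : Fin n) (t : ℝ) (f : E) :
    Continuous fun σ => U j (t * σ) f :=
  (H.cont j f).comp (continuous_const.mul continuous_id)

/-- The averaging operator `f ↦ ∫₀¹ U_j(tσ) f dσ`. -/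
def avg (H : IsContractionGroup U) (j : Fin n) (t : ℝ) : E →L[ℂ] E :=
  LinearMap.mkContinuous
    { toFun := fun f => ∫ σ in (0 : ℝ)..1, U j (t * σ) f
      map_add' := fun f g => by
        simp only [map_add]
        exact intervalIntegral.integral_add ((H.cont_mul j t f).intervalIntegrable _ _)
          ((H.cont_mul j t g).intervalIntegrable _ _)
      map_smul' := fun c f => by
        simp only [map_smul, RingHom.id_apply]
        exact intervalIntegral.integral_smul c _ } 1
    (fun f => by
      have := intervalIntegral.norm_integral_le_of_norm_le_const (a := 0) (b := 1)
        (f := fun σ => U j (t * σ) f) (C := ‖f‖) (fun σ _ => H.norm_le j _ f)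
      simpa using this)

theorem avg_apply (H : IsContractionGroup U) (j : Fin n) (t : ℝ) (f : E) :
    H.avg j t f = ∫ σ in (0 : ℝ)..1, U j (t * σ) f := rfl

theorem norm_avg_le (H : IsContractionGroup U) (j : Fin n) (t : ℝ) (f : E) :
    ‖H.avg j t f‖ ≤ ‖f‖ := by
  have := intervalIntegral.norm_integral_le_of_norm_le_const (a := 0) (b := 1)
    (f := fun σ => U j (t * σ) f) (C := ‖f‖) (fun σ _ => H.norm_le j _ f)
  simpa [avg_apply] using this

theorem smul_avg (H : IsContractionGroup U) (j : Fin n) (t : ℝ) (f : E) :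
    t • H.avg j t f = ∫ σ in (0 : ℝ)..t, U j σ f := by
  have := intervalIntegral.smul_integral_comp_mul_left (a := 0) (b := 1) (fun σ => U j σ f) t
  simpa [avg_apply] using this

/-- The operators commuting with everything that commutes with all `U_j(t)`. -/
def bicommutant (U : Fin n → ℝ → E →L[ℂ] E) : Subalgebra ℂ (E →L[ℂ] E) :=
  Subalgebra.centralizer ℂ (Set.centralizer {T | ∃ j t, T = U j t})

theorem isMulCommutative (H : IsContractionGroup U) (x y : bicommutant U) : x * y = y * x := by
  apply Subtype.ext
  refine (Set.mem_centralizer_iff.1 y.2 x ?_)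
  refine Set.mem_centralizer_iff.2 ?_
  rintro T ⟨j, t, rfl⟩
  refine Set.mem_centralizer_iff.1 x.2 _ (Set.mem_centralizer_iff.2 ?_)
  rintro T ⟨i, s, rfl⟩
  exact H.comm i j s t

/-- The bicommutant as a commutative ring. -/
@[reducible]
def commRing (H : IsContractionGroup U) : CommRing (bicommutant U) :=
  { (inferInstance : Ring (bicommutant U)) with mul_comm := H.isMulCommutative }

theorem mem_bicommutant (j : Fin n) (t : ℝ) : U j t ∈ bicommutant U := by
  refine Set.mem_centralizer_iff.2 fun T hT => ?_
  exact (Set.mem_centralizer_iff.1 hT _ ⟨j, t, rfl⟩).symm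

variable [CompleteSpace E]

theorem avg_comm (H : IsContractionGroup U) {T : E →L[ℂ] E} (hT : ∀ j t, U j t * T = T * U j t)
    (j : Fin n) (t : ℝ) : H.avg j t * T = T * H.avg j t := by
  ext f
  have := T.intervalIntegral_comp_comm ((H.cont_mul j t f).intervalIntegrable (μ := volume) 0 1)
  change H.avg j t (T f) = T (H.avg j t f)
  rw [avg_apply, avg_apply, ← this]
  congr 1
  ext σ
  exact congrArg (fun S : E →L[ℂ] E => S f) (hT j (t * σ))

theorem avg_zero (H : IsContractionGroup U) (j : Fin n) (f : E) : H.avg j 0 f = f := by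
  simp [avg_apply, H.zero]

theorem tendsto_avg (H : IsContractionGroup U) (j : Fin n) (f : E) :
    Tendsto (fun t => H.avg j t f) (𝓝 0) (𝓝 f) := by
  have hc : Continuous fun t => H.avg j t f := by
    simp only [avg_apply]
    apply intervalIntegral.continuous_parametric_intervalIntegral_of_continuous'
    exact (H.cont j f).comp (continuous_fst.mul continuous_snd)
  simpa [H.avg_zero] using hc.tendsto 0

/-- A difference of an integral of the orbit is a second difference of its primitive. -/
theorem diff_integral (H : IsContractionGroup U) (j : Fin n) (s t : ℝ) (f : E) :
    (U j s - 1) (∫ σ in (0 : ℝ)..t, U j σ f) =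
      (∫ σ in (0 : ℝ)..(s + t), U j σ f) - (∫ σ in (0 : ℝ)..s, U j σ f)
        - ∫ σ in (0 : ℝ)..t, U j σ f := by
  have h1 := (U j s).intervalIntegral_comp_comm (H.intervalIntegrable j f 0 t)
  have h2 : ∀ σ, U j s (U j σ f) = U j (s + σ) f := fun σ => by rw [H.add]; rfl
  simp only [h2] at h1
  rw [intervalIntegral.integral_comp_add_left (fun σ => U j σ f)] at h1
  change U j s _ - (∫ σ in (0 : ℝ)..t, U j σ f) = _
  rw [← h1, add_zero, intervalIntegral.integral_interval_sub_left
    (H.intervalIntegrable j f _ _) (H.intervalIntegrable j f _ _)]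

theorem avg_swap (H : IsContractionGroup U) (j : Fin n) (s t : ℝ) (f : E) :
    s • ((U j t - 1) (H.avg j s f)) = t • (H.avg j t ((U j s - 1) f)) := by
  have hc : H.avg j t * (U j s - 1) = (U j s - 1) * H.avg j t := by
    rw [mul_sub, sub_mul, mul_one, one_mul, H.avg_comm fun i τ => H.comm i j τ s]
  have hc' : H.avg j t ((U j s - 1) f) = (U j s - 1) (H.avg j t f) :=
    congrArg (fun S : E →L[ℂ] E => S f) hc
  have hr : ∀ (T : E →L[ℂ] E) (c : ℝ) (x : E), c • T x = T (c • x) := fun T c x =>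
    (T.map_smul_of_tower c x).symm
  rw [hc', hr (U j t - 1), hr (U j s - 1), H.smul_avg, H.smul_avg, H.diff_integral, H.diff_integral, add_comm s t]
  abel

/-- The integrated form of `g = Θ_j f`: the fundamental theorem of calculus along the orbit in one
direction, division by `t → 0` in the other. -/
theorem genDeriv_iff (H : IsContractionGroup U) (j : Fin n) (f g : E) :
    GenDeriv (U j) f g ↔ ∀ t, (U j t - 1) f = t • H.avg j t g := by
  constructor
  · intro h t
    have hd : ∀ τ, HasDerivAt (fun τ => U j τ f) (U j τ g) τ := fun τ => by
      rw [hasDerivAt_iff_tendsto_slope_zero]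
      refine (((U j τ).continuous.tendsto g).comp h).congr fun x => ?_
      simp only [Function.comp_apply]
      rw [ContinuousLinearMap.map_smul_of_tower, map_sub, H.add]
      rfl
    rw [H.smul_avg, intervalIntegral.integral_eq_sub_of_hasDerivAt (fun τ _ => hd τ)
      (H.intervalIntegrable j g 0 t), H.zero]
    rfl
  · intro h
    refine ((H.tendsto_avg j g).mono_left nhdsWithin_le_nhds).congr' ?_
    filter_upwards [self_mem_nhdsWithin] with t ht
    have h2 : U j t f - f = t • H.avg j t g := h t
    rw [h2, inv_smul_smul₀ ht]

theorem norm_sub_avg_le (H : IsContractionGroup U) {j : Fin n} {f g : E} (t : ℝ)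
    (h : GenDeriv (U j) f g) : ‖f - H.avg j t f‖ ≤ |t| * ‖g‖ := by
  have h1 : f - H.avg j t f = ∫ σ in (0 : ℝ)..1, (f - U j (t * σ) f) := by
    rw [intervalIntegral.integral_sub intervalIntegrable_const
      ((H.cont_mul j t f).intervalIntegrable _ _), avg_apply]
    simp
  have h2 : ∀ σ ∈ Set.uIoc (0 : ℝ) 1, ‖f - U j (t * σ) f‖ ≤ |t| * ‖g‖ := by
    intro σ hσ
    rw [Set.uIoc_of_le zero_le_one] at hσ
    have h3 : U j (t * σ) f - f = (t * σ) • H.avg j (t * σ) g := (H.genDeriv_iff j f g).1 h _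
    rw [norm_sub_rev, h3, norm_smul, Real.norm_eq_abs, abs_mul, abs_of_pos hσ.1]
    gcongr
    · exact mul_le_of_le_one_right (abs_nonneg t) hσ.2
    · exact H.norm_avg_le j _ g
  rw [h1]
  simpa using intervalIntegral.norm_integral_le_of_norm_le_const h2

theorem avg_mem_bicommutant (H : IsContractionGroup U) (j : Fin n) (t : ℝ) :
    H.avg j t ∈ bicommutant U := by
  refine Set.mem_centralizer_iff.2 fun T hT => ?_
  exact (H.avg_comm (fun i s => Set.mem_centralizer_iff.1 hT _ ⟨i, s, rfl⟩) j t).symm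

theorem isCalculus (H : IsContractionGroup U) :
    letI := H.commRing
    IsCalculus (R := bicommutant U) U (fun j t => ⟨U j t, mem_bicommutant j t⟩)
      (fun j t => ⟨H.avg j t, H.avg_mem_bicommutant j t⟩) := by
  let := H.commRing
  exact
  { cont := fun T => T.1.continuous
    smul_real := fun T c f => T.1.map_smul_of_tower c f
    norm_u := H.norm_le
    norm_a := H.norm_avg_le
    tendsto_a := H.tendsto_avg
    gen_iff := H.genDeriv_iff
    swap := H.avg_swap
    approx := fun j t f g h => H.norm_sub_avg_le t h }

end IsContractionGroup
end Groups

/-! ### Mellin translations as translations in logarithmic coordinates -/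

section Mellin

variable {n : ℕ}

/-- The coordinatewise exponential `ℝⁿ → (0,∞)ⁿ`. -/
def expMap (n : ℕ) (x : Fin n → ℝ) : Fin n → ℝ := fun i => Real.exp (x i)

theorem measurable_expMap : Measurable (expMap n) := by
  unfold expMap; fun_prop

theorem expMap_injective : Function.Injective (expMap n) := fun _ _ h =>
  funext fun i => Real.exp_injective (congrFun h i)

theorem image_preimage_expMap (A : Set (Fin n → ℝ)) :
    expMap n '' (expMap n ⁻¹' A) = A ∩ {x | ∀ i, 0 < x i} := by
  rw [Set.image_preimage_eq_inter_range]
  congr 1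
  ext x
  constructor
  · rintro ⟨y, rfl⟩ i
    exact Real.exp_pos _
  · intro hx
    exact ⟨fun i => Real.log (x i), funext fun i => Real.exp_log (hx i)⟩

/-- Derivative of the coordinatewise exponential. -/
def expDeriv (x : Fin n → ℝ) : (Fin n → ℝ) →L[ℝ] (Fin n → ℝ) :=
  ContinuousLinearMap.pi fun i =>
    (Real.exp (x i) • (ContinuousLinearMap.id ℝ ℝ)).comp (ContinuousLinearMap.proj i)

theorem hasFDerivAt_expMap (x : Fin n → ℝ) : HasFDerivAt (expMap n) (expDeriv x) x := by
  rw [hasFDerivAt_pi']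
  intro i
  have h := (Real.hasDerivAt_exp (x i)).hasFDerivAt.comp x
    (ContinuousLinearMap.proj (R := ℝ) (φ := fun _ : Fin n => ℝ) i).hasFDerivAt
  refine h.congr_fderiv ?_
  ext v
  simp [expDeriv, mul_comm]

theorem det_expDeriv (x : Fin n → ℝ) : (expDeriv x).det = ∏ i, Real.exp (x i) := by
  have : ((expDeriv x : (Fin n → ℝ) →L[ℝ] (Fin n → ℝ)) : (Fin n → ℝ) →ₗ[ℝ] (Fin n → ℝ)) =
      LinearMap.pi fun i => (Real.exp (x i) • (LinearMap.id : ℝ →ₗ[ℝ] ℝ)).comp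
        (LinearMap.proj i) := by
    ext; simp [expDeriv]
  rw [ContinuousLinearMap.det, this, LinearMap.det_pi]
  simp

/-- The Jacobian `∏ e^{x_i}` of the exponential cancels the density `∏ x_i⁻¹` of the Mellin measure. -/
theorem measurePreserving_expMap : MeasurePreserving (expMap n) volume (mellinMeasure n) := by
  refine ⟨measurable_expMap, ?_⟩
  ext A hA
  have hpos : MeasurableSet {x : Fin n → ℝ | ∀ i, 0 < x i} := by
    rw [Set.ofPred_forall]
    exact MeasurableSet.iInter fun i => measurableSet_lt measurable_const (measurable_pi_apply i)
  rw [Measure.map_apply measurable_expMap hA, mellinMeasure, withDensity_apply _ hA,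
    Measure.restrict_restrict hA, ← image_preimage_expMap,
    lintegral_image_eq_lintegral_abs_det_fderiv_mul volume (measurable_expMap hA)
      (fun x _ => (hasFDerivAt_expMap x).hasFDerivWithinAt) expMap_injective.injOn]
  rw [setLIntegral_congr_fun (measurable_expMap hA) (g := fun _ => 1), setLIntegral_one]
  intro x _
  have h1 : ∀ i, 0 ≤ (expMap n x i)⁻¹ := fun i => inv_nonneg.2 (Real.exp_pos _).le
  have h2 : 0 < ∏ i, Real.exp (x i) := Finset.prod_pos fun i _ => Real.exp_pos _
  change ENNReal.ofReal |(expDeriv x).det| * ∏ i, ENNReal.ofReal (expMap n x i)⁻¹ = 1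
  rw [det_expDeriv, ← ENNReal.ofReal_prod_of_nonneg fun i _ => h1 i, abs_of_pos h2,
    ← ENNReal.ofReal_mul h2.le, ← Finset.prod_mul_distrib]
  simp [expMap]

theorem mellinDilate_expMap (j : Fin n) (t : ℝ) (x : Fin n → ℝ) :
    mellinDilate j t (expMap n x) = expMap n (x + Pi.single j t) := by
  ext i
  by_cases h : i = j
  · subst h
    simp [mellinDilate, expMap, Real.exp_add, mul_comm]
  · simp [mellinDilate, expMap, h]

variable {p : ℝ≥0∞}

/-- Translation by `c` on `L^p(ℝⁿ)`. -/
def shift (p : ℝ≥0∞) (c : Fin n → ℝ) :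
    Lp ℂ p (volume : Measure (Fin n → ℝ)) →+ Lp ℂ p (volume : Measure (Fin n → ℝ)) :=
  Lp.compMeasurePreserving (fun x => x + c) (measurePreserving_add_right volume c)

theorem shift_add (c d : Fin n → ℝ) (f : Lp ℂ p (volume : Measure (Fin n → ℝ))) :
    shift p (c + d) f = shift p c (shift p d f) := by
  unfold shift
  rw [← Lp.compMeasurePreserving_comp_apply]
  simp only [Function.comp_def, add_assoc]

theorem shift_zero (f : Lp ℂ p (volume : Measure (Fin n → ℝ))) : shift p 0 f = f := by
  unfold shift
  simp only [add_zero]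
  exact Lp.compMeasurePreserving_id_apply f

/-- The isometry `L^p(μ) → L^p(ℝⁿ)`, `f ↦ f ∘ exp`. -/
def toLog (n : ℕ) (p : ℝ≥0∞) :
    Lp ℂ p (mellinMeasure n) →+ Lp ℂ p (volume : Measure (Fin n → ℝ)) :=
  Lp.compMeasurePreserving (expMap n) measurePreserving_expMap

variable [Fact (1 ≤ p)]
  {U : Fin n → ℝ → (Lp ℂ p (mellinMeasure n) →L[ℂ] Lp ℂ p (mellinMeasure n))}

/-- In logarithmic coordinates, a Mellin translation is an ordinary translation along a coordinate axis. -/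
theorem toLog_translation (hU : IsMellinTranslation p U) (j : Fin n) (t : ℝ)
    (f : Lp ℂ p (mellinMeasure n)) :
    toLog n p (U j t f) = shift p (Pi.single j t) (toLog n p f) := by
  apply Lp.ext
  have h1 := Lp.coeFn_compMeasurePreserving (U j t f) (measurePreserving_expMap (n := n))
  have h2 := measurePreserving_expMap.quasiMeasurePreserving.ae_eq_comp (hU j t f)
  have h3 := Lp.coeFn_compMeasurePreserving (toLog n p f)
    (measurePreserving_add_right (volume : Measure (Fin n → ℝ)) (Pi.single j t))
  have h4 := (measurePreserving_add_right (volume : Measure (Fin n → ℝ))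
    (Pi.single j t)).quasiMeasurePreserving.ae_eq_comp
      (Lp.coeFn_compMeasurePreserving f (measurePreserving_expMap (n := n)))
  filter_upwards [h1, h2, h3, h4] with x e1 e2 e3 e4
  simp only [Function.comp_apply, mellinDilate_expMap] at e1 e2 e3 e4
  exact (e1.trans e2).trans (e3.trans e4).symm

theorem isometry_toLog : Isometry (toLog n p) :=
  Lp.isometry_compMeasurePreserving measurePreserving_expMap

/-- The group laws hold because they hold for translations of `ℝⁿ`, and `toLog` is injective. Strong
continuity, which needs `p ≠ ∞`, is the continuity of translations on `L^p(ℝⁿ)`. -/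
theorem isContractionGroup (hp : p ≠ ∞) (hU : IsMellinTranslation p U) :
    IsContractionGroup U where
  zero j := by
    ext1 f
    apply isometry_toLog.injective
    rw [toLog_translation hU, Pi.single_zero, shift_zero]
    rfl
  add j s t := by
    ext1 f
    apply isometry_toLog.injective
    change _ = toLog n p (U j s (U j t f))
    rw [toLog_translation hU, toLog_translation hU, toLog_translation hU, Pi.single_add, shift_add]
  comm i j s t := by
    ext1 f
    apply isometry_toLog.injective
    change toLog n p (U i s (U j t f)) = toLog n p (U j t (U i s f))
    rw [toLog_translation hU, toLog_translation hU, toLog_translation hU, toLog_translation hU,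
      ← shift_add, ← shift_add, add_comm]
  norm_le j t f := by
    have h : ∀ g, ‖toLog n p g‖ = ‖g‖ := fun g => Lp.norm_compMeasurePreserving g _
    rw [← h, ← h f, toLog_translation hU]
    exact (Lp.norm_compMeasurePreserving _ _).le
  cont j f := by
    rw [isometry_toLog.isEmbedding.continuous_iff]
    simp only [Function.comp_def, toLog_translation hU]
    have hc : Continuous fun t : ℝ => (⟨fun x => x + Pi.single j t, by fun_prop⟩ :
        C(Fin n → ℝ, Fin n → ℝ)) := by
      apply ContinuousMap.continuous_of_continuous_uncurry
      change Continuous fun z : ℝ × (Fin n → ℝ) => z.2 + Pi.single j z.1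
      exact continuous_snd.add ((continuous_single j).comp continuous_fst)
    exact Continuous.compMeasurePreservingLp (f := fun _ : ℝ => toLog n p f) continuous_const hc
      (fun t => measurePreserving_add_right volume _) hp

end Mellin

end SobolevMellin

/-- **Reiteration.**  For integers `0 ≤ k₁ < α < k₂ ≤ r`, the interpolation norms of
`(X^p, W^r_p)^K_{α/r,q}` and `(W^{k₁}_p, W^{k₂}_p)^K_{(α-k₁)/(k₂-k₁),q}` are equivalent
(in `ℝ≥0∞`; in particular one is finite iff the other is). -/
theorem interpolation_reiteration_sobolev_mellin {n : ℕ} (p : ℝ≥0∞) [Fact (1 ≤ p)] (hp : p ≠ ∞)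
    (U : Fin n → ℝ → (Lp ℂ p (mellinMeasure n) →L[ℂ] Lp ℂ p (mellinMeasure n)))
    (hU : IsMellinTranslation p U)
    (r k₁ k₂ : ℕ) (α q : ℝ) (hq : 1 ≤ q)
    (h₁ : (k₁ : ℝ) < α) (h₂ : α < (k₂ : ℝ)) (h₃ : k₂ ≤ r) :
    ∃ c C : ℝ, 0 < c ∧ 0 < C ∧ ∀ f : Lp ℂ p (mellinMeasure n),
      ENNReal.ofReal c *
          (WNormE U k₁ f + (∫⁻ t in Set.Ioi (0 : ℝ),
            ENNReal.ofReal ((t ^ (-((α - (k₁ : ℝ)) / ((k₂ : ℝ) - (k₁ : ℝ)))) *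
              KfunW U k₁ k₂ t f) ^ q / t)) ^ (1 / q)) ≤
        ENNReal.ofReal ‖f‖ + (∫⁻ t in Set.Ioi (0 : ℝ),
          ENNReal.ofReal ((t ^ (-(α / (r : ℝ))) * Kfun U r t f) ^ q / t)) ^ (1 / q) ∧
      ENNReal.ofReal ‖f‖ + (∫⁻ t in Set.Ioi (0 : ℝ),
          ENNReal.ofReal ((t ^ (-(α / (r : ℝ))) * Kfun U r t f) ^ q / t)) ^ (1 / q) ≤
        ENNReal.ofReal C *
          (WNormE U k₁ f + (∫⁻ t in Set.Ioi (0 : ℝ),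
            ENNReal.ofReal ((t ^ (-((α - (k₁ : ℝ)) / ((k₂ : ℝ) - (k₁ : ℝ)))) *
              KfunW U k₁ k₂ t f) ^ q / t)) ^ (1 / q)) := by
  let := (SobolevMellin.isContractionGroup hp hU).commRing
  exact (SobolevMellin.isContractionGroup hp hU).isCalculus.norm_equiv hq h₁ h₂ h₃
end
end

section
/- Let 1 ≤ p < ∞ and 1 ≤ j ≤ n. For every m ∈ ℕ there exists a constant c = c(m) > 0 such that for all σ > 0 and all f ∈ X^p: E_{j,p}(σ, f) ≤ c ω^m_{j,p}(1/σ, f). Moreover, for every 0 ≤ k ≤ m there exists C = C(m,k) > 0 such that for every f ∈ D(Θ_j^k): E_{j,p}(σ, f) ≤ (C/σ^k) ω^{m−k}_{j,p}(1/σ, Θ_j^k f). -/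
/-!
Jackson's inequality is proved for an arbitrary strongly continuous group `T` of isometries of a
complex Banach space (`IsIsometryGroup.jackson`). The Mellin translations form such a group:
composition with the coordinatewise exponential is a linear isometry into
`L^p(ℝⁿ, dx)` which turns dilations into ordinary translations (`isIsometryGroup_mellin`).

Fix Schwartz functions `h, ψ` on `ℝ` with `∫ h = 1`, with `ĥ` supported in `[-1, 1]` and with
`ψ̂ = 1` on `[-1, 1]` (`exists_kernels`). Put `M = ‖ψ'‖₁ + 1` and `S(t) = T(Mt/σ)`. The approximant
of `f` is
`g = f - ∫ h(t) (I - S(t))^m f dt = -∑_{k=1}^m (-1)^k C(m,k) ∫ h(t) S(kt) f dt`.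

* Each dilate `k⁻¹ h(·/k)` has Fourier transform supported where `ψ̂ = 1`, so it equals its
  convolution with `ψ`; hence `g` is reproduced, `g = ∫ ψ(t) S(t) g dt`. Differentiating,
  `Θ_S g = -∫ ψ'(t) S(t) g dt`, which is again reproduced, so that `‖Θ_S^k g‖ ≤ M^k ‖g‖`
  (`IsIsometryGroup.memBernstein_of_reproduced`). Undoing the change of time scale yields
  `‖Θ^k g‖ ≤ σ^k ‖g‖`. The sharp Bernstein inequality is not needed, because the scale `M` absorbs
  the constant `‖ψ'‖₁`.
* The error is at most `∫ |h(t)| ‖(T(Mt/σ) - I)^m f‖ dt`, and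
  `‖(T(λ/σ) - I)^m f‖ ≤ (1 + |λ|)^m ω^m(1/σ, f)` by telescoping
  (`IsIsometryGroup.norm_sub_one_pow_le_omegaMod`), so the decay of `h` gives a constant depending
  on `m` only.

The estimate with derivatives follows from `ω^m(s, f) ≤ s^k ω^{m-k}(s, Θ^k f)`
(`IsIsometryGroup.omegaMod_chain`), which is the mean value inequality applied `k` times.
-/

open MeasureTheory Filter Topology ENNReal

noncomputable section

/-- `g` belongs to the Bernstein space `B_σ` of the one-parameter group `T`:
`g ∈ D^∞` (derivative chain `c`) and `‖D^k g‖ ≤ σ^k ‖g‖` for all `k`. -/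
def memBernsteinSingle {E : Type*} [NormedAddCommGroup E] [NormedSpace ℂ E]
    (T : ℝ → E →L[ℂ] E) (σ : ℝ) (g : E) : Prop :=
  ∃ c : ℕ → E, c 0 = g ∧ (∀ i : ℕ, GenDeriv T (c i) (c (i + 1))) ∧
    ∀ k : ℕ, ‖c k‖ ≤ σ ^ k * ‖g‖

/-- Best approximation `E(σ,f) = inf {‖f - g‖ : g ∈ B_σ}` by Bernstein vectors of `T`. -/
def bestApproxSingle {E : Type*} [NormedAddCommGroup E] [NormedSpace ℂ E]
    (T : ℝ → E →L[ℂ] E) (σ : ℝ) (f : E) : ℝ :=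
  sInf ((fun g => ‖f - g‖) '' {g | memBernsteinSingle T σ g})

/-! ### Mellin translations in logarithmic coordinates -/

/-- A strongly continuous one-parameter group of linear isometries of `E`. -/
structure IsIsometryGroup {E : Type*} [NormedAddCommGroup E] [NormedSpace ℂ E]
    (T : ℝ → E →L[ℂ] E) : Prop where
  zero : T 0 = 1
  add : ∀ s t, T (s + t) = T s * T t
  norm_apply : ∀ t f, ‖T t f‖ = ‖f‖
  cont : ∀ f, Continuous fun t => T t f

/-- The coordinatewise exponential `ℝⁿ → (0,∞)ⁿ`. -/
def expMap (n : ℕ) (y : Fin n → ℝ) : Fin n → ℝ := fun i => Real.exp (y i)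

lemma measurable_expMap (n : ℕ) : Measurable (expMap n) := by
  unfold expMap; fun_prop

lemma expMap_injective (n : ℕ) : Function.Injective (expMap n) := by
  intro x y h
  ext i
  exact Real.exp_injective (congrFun h i)

/-- Change of variables: the Jacobian `∏ exp(yᵢ)` cancels the density `∏ xᵢ⁻¹`. -/
lemma measurePreserving_expMap (n : ℕ) :
    MeasurePreserving (expMap n) (volume : Measure (Fin n → ℝ)) (mellinMeasure n) := by
  refine ⟨measurable_expMap n, ?_⟩
  ext s hs
  have hpos : MeasurableSet {x : Fin n → ℝ | ∀ i, 0 < x i} := by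
    simp only [Set.ofPred_forall]
    exact MeasurableSet.iInter fun i => measurableSet_lt measurable_const (measurable_pi_apply i)
  have himg : s ∩ {x : Fin n → ℝ | ∀ i, 0 < x i} = expMap n '' (expMap n ⁻¹' s) := by
    ext x
    constructor
    · rintro ⟨hx, hx'⟩
      have : expMap n (fun i => Real.log (x i)) = x := by
        ext i; exact Real.exp_log (hx' i)
      exact ⟨fun i => Real.log (x i), by simpa [this] using hx, this⟩
    · rintro ⟨y, hy, rfl⟩
      exact ⟨hy, fun i => Real.exp_pos _⟩
  have hder : ∀ y ∈ expMap n ⁻¹' s, HasFDerivWithinAt (expMap n)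
      (LinearMap.toContinuousLinearMap (Matrix.toLin' (Matrix.diagonal (expMap n y))))
      (expMap n ⁻¹' s) y := by
    intro y _
    refine HasFDerivAt.hasFDerivWithinAt ?_
    rw [hasFDerivAt_pi']
    intro i
    have h1 : HasFDerivAt (fun z : Fin n → ℝ => Real.exp (z i)) _ y :=
      (hasFDerivAt_apply (𝕜 := ℝ) i y).exp
    refine h1.congr_fderiv ?_
    ext v
    simp [Matrix.mulVec_diagonal, expMap]
  rw [Measure.map_apply (measurable_expMap n) hs, mellinMeasure, withDensity_apply _ hs,
    Measure.restrict_restrict hs, himg,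
    lintegral_image_eq_lintegral_abs_det_fderiv_mul volume (measurable_expMap n hs) hder
      (expMap_injective n).injOn]
  have : ∀ y : Fin n → ℝ, ENNReal.ofReal |(LinearMap.toContinuousLinearMap
      (Matrix.toLin' (Matrix.diagonal (expMap n y)))).det| *
      ∏ i, ENNReal.ofReal (expMap n y i)⁻¹ = 1 := by
    intro y
    have hdet : (LinearMap.toContinuousLinearMap
      (Matrix.toLin' (Matrix.diagonal (expMap n y)))).det = ∏ i, expMap n y i := by
      simp [ContinuousLinearMap.det, LinearMap.det_toLin', Matrix.det_diagonal]
    have hp : ∀ i, 0 < expMap n y i := fun i => Real.exp_pos _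
    rw [hdet, abs_of_pos (Finset.prod_pos fun i _ => hp i),
      ENNReal.ofReal_prod_of_nonneg (fun i _ => (hp i).le), ← Finset.prod_mul_distrib]
    refine Finset.prod_eq_one fun i _ => ?_
    rw [← ENNReal.ofReal_mul (hp i).le, mul_inv_cancel₀ (hp i).ne', ENNReal.ofReal_one]
  simp only [this]
  simp

/-- In logarithmic coordinates, `f ↦ f ∘ exp` turns the Mellin dilations in the `j`-th variable
into ordinary translations along the `j`-th axis. -/
lemma isIsometryGroup_mellin {n : ℕ} (p : ℝ≥0∞) [Fact (1 ≤ p)] (hp : p ≠ ∞)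
    (U : Fin n → ℝ → (Lp ℂ p (mellinMeasure n) →L[ℂ] Lp ℂ p (mellinMeasure n)))
    (hU : IsMellinTranslation p U) (j : Fin n) : IsIsometryGroup (U j) := by
  have he := measurePreserving_expMap n
  let V : Lp ℂ p (mellinMeasure n) →+ Lp ℂ p (volume : Measure (Fin n → ℝ)) :=
    Lp.compMeasurePreserving (expMap n) he
  have hViso : Isometry V := Lp.isometry_compMeasurePreserving he
  have hVnorm : ∀ f, ‖V f‖ = ‖f‖ := fun f => Lp.norm_compMeasurePreserving f he
  let τ : ℝ → (Fin n → ℝ) → (Fin n → ℝ) := fun t y => y + t • Pi.single j (1 : ℝ)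
  have hτ : ∀ t, MeasurePreserving (τ t) (volume : Measure (Fin n → ℝ)) volume := fun t =>
    measurePreserving_add_right volume _
  have hτe : ∀ t y, mellinDilate j t (expMap n y) = expMap n (τ t y) := by
    intro t y
    ext i
    by_cases h : i = j
    · subst h
      simp [mellinDilate, expMap, τ, Real.exp_add, mul_comm]
    · simp [mellinDilate, expMap, τ, h]
  have key : ∀ t f, V (U j t f) = Lp.compMeasurePreserving (τ t) (hτ t) (V f) := by
    intro t f
    apply Lp.ext
    have h1 := Lp.coeFn_compMeasurePreserving (U j t f) he
    have h2 := he.quasiMeasurePreserving.ae_eq_comp (hU j t f)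
    have h3 := Lp.coeFn_compMeasurePreserving (V f) (hτ t)
    have h4 := (hτ t).quasiMeasurePreserving.ae_eq_comp (Lp.coeFn_compMeasurePreserving f he)
    refine h1.trans (h2.trans ?_)
    refine EventuallyEq.trans ?_ (h3.trans h4).symm
    refine Eventually.of_forall fun y => ?_
    simp [hτe]
  have hcomp : ∀ s t (g : Lp ℂ p (volume : Measure (Fin n → ℝ))),
      Lp.compMeasurePreserving (τ (s + t)) (hτ (s + t)) g =
        Lp.compMeasurePreserving (τ s) (hτ s) (Lp.compMeasurePreserving (τ t) (hτ t) g) := by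
    intro s t g
    rw [← Lp.compMeasurePreserving_comp_apply g (hτ t) (hτ s)]
    have : τ (s + t) = τ t ∘ τ s := by
      ext y i; simp only [τ, Function.comp, add_smul, Pi.add_apply]; ring
    congr 1
    congr 1
  refine ⟨?_, ?_, ?_, ?_⟩
  · ext1 f
    apply hViso.injective
    rw [key]
    have : τ 0 = id := by ext y i; simp [τ]
    have h0 : Lp.compMeasurePreserving (E := ℂ) (p := p) (τ 0) (hτ 0) =
      Lp.compMeasurePreserving id (.id volume) := by congr 1
    rw [h0]; simp
  · intro s t
    ext1 f
    apply hViso.injective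
    change _ = V (U j s (U j t f))
    rw [key, key, key, hcomp]
  · intro t f
    rw [← hVnorm, key, Lp.norm_compMeasurePreserving, hVnorm]
  · intro f
    rw [hViso.isEmbedding.continuous_iff]
    have : (V ∘ fun t => U j t f) = fun t => Lp.compMeasurePreserving (τ t) (hτ t) (V f) := by
      ext1 t; exact key t f
    rw [this]
    let g : ℝ → C(Fin n → ℝ, Fin n → ℝ) := fun t => ⟨τ t, by fun_prop⟩
    have hg : Continuous g := by
      refine ContinuousMap.continuous_of_continuous_uncurry _ ?_
      simp only [g, τ, Function.uncurry_def, ContinuousMap.coe_mk]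
      fun_prop
    exact Continuous.compMeasurePreservingLp (continuous_const (y := V f)) hg hτ hp

/-! ### Moduli of continuity of isometry groups -/

section Modulus

variable {E : Type*} [NormedAddCommGroup E] [NormedSpace ℂ E] {T : ℝ → E →L[ℂ] E}

lemma GenDeriv.unique {f g g' : E} (h : GenDeriv T f g) (h' : GenDeriv T f g') : g = g' :=
  tendsto_nhds_unique h h'

namespace IsIsometryGroup

lemma add_apply (hT : IsIsometryGroup T) (s t : ℝ) (f : E) : T (s + t) f = T s (T t f) := by
  rw [hT.add]; rfl

lemma comm (hT : IsIsometryGroup T) (s t : ℝ) : Commute (T s) (T t) := by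
  rw [commute_iff_eq, ← hT.add, ← hT.add, add_comm]

lemma opNorm_le (hT : IsIsometryGroup T) (t : ℝ) : ‖T t‖ ≤ 1 :=
  ContinuousLinearMap.opNorm_le_bound _ zero_le_one fun f => by rw [hT.norm_apply, one_mul]

lemma natMul (hT : IsIsometryGroup T) (N : ℕ) (t : ℝ) : T (N * t) = T t ^ N := by
  induction N with
  | zero => simp [hT.zero]
  | succ N ih => rw [Nat.cast_succ, add_mul, one_mul, hT.add, ih, pow_succ]

/-- Rescaling time gives another isometry group. -/
lemma scale (hT : IsIsometryGroup T) (a : ℝ) : IsIsometryGroup fun t => T (a * t) where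
  zero := by simp [hT.zero]
  add s t := by rw [mul_add, hT.add]
  norm_apply t f := hT.norm_apply _ f
  cont f := (hT.cont f).comp (continuous_const.mul continuous_id)

lemma norm_pow_apply (hT : IsIsometryGroup T) (t : ℝ) (m : ℕ) (f : E) :
    ‖((-T t) ^ m) f‖ = ‖f‖ := by
  induction m generalizing f with
  | zero => simp
  | succ m ih =>
    rw [pow_succ]
    change ‖((-T t) ^ m) ((-T t) f)‖ = _
    rw [ih, neg_apply, norm_neg, hT.norm_apply]

/-- `T(-t) - I = -T(-t) (T(t) - I)`, so differences with negative step have the same norm. -/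
lemma norm_sub_one_pow_neg (hT : IsIsometryGroup T) (t : ℝ) (m : ℕ) (f : E) :
    ‖((T (-t) - 1) ^ m) f‖ = ‖((T t - 1) ^ m) f‖ := by
  have h1 : T (-t) - 1 = (-T (-t)) * (T t - 1) := by
    rw [mul_sub, mul_one, neg_mul, ← hT.add, neg_add_cancel, hT.zero]
    abel
  have hc : Commute (-T (-t)) (T t - 1) :=
    ((hT.comm _ _).sub_right (Commute.one_right _)).neg_left
  rw [h1, hc.mul_pow]
  exact hT.norm_pow_apply _ _ _

lemma norm_sub_one_pow_apply_le (hT : IsIsometryGroup T) (t : ℝ) (m : ℕ) (f : E) :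
    ‖((T t - 1) ^ m) f‖ ≤ 2 ^ m * ‖f‖ := by
  induction m generalizing f with
  | zero => simp
  | succ m ih =>
    rw [pow_succ]
    change ‖((T t - 1) ^ m) ((T t - 1) f)‖ ≤ _
    refine (ih _).trans ?_
    rw [pow_succ, mul_assoc]
    gcongr
    calc ‖(T t - 1) f‖ = ‖T t f - f‖ := rfl
      _ ≤ ‖T t f‖ + ‖f‖ := norm_sub_le _ _
      _ = 2 * ‖f‖ := by rw [hT.norm_apply]; ring

lemma bddAbove (hT : IsIsometryGroup T) (m : ℕ) (s : ℝ) (f : E) :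
    BddAbove ((fun τ => ‖((T τ - 1) ^ m) f‖) '' Set.Icc 0 s) := by
  refine ⟨2 ^ m * ‖f‖, ?_⟩
  rintro _ ⟨τ, -, rfl⟩
  exact hT.norm_sub_one_pow_apply_le τ m f

lemma le_omegaMod (hT : IsIsometryGroup T) (m : ℕ) {s τ : ℝ} (h0 : 0 ≤ τ) (hs : τ ≤ s) (f : E) :
    ‖((T τ - 1) ^ m) f‖ ≤ omegaMod T m s f :=
  le_csSup (hT.bddAbove m s f) ⟨τ, ⟨h0, hs⟩, rfl⟩

/-- Telescoping `T(Nτ) - I = (∑_{i<N} T(τ)^i) (T(τ) - I)`. -/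
lemma norm_sub_one_pow_natMul_le (hT : IsIsometryGroup T) (m N : ℕ) (τ : ℝ) (f : E) :
    ‖((T (N * τ) - 1) ^ m) f‖ ≤ (N : ℝ) ^ m * ‖((T τ - 1) ^ m) f‖ := by
  set S : E →L[ℂ] E := ∑ i ∈ Finset.range N, T τ ^ i with hS
  have h1 : T (N * τ) - 1 = S * (T τ - 1) := by rw [hT.natMul, hS, geom_sum_mul]
  have hc : Commute S (T τ - 1) := by
    refine Commute.sub_right ?_ (Commute.one_right _)
    exact Commute.sum_left _ _ _ fun i _ => Commute.pow_left (Commute.refl _) i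
  have hSn : ∀ g, ‖S g‖ ≤ N * ‖g‖ := by
    intro g
    rw [hS, sum_apply]
    refine (norm_sum_le _ _).trans ?_
    have : ∀ i ∈ Finset.range N, ‖(T τ ^ i) g‖ ≤ ‖g‖ := by
      intro i _
      rw [← hT.natMul, hT.norm_apply]
    refine (Finset.sum_le_sum this).trans ?_
    simp
  have hSm : ∀ (m : ℕ) (g : E), ‖(S ^ m) g‖ ≤ (N : ℝ) ^ m * ‖g‖ := by
    intro m
    induction m with
    | zero => simp
    | succ m ih =>
      intro g
      rw [pow_succ]
      change ‖(S ^ m) (S g)‖ ≤ _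
      refine (ih _).trans ?_
      rw [pow_succ, mul_assoc]
      gcongr
      exact hSn g
  rw [h1, hc.mul_pow]
  exact hSm m _

/-- The growth `ω^m(λs) ≤ (1+λ)^m ω^m(s)` of the modulus of continuity, in pointwise form. -/
lemma norm_sub_one_pow_le_omegaMod (hT : IsIsometryGroup T) (m : ℕ) {σ : ℝ} (hσ : 0 < σ)
    (t : ℝ) (f : E) :
    ‖((T (t / σ) - 1) ^ m) f‖ ≤ (1 + |t|) ^ m * omegaMod T m (1 / σ) f := by
  wlog ht : 0 ≤ t generalizing t
  · have := this (-t) (by linarith)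
    rwa [neg_div, hT.norm_sub_one_pow_neg, abs_neg] at this
  set N : ℕ := ⌊t⌋₊ + 1 with hN
  have hNt : t ≤ N := by
    rw [hN]; push_cast; exact (Nat.lt_floor_add_one t).le
  have hN0 : (0 : ℝ) < N := by rw [hN]; positivity
  have hN1 : (N : ℝ) ≤ 1 + |t| := by
    rw [hN, abs_of_nonneg ht]; push_cast
    linarith [Nat.floor_le ht]
  have heq : t / σ = N * (t / N / σ) := by field_simp
  have hle : t / N / σ ≤ 1 / σ := by
    gcongr
    exact (div_le_one hN0).2 hNt
  have h3 := hT.le_omegaMod m (by positivity) hle f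
  rw [heq]
  refine (hT.norm_sub_one_pow_natMul_le m N _ f).trans ?_
  gcongr

lemma omegaMod_nonneg (m : ℕ) (s : ℝ) (f : E) : 0 ≤ omegaMod T m s f := by
  refine Real.sSup_nonneg ?_
  rintro _ ⟨τ, -, rfl⟩
  exact norm_nonneg _

/-- If `g = Θ f` then the orbit of `f` has derivative `T(t) g` at every time `t`. -/
lemma hasDerivAt_orbit (hT : IsIsometryGroup T) {f g : E} (h : GenDeriv T f g) (t : ℝ) :
    HasDerivAt (fun s => T s f) (T t g) t := by
  rw [hasDerivAt_iff_tendsto_slope_zero]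
  have := ((T t).continuous.tendsto g).comp h
  refine this.congr fun s => ?_
  simp only [Function.comp]
  rw [hT.add_apply, ← map_sub]
  exact (T t).map_smul_of_tower _ _

lemma norm_sub_one_apply_le (hT : IsIsometryGroup T) {f g : E} (h : GenDeriv T f g) {τ : ℝ}
    (hτ : 0 ≤ τ) : ‖(T τ - 1) f‖ ≤ τ * ‖g‖ := by
  have := norm_image_sub_le_of_norm_deriv_le_segment' (f := fun s => T s f) (f' := fun s => T s g)
    (a := 0) (b := τ) (C := ‖g‖) (fun x _ => (hT.hasDerivAt_orbit h x).hasDerivWithinAt)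
    (fun x _ => (hT.norm_apply x g).le) τ ⟨hτ, le_rfl⟩
  have h0 : T 0 f = f := by rw [hT.zero]; rfl
  simp only [h0, sub_zero] at this
  rw [mul_comm]
  exact this

/-- The generator commutes with every bounded operator commuting with the group. -/
lemma genDeriv_map {f g : E} (h : GenDeriv T f g) (B : E →L[ℂ] E) (hB : ∀ t, Commute B (T t)) :
    GenDeriv T (B f) (B g) := by
  have := (B.continuous.tendsto g).comp h
  refine Tendsto.congr (fun s => ?_) this
  simp only [Function.comp]
  have : B (T s f) = T s (B f) := congrArg (fun A : E →L[ℂ] E => A f) (hB s)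
  rw [← this, ← map_sub]
  exact B.map_smul_of_tower _ _

/-- The mean value inequality `‖(T(τ) - I) x‖ ≤ τ ‖Θ x‖`, applied once for each link `d i ↦ Θ (d i)`
of the chain. -/
lemma norm_sub_one_pow_chain (hT : IsIsometryGroup T) (k r : ℕ) (d : ℕ → E)
    (hd : ∀ i < k, GenDeriv T (d i) (d (i + 1))) {τ : ℝ} (hτ : 0 ≤ τ) :
    ‖((T τ - 1) ^ (r + k)) (d 0)‖ ≤ τ ^ k * ‖((T τ - 1) ^ r) (d k)‖ := by
  induction k generalizing r with
  | zero => simp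
  | succ k ih =>
    have h1 := ih (r + 1) fun i hi => hd i (by omega)
    have h2 : GenDeriv T (((T τ - 1) ^ r) (d k)) (((T τ - 1) ^ r) (d (k + 1))) :=
      genDeriv_map (hd k (by omega)) _ fun t =>
        Commute.pow_left ((hT.comm _ _).sub_left (Commute.one_left _)) r
    have h3 := hT.norm_sub_one_apply_le h2 hτ
    rw [show r + (k + 1) = r + 1 + k by ring]
    refine h1.trans ?_
    rw [pow_succ τ k, mul_assoc]
    gcongr
    rw [pow_succ']
    exact h3

/-- `ω^m(s, f) ≤ s^k ω^{m-k}(s, Θ^k f)`. -/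
lemma omegaMod_chain (hT : IsIsometryGroup T) {k m : ℕ} (hk : k ≤ m) (d : ℕ → E)
    (hd : ∀ i < k, GenDeriv T (d i) (d (i + 1))) {s : ℝ} (hs : 0 ≤ s) :
    omegaMod T m s (d 0) ≤ s ^ k * omegaMod T (m - k) s (d k) := by
  refine csSup_le (Set.Nonempty.image _ ⟨0, le_rfl, hs⟩) ?_
  rintro _ ⟨τ, ⟨h0, h1⟩, rfl⟩
  have := hT.norm_sub_one_pow_chain k (m - k) d hd h0
  rw [Nat.sub_add_cancel hk] at this
  refine this.trans ?_
  gcongr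
  exact hT.le_omegaMod _ h0 h1 _

end IsIsometryGroup

end Modulus

/-! ### Averages of orbits against Schwartz kernels -/

section Average

open SchwartzMap FourierTransform

open scoped Convolution

variable {E : Type*} [NormedAddCommGroup E] [NormedSpace ℂ E] {T : ℝ → E →L[ℂ] E}

/-- The average `∫ φ(t) T(t) f dt` of the orbit of `f` against a Schwartz kernel `φ`. -/
def orbitAvg (T : ℝ → E →L[ℂ] E) (φ : 𝓢(ℝ, ℂ)) (f : E) : E := ∫ t, φ t • T t f

namespace IsIsometryGroup

lemma integrable_smul (hT : IsIsometryGroup T) {φ : ℝ → ℂ} (hφ : Integrable φ) (f : E) :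
    Integrable fun t => φ t • T t f := by
  refine Integrable.mono' (hφ.norm.mul_const ‖f‖)
    (hφ.aestronglyMeasurable.smul (hT.cont f).aestronglyMeasurable) ?_
  refine Eventually.of_forall fun t => ?_
  rw [norm_smul, hT.norm_apply]

lemma norm_orbitAvg_le (hT : IsIsometryGroup T) (φ : 𝓢(ℝ, ℂ)) (f : E) :
    ‖orbitAvg T φ f‖ ≤ (∫ t, ‖φ t‖) * ‖f‖ := by
  refine (norm_integral_le_integral_norm _).trans_eq ?_
  rw [← integral_mul_const]
  refine integral_congr_ae (Eventually.of_forall fun t => ?_)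
  simp only [norm_smul, hT.norm_apply]

/-- Averaging against `φ` as a bounded operator. -/
def orbitAvgL (hT : IsIsometryGroup T) (φ : 𝓢(ℝ, ℂ)) : E →L[ℂ] E :=
  LinearMap.mkContinuous
    { toFun := orbitAvg T φ
      map_add' := fun f g => by
        simp only [orbitAvg, map_add, smul_add]
        exact integral_add (hT.integrable_smul φ.integrable f) (hT.integrable_smul φ.integrable g)
      map_smul' := fun a f => by
        simp only [orbitAvg, map_smul, RingHom.id_apply]
        rw [← integral_smul]
        simp only [smul_comm a] }
    (∫ t, ‖φ t‖) (hT.norm_orbitAvg_le φ)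

lemma orbitAvgL_apply (hT : IsIsometryGroup T) (φ : 𝓢(ℝ, ℂ)) (f : E) :
    hT.orbitAvgL φ f = orbitAvg T φ f := rfl

variable [CompleteSpace E]

/-- An average commutes with every bounded operator commuting with the group. -/
lemma map_orbitAvg (hT : IsIsometryGroup T) (φ : 𝓢(ℝ, ℂ)) (B : E →L[ℂ] E)
    (hB : ∀ t, Commute B (T t)) (f : E) : B (orbitAvg T φ f) = orbitAvg T φ (B f) := by
  rw [orbitAvg, ← ContinuousLinearMap.integral_comp_comm _ (hT.integrable_smul φ.integrable f)]
  refine integral_congr_ae (Eventually.of_forall fun t => ?_)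
  simp only [map_smul]
  congr 1
  exact congrArg (fun A : E →L[ℂ] E => A f) (hB t)

lemma commute_orbitAvgL (hT : IsIsometryGroup T) (φ : 𝓢(ℝ, ℂ)) (t : ℝ) :
    Commute (hT.orbitAvgL φ) (T t) := by
  ext f
  exact (hT.map_orbitAvg φ (T t) (fun s => hT.comm t s) f).symm

lemma orbitAvg_comm (hT : IsIsometryGroup T) (φ ψ : 𝓢(ℝ, ℂ)) (f : E) :
    orbitAvg T φ (orbitAvg T ψ f) = orbitAvg T ψ (orbitAvg T φ f) :=
  hT.map_orbitAvg ψ (hT.orbitAvgL φ) (hT.commute_orbitAvgL φ) f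

lemma apply_orbitAvg (hT : IsIsometryGroup T) (φ : 𝓢(ℝ, ℂ)) (f : E) (s : ℝ) :
    T s (orbitAvg T φ f) = ∫ t, φ (t - s) • T t f := by
  rw [orbitAvg, ← ContinuousLinearMap.integral_comp_comm _ (hT.integrable_smul φ.integrable f),
    ← integral_add_right_eq_self (fun t => φ (t - s) • T t f) s]
  refine integral_congr_ae (Eventually.of_forall fun t => ?_)
  simp only [map_smul, add_sub_cancel_right]
  rw [add_comm t s, hT.add_apply]

/-- Averages against Schwartz kernels lie in the domain of the generator, and
`Θ ∫ φ(t) T(t) f dt = -∫ φ'(t) T(t) f dt`. -/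
lemma genDeriv_orbitAvg (hT : IsIsometryGroup T) (φ : 𝓢(ℝ, ℂ)) (f : E) :
    GenDeriv T (orbitAvg T φ f) (orbitAvg T (-derivCLM ℂ ℂ φ) f) := by
  -- Quadratic decay of `φ'` dominates `φ' (t - s)` uniformly in `|s| < 1`.
  set φ' : 𝓢(ℝ, ℂ) := derivCLM ℂ ℂ φ
  obtain ⟨C, hC0, hC⟩ : ∃ C : ℝ, 0 ≤ C ∧ ∀ x : ℝ, (1 + ‖x‖) ^ 2 * ‖φ' x‖ ≤ C := by
    refine ⟨2 ^ 2 * (Finset.Iic ((2 : ℕ), (0 : ℕ))).sup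
      (fun m => SchwartzMap.seminorm ℂ (E := ℝ) (F := ℂ) m.1 m.2) φ', by positivity, fun x => ?_⟩
    simpa using one_add_le_sup_seminorm_apply (𝕜 := ℂ) (m := ((2 : ℕ), (0 : ℕ)))
      (k := 2) (n := 0) le_rfl le_rfl φ' x
  have hder : HasDerivAt (fun s : ℝ => ∫ t, φ (t - s) • T t f)
      (∫ t, (-φ' (t - 0)) • T t f) 0 := by
    refine (hasDerivAt_integral_of_dominated_loc_of_deriv_le (s := Metric.ball (0 : ℝ) 1)
      (F' := fun s t => (-φ' (t - s)) • T t f)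
      (bound := fun t => (4 * C * (1 + t ^ 2)⁻¹) * ‖f‖)
      (Metric.ball_mem_nhds _ one_pos) ?_ ?_ ?_ ?_ ?_ ?_).2
    · refine Eventually.of_forall fun s => Continuous.aestronglyMeasurable ?_
      exact (φ.continuous.comp (by fun_prop)).smul (hT.cont f)
    · simpa using hT.integrable_smul φ.integrable f
    · refine Continuous.aestronglyMeasurable ?_
      exact (φ'.continuous.comp (by fun_prop)).neg.smul (hT.cont f)
    · refine Eventually.of_forall fun t s hs => ?_
      rw [norm_smul, hT.norm_apply, norm_neg]
      gcongr
      have h1 := hC (t - s)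
      rw [Metric.mem_ball, dist_zero_right] at hs
      have h2 : 1 + ‖t‖ ≤ 2 * (1 + ‖t - s‖) := by
        have := norm_le_norm_sub_add t s
        have := norm_nonneg (t - s)
        linarith
      have h3 : 1 + t ^ 2 ≤ 4 * (1 + ‖t - s‖) ^ 2 := by
        have : t ^ 2 = ‖t‖ ^ 2 := by rw [Real.norm_eq_abs, sq_abs]
        have := norm_nonneg t
        nlinarith
      have h4 : (0 : ℝ) < 1 + t ^ 2 := by positivity
      rw [← div_eq_mul_inv, le_div_iff₀ h4]
      calc ‖φ' (t - s)‖ * (1 + t ^ 2) ≤ ‖φ' (t - s)‖ * (4 * (1 + ‖t - s‖) ^ 2) := by gcongr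
        _ = 4 * ((1 + ‖t - s‖) ^ 2 * ‖φ' (t - s)‖) := by ring
        _ ≤ 4 * C := by gcongr
    · exact (integrable_inv_one_add_sq.const_mul _).mul_const _
    · refine Eventually.of_forall fun t s _ => ?_
      have h1 : HasDerivAt (fun s : ℝ => t - s) (-1) s := by
        simpa using (hasDerivAt_id s).const_sub t
      have h2 : HasDerivAt φ (φ' (t - s)) (t - s) := φ.differentiableAt.hasDerivAt
      have h3 := h2.scomp s h1
      have h4 : HasDerivAt (fun s => φ (t - s)) (-φ' (t - s)) s := by
        convert! h3 using 1
        simp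
      exact h4.smul_const _
  rw [hasDerivAt_iff_tendsto_slope_zero] at hder
  have hE : (∫ t, (-φ' (t - 0)) • T t f) = orbitAvg T (-φ') f := by
    simp only [sub_zero, orbitAvg, neg_apply]
  rw [hE] at hder
  refine hder.congr fun s => ?_
  rw [← hT.apply_orbitAvg, ← hT.apply_orbitAvg, zero_add, hT.zero]
  rfl

/-- If `ψ * φ = φ` then averaging against `ψ` reproduces averages against `φ`. -/
lemma orbitAvg_orbitAvg (hT : IsIsometryGroup T) (φ ψ : 𝓢(ℝ, ℂ))
    (hconv : ∀ u, ∫ s, ψ s * φ (u - s) = φ u) (f : E) :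
    orbitAvg T ψ (orbitAvg T φ f) = orbitAvg T φ f := by
  have h1 : orbitAvg T ψ (orbitAvg T φ f) = ∫ s, ∫ u, (ψ s * φ (u - s)) • T u f := by
    rw [orbitAvg]
    refine integral_congr_ae (Eventually.of_forall fun s => ?_)
    simp only
    rw [hT.apply_orbitAvg, ← integral_smul]
    simp only [mul_smul]
  -- Joint integrability, for Fubini: the scalar factor is a convolution integrand and the orbit of
  -- `f` is bounded.
  have hint : Integrable (fun q : ℝ × ℝ => (ψ q.2 * φ (q.1 - q.2)) • T q.1 f) := by
    have h0 : Integrable (fun q : ℝ × ℝ => ψ q.2 * φ (q.1 - q.2)) :=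
      ψ.integrable.convolution_integrand (ContinuousLinearMap.mul ℂ ℂ) φ.integrable
    refine Integrable.mono' (h0.norm.mul_const ‖f‖)
      (h0.aestronglyMeasurable.smul ((hT.cont f).comp continuous_fst).aestronglyMeasurable) ?_
    refine Eventually.of_forall fun q => ?_
    rw [norm_smul, hT.norm_apply]
  have hint' : Integrable (Function.uncurry fun s u : ℝ => (ψ s * φ (u - s)) • T u f)
      (volume.prod volume) := hint.swap
  rw [h1, integral_integral_swap hint', orbitAvg]
  refine integral_congr_ae (Eventually.of_forall fun u => ?_)
  simp only
  rw [integral_smul_const, hconv]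

/-- A vector reproduced by averaging against `ψ` is a Bernstein vector of any type
`σ ≥ ‖ψ'‖₁`. -/
lemma memBernstein_of_reproduced (hT : IsIsometryGroup T) (ψ : 𝓢(ℝ, ℂ)) {σ : ℝ}
    (hσ : ∫ t, ‖derivCLM ℂ ℂ ψ t‖ ≤ σ) {g : E} (hg : orbitAvg T ψ g = g) :
    memBernsteinSingle T σ g := by
  set D : E → E := orbitAvg T (-derivCLM ℂ ℂ ψ) with hD
  -- Averages commute, so every `D^[k] g` is again reproduced by `ψ`.
  have hrep : ∀ k, orbitAvg T ψ (D^[k] g) = D^[k] g := by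
    intro k
    induction k with
    | zero => simpa using hg
    | succ k ih =>
      rw [Function.iterate_succ_apply', hD, hT.orbitAvg_comm, ← hD, ih]
  have hσ0 : 0 ≤ σ := (integral_nonneg fun t => norm_nonneg _).trans hσ
  refine ⟨fun k => D^[k] g, rfl, fun i => ?_, fun k => ?_⟩
  · have := hT.genDeriv_orbitAvg ψ (D^[i] g)
    rw [hrep] at this
    simpa only [Function.iterate_succ_apply'] using this
  · induction k with
    | zero => simp
    | succ k ih =>
      simp only [Function.iterate_succ_apply'] at ih ⊢
      refine (hT.norm_orbitAvg_le _ _).trans ?_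
      rw [pow_succ', mul_assoc]
      have : (∫ t, ‖(-derivCLM ℂ ℂ ψ) t‖) ≤ σ := by simpa [neg_apply] using hσ
      gcongr

end IsIsometryGroup

end Average

/-! ### Band-limited kernels -/

section Kernel

open SchwartzMap FourierTransform

open scoped Convolution

/-- A compactly supported smooth bump function on `ℝ` as a complex Schwartz function,
precomposed with multiplication by `a`. -/
lemma exists_schwartz_bump (b : ContDiffBump (0 : ℝ)) {a : ℝ} (ha : a ≠ 0) :
    ∃ χ : 𝓢(ℝ, ℂ), ∀ x, χ x = (b (a * x) : ℂ) := by
  have h0 : HasCompactSupport (fun x : ℝ => b (a * x)) :=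
    b.hasCompactSupport.comp_homeomorph (Homeomorph.mulLeft₀ a ha)
  have h1 : HasCompactSupport (fun x : ℝ => (b (a * x) : ℂ)) :=
    h0.comp_left (g := fun y : ℝ => (y : ℂ)) (by simp)
  have h2 : ContDiff ℝ ((⊤ : ℕ∞) : WithTop ℕ∞) (fun x : ℝ => (b (a * x) : ℂ)) :=
    Complex.ofRealCLM.contDiff.comp (b.contDiff.comp (contDiff_const.mul contDiff_id))
  exact ⟨h1.toSchwartzMap h2, fun x => rfl⟩

/-- There are Schwartz functions `h, ψ` with `∫ h = 1` such that convolution with `ψ` reproduces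
every dilate `k⁻¹ h(·/k)`, `k ≥ 1`: take `h` band-limited to `[-1, 1]` and `ψ̂ = 1` there. -/
lemma exists_kernels : ∃ h ψ : 𝓢(ℝ, ℂ), ∫ t, h t = 1 ∧ ∀ k : ℕ, k ≠ 0 → ∃ φ : 𝓢(ℝ, ℂ),
    (∀ u, φ u = (k : ℂ)⁻¹ * h (u / k)) ∧ ∀ u, ∫ s, ψ s * φ (u - s) = φ u := by
  let b : ContDiffBump (0 : ℝ) := ⟨1 / 2, 1, by norm_num, by norm_num⟩
  let e : ContDiffBump (0 : ℝ) := ⟨1, 2, by norm_num, by norm_num⟩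
  obtain ⟨χ, hχ⟩ := exists_schwartz_bump b one_ne_zero
  obtain ⟨η, hη⟩ := exists_schwartz_bump e one_ne_zero
  simp only [one_mul] at hχ hη
  refine ⟨𝓕⁻ χ, 𝓕⁻ η, ?_, fun k hk => ?_⟩
  · have h1 : 𝓕 (𝓕⁻ χ) 0 = χ 0 := by rw [FourierTransform.fourier_fourierInv_eq]
    rw [hχ, fourier_coe, Real.fourier_eq] at h1
    have h2 : b 0 = 1 := b.one_of_mem_closedBall (by simp [b])
    simpa [h2] using h1
  · have hk' : (k : ℝ) ≠ 0 := Nat.cast_ne_zero.2 hk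
    have hk1 : (1 : ℝ) ≤ k := by exact_mod_cast Nat.one_le_iff_ne_zero.2 hk
    obtain ⟨χk, hχk⟩ := exists_schwartz_bump b hk'
    refine ⟨𝓕⁻ χk, fun u => ?_, fun u => ?_⟩
    · rw [fourierInv_coe, fourierInv_coe, Real.fourierInv_eq, Real.fourierInv_eq]
      have := Measure.integral_comp_mul_left
        (fun v : ℝ => Real.fourierChar (inner ℝ v (u / k)) • χ v) (k : ℝ)
      rw [abs_of_pos (by positivity)] at this
      rw [show ((k : ℂ))⁻¹ = (((k : ℝ)⁻¹ : ℝ) : ℂ) by push_cast; rfl, ← Complex.real_smul, ← this]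
      refine integral_congr_ae (Eventually.of_forall fun v => ?_)
      simp only [hχk, hχ]
      congr 2
      simp
      field_simp
    · have hconv : SchwartzMap.convolution (ContinuousLinearMap.mul ℂ ℂ) (𝓕⁻ η) (𝓕⁻ χk)
          = 𝓕⁻ χk := by
        have : 𝓕 (SchwartzMap.convolution (ContinuousLinearMap.mul ℂ ℂ) (𝓕⁻ η) (𝓕⁻ χk))
            = χk := by
          rw [SchwartzMap.fourier_convolution]
          ext ξ
          rw [pairing_apply_apply, FourierTransform.fourier_fourierInv_eq,
            FourierTransform.fourier_fourierInv_eq, ContinuousLinearMap.mul_apply', hη, hχk]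
          -- Either `η ξ = 1`, or `|ξ| > 1` and `b (k ξ) = 0` because `k ≥ 1`.
          by_cases hξ : |ξ| ≤ 1
          · rw [e.one_of_mem_closedBall (by simpa [e] using hξ)]
            simp
          · rw [b.zero_of_le_dist]
            · simp
            · simp only [dist_zero_right, Real.norm_eq_abs, abs_mul, Nat.abs_cast, b]
              nlinarith
        exact (FourierTransform.fourierInv_fourier_eq _).symm.trans (congrArg _ this)
      have h2 := SchwartzMap.convolution_apply (ContinuousLinearMap.mul ℂ ℂ) (𝓕⁻ η) (𝓕⁻ χk) u
      rw [hconv] at h2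
      exact h2.symm

end Kernel

/-! ### Jackson's inequality -/

section Jackson

open SchwartzMap

variable {E : Type*} [NormedAddCommGroup E] [NormedSpace ℂ E] {T : ℝ → E →L[ℂ] E}

lemma GenDeriv.real_smul {f g : E} (h : GenDeriv T f g) (r : ℝ) :
    GenDeriv T (r • f) (r • g) := by
  refine (h.const_smul r).congr fun t => ?_
  rw [(T t).map_smul_of_tower, ← smul_sub, smul_comm]

/-- The generator of `t ↦ T(at)` is `a` times the generator of `T`. -/
lemma GenDeriv.of_scale {a : ℝ} (ha : a ≠ 0) {f g : E}
    (h : GenDeriv (fun t => T (a * t)) f g) : GenDeriv T f (a⁻¹ • g) := by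
  have h1 : Tendsto (fun s : ℝ => a⁻¹ * s) (𝓝[≠] 0) (𝓝[≠] 0) := by
    refine tendsto_nhdsWithin_iff.2 ⟨?_, ?_⟩
    · have : Tendsto (fun s : ℝ => a⁻¹ * s) (𝓝 0) (𝓝 (a⁻¹ * 0)) :=
        (continuous_const.mul continuous_id).tendsto 0
      rw [mul_zero] at this
      exact this.mono_left nhdsWithin_le_nhds
    · filter_upwards [self_mem_nhdsWithin] with s hs
      exact mul_ne_zero (inv_ne_zero ha) hs
  refine ((h.comp h1).const_smul a⁻¹).congr fun s => ?_
  simp only [Function.comp]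
  rw [mul_inv_cancel_left₀ ha, smul_smul, mul_inv, inv_inv, inv_mul_cancel_left₀ ha]

lemma memBernsteinSingle.of_scale {a σ : ℝ} (ha : 0 < a) {g : E}
    (h : memBernsteinSingle (fun t => T (a * t)) (a * σ) g) : memBernsteinSingle T σ g := by
  obtain ⟨c, h0, h1, h2⟩ := h
  refine ⟨fun k => (a⁻¹) ^ k • c k, by simpa using h0, fun i => ?_, fun k => ?_⟩
  · have := ((h1 i).of_scale ha.ne').real_smul ((a⁻¹) ^ i)
    rwa [smul_smul, ← pow_succ] at this
  · rw [norm_smul, norm_pow, Real.norm_of_nonneg (inv_pos.2 ha).le]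
    refine (mul_le_mul_of_nonneg_left (h2 k) (by positivity)).trans_eq ?_
    rw [← mul_assoc, ← mul_pow, inv_mul_cancel_left₀ ha.ne']

lemma bestApproxSingle_le {σ : ℝ} {f g : E} (hg : memBernsteinSingle T σ g) :
    bestApproxSingle T σ f ≤ ‖f - g‖ :=
  csInf_le ⟨0, by rintro _ ⟨x, -, rfl⟩; exact norm_nonneg _⟩ ⟨g, hg, rfl⟩

variable [CompleteSpace E]

/-- Jackson's inequality for an arbitrary strongly continuous group of isometries. The approximant
is `g = f - ∫ h(t) (I - S(t))^m f dt`, a linear combination of the band-limited averages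
`∫ h(t) S(kt) f dt`, `1 ≤ k ≤ m`, where `S(t) = T(Mt/σ)`. -/
theorem IsIsometryGroup.jackson (hT : IsIsometryGroup T) (m : ℕ) :
    ∃ c : ℝ, 0 < c ∧ ∀ σ : ℝ, 0 < σ → ∀ f : E,
      bestApproxSingle T σ f ≤ c * omegaMod T m (1 / σ) f := by
  obtain ⟨h, ψ, hint, hψ⟩ := exists_kernels
  -- Adding `1` keeps `M` positive.
  set M : ℝ := (∫ t, ‖derivCLM ℂ ℂ ψ t‖) + 1 with hM
  have hM0 : 0 < M := by
    have : 0 ≤ ∫ t, ‖derivCLM ℂ ℂ ψ t‖ := integral_nonneg fun t => norm_nonneg _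
    linarith
  have hwt : Integrable fun t : ℝ => ‖h t‖ * (1 + |M * t|) ^ m := by
    have h1 : Integrable fun t : ℝ =>
        2 ^ (m - 1) * (‖h t‖ + M ^ m * (‖t‖ ^ m * ‖h t‖)) :=
      ((h.integrable.norm).add ((h.integrable_pow_mul volume m).const_mul _)).const_mul _
    refine h1.mono' ?_ (Eventually.of_forall fun t => ?_)
    · exact Continuous.aestronglyMeasurable (by fun_prop)
    · rw [Real.norm_of_nonneg (by positivity)]
      have := add_pow_le (zero_le_one (α := ℝ)) (abs_nonneg (M * t)) m
      rw [one_pow, abs_mul, mul_pow, abs_of_pos hM0] at this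
      rw [abs_mul, abs_of_pos hM0]
      refine (mul_le_mul_of_nonneg_left this (norm_nonneg _)).trans_eq ?_
      rw [Real.norm_eq_abs t]
      ring
  refine ⟨(∫ t, ‖h t‖ * (1 + |M * t|) ^ m) + 1, ?_, fun σ hσ f => ?_⟩
  · have : 0 ≤ ∫ t, ‖h t‖ * (1 + |M * t|) ^ m := integral_nonneg fun t => by positivity
    linarith
  set a : ℝ := M / σ with ha
  have ha0 : 0 < a := by positivity
  set S : ℝ → E →L[ℂ] E := fun t => T (a * t) with hSdef
  have hS : IsIsometryGroup S := hT.scale a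
  -- The band-limited pieces; `orb 0 = f` since `∫ h = 1`.
  let orb : ℕ → E := fun k => ∫ t, h t • S (k * t) f
  have horb0 : orb 0 = f := by
    simp only [orb, Nat.cast_zero, zero_mul, hS.zero, one_apply_eq_self]
    rw [integral_smul_const, hint, one_smul]
  have horb : ∀ k : ℕ, k ≠ 0 → orbitAvg S ψ (orb k) = orb k := by
    intro k hk
    obtain ⟨φ, hφ, hφψ⟩ := hψ k hk
    have hk0 : (k : ℝ) ≠ 0 := Nat.cast_ne_zero.2 hk
    have hk1 : (k : ℂ) ≠ 0 := Nat.cast_ne_zero.2 hk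
    -- Substituting `u = kt` turns `h` into its dilate `φ`.
    have : orb k = orbitAvg S φ f := by
      have h1 := Measure.integral_comp_mul_left (fun u : ℝ => φ u • S u f) (k : ℝ)
      have h2 : ∀ t : ℝ, φ (k * t) • S (k * t) f = (k : ℂ)⁻¹ • (h t • S (k * t) f) := by
        intro t
        rw [hφ, mul_div_cancel_left₀ _ hk0, mul_smul]
      simp only [h2] at h1
      rw [integral_smul, abs_of_pos (by positivity)] at h1
      have h3 : ((k : ℝ)⁻¹) • (∫ u, φ u • S u f) = (k : ℂ)⁻¹ • ∫ u, φ u • S u f := by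
        rw [← Complex.coe_smul]; push_cast; rfl
      rw [h3] at h1
      exact smul_right_injective E (inv_ne_zero hk1) h1
    rw [this]
    exact hS.orbitAvg_orbitAvg φ ψ hφψ f
  have hexp : ∀ t, ((1 - S t) ^ m) f =
      ∑ k ∈ Finset.range (m + 1), ((-1 : ℂ) ^ k * (m.choose k : ℂ)) • S (k * t) f := by
    intro t
    have h1 : (1 - S t) ^ m = ∑ k ∈ Finset.range (m + 1),
        ((-1 : ℂ) ^ k * (m.choose k : ℂ)) • S (k * t) := by
      rw [sub_eq_neg_add, (Commute.one_right (-S t)).add_pow]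
      refine Finset.sum_congr rfl fun k _ => ?_
      rw [hS.natMul, one_pow, mul_one]
      have hcast : ((m.choose k : ℕ) : E →L[ℂ] E) = (m.choose k : ℂ) • (1 : E →L[ℂ] E) := by
        rw [Nat.cast_smul_eq_nsmul, nsmul_one]
      rw [hcast, mul_smul_comm, mul_one]
      rcases Nat.even_or_odd k with hk | hk
      · rw [hk.neg_pow, hk.neg_one_pow, one_mul]
      · rw [hk.neg_pow, hk.neg_one_pow, neg_one_mul, smul_neg, neg_smul]
    rw [h1, sum_apply]
    rfl
  have hintk : ∀ k : ℕ, Integrable fun t => h t • S (k * t) f := fun k =>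
    (hS.scale k).integrable_smul h.integrable f
  have hI : ∫ t, h t • ((1 - S t) ^ m) f =
      ∑ k ∈ Finset.range (m + 1), ((-1 : ℂ) ^ k * (m.choose k : ℂ)) • orb k := by
    simp only [hexp, Finset.smul_sum]
    rw [integral_finsetSum]
    · refine Finset.sum_congr rfl fun k _ => ?_
      rw [← integral_smul]
      simp only [smul_comm (h _)]
    · intro k _
      simp only [smul_comm (h _)]
      exact (hintk k).smul _
  set g : E := f - ∫ t, h t • ((1 - S t) ^ m) f with hg
  have hgsum : g = -∑ k ∈ Finset.range m,
      ((-1 : ℂ) ^ (k + 1) * (m.choose (k + 1) : ℂ)) • orb (k + 1) := by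
    rw [hg, hI, Finset.sum_range_succ', horb0]
    simp
  have hgrep : orbitAvg S ψ g = g := by
    rw [← hS.orbitAvgL_apply, hgsum, map_neg, map_sum]
    congr 1
    refine Finset.sum_congr rfl fun k _ => ?_
    rw [map_smul, hS.orbitAvgL_apply, horb _ (Nat.succ_ne_zero k)]
  have hgB : memBernsteinSingle T σ g := by
    refine memBernsteinSingle.of_scale ha0 (hS.memBernstein_of_reproduced ψ ?_ hgrep)
    rw [ha, div_mul_cancel₀ _ hσ.ne']
    linarith
  refine (bestApproxSingle_le hgB).trans ?_
  rw [hg, _root_.sub_sub_cancel]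
  have hω : 0 ≤ omegaMod T m (1 / σ) f := IsIsometryGroup.omegaMod_nonneg _ _ _
  have hpt : ∀ t, ‖h t • ((1 - S t) ^ m) f‖ ≤
      (‖h t‖ * (1 + |M * t|) ^ m) * omegaMod T m (1 / σ) f := by
    intro t
    rw [norm_smul, mul_assoc]
    gcongr
    have h1 : ‖((1 - S t) ^ m) f‖ = ‖((S t - 1) ^ m) f‖ := by
      rw [← neg_sub (S t) 1]
      rcases Nat.even_or_odd m with hm | hm
      · rw [hm.neg_pow]
      · rw [hm.neg_pow, neg_apply, norm_neg]
    have h2 : S t = T (M * t / σ) := by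
      simp only [hSdef, ha]; congr 1; ring
    rw [h1, h2]
    exact hT.norm_sub_one_pow_le_omegaMod m hσ _ f
  refine (norm_integral_le_of_norm_le (hwt.mul_const _) (Eventually.of_forall hpt)).trans ?_
  rw [integral_mul_const]
  gcongr
  linarith

end Jackson

/-- **Jackson-type inequalities** for approximation by the Bernstein–Mellin spaces
`B^p_σ(Θ_j)`: `E_{j,p}(σ,f) ≤ c ω^m_{j,p}(1/σ,f)` for all `f ∈ X^p`, and for
`0 ≤ k ≤ m` and `f ∈ D(Θ_j^k)` (chain `d`, `d 0 = f`, `d k = Θ_j^k f`),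
`E_{j,p}(σ,f) ≤ (C/σ^k) ω^{m-k}_{j,p}(1/σ, Θ_j^k f)`. -/
theorem jackson_single_mellin {n : ℕ} (p : ℝ≥0∞) [Fact (1 ≤ p)] (hp : p ≠ ∞)
    (U : Fin n → ℝ → (Lp ℂ p (mellinMeasure n) →L[ℂ] Lp ℂ p (mellinMeasure n)))
    (hU : IsMellinTranslation p U)
    (j : Fin n) (m : ℕ) :
    (∃ c : ℝ, 0 < c ∧ ∀ σ : ℝ, 0 < σ → ∀ f : Lp ℂ p (mellinMeasure n),
      bestApproxSingle (U j) σ f ≤ c * omegaMod (U j) m (1 / σ) f) ∧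
    (∀ k : ℕ, k ≤ m → ∃ C : ℝ, 0 < C ∧ ∀ σ : ℝ, 0 < σ →
      ∀ d : ℕ → Lp ℂ p (mellinMeasure n), (∀ i < k, GenDeriv (U j) (d i) (d (i + 1))) →
        bestApproxSingle (U j) σ (d 0) ≤ C / σ ^ k * omegaMod (U j) (m - k) (1 / σ) (d k)) := by
  have hT := isIsometryGroup_mellin p hp U hU j
  obtain ⟨c, hc, hJ⟩ := hT.jackson m
  refine ⟨⟨c, hc, hJ⟩, fun k hk => ⟨c, hc, fun σ hσ d hd => (hJ σ hσ (d 0)).trans ?_⟩⟩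
  have h1 := hT.omegaMod_chain hk d hd (s := 1 / σ) (by positivity)
  refine (mul_le_mul_of_nonneg_left h1 hc.le).trans_eq ?_
  rw [one_div, inv_pow]
  ring
end
end
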